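/- arXiv:1503.05872 — 2 statements merged into one kernel-verified Lean document; each statement's English description precedes it below -/
import Mathlib

section
/- Heavy-traffic limit of the scaled total queue length under MaxWeight (Theorem 5.2, limit version). Fix n ≥ 1 and ν ∈ F with ν_min := min_{ij} ν_{ij} > 0. For each ε ∈ (0, ν_min/(2‖ν‖)], consider a switch with arrival means λ^{(ε)}_{ij} = (1−ε)ν_{ij}, variances (σ^{(ε)}_{ij})², arrivals bounded by a common a_max ≥ 1, operated under MaxWeight, and let π^{(ε)} be an invariant distribution of the corresponding Markov chain. If (σ^{(ε)})² → σ² componentwise as ε → 0, then lim_{ε↓0} ε · E_{π^{(ε)}}[∑_{ij} q̄^{(ε)}_{ij}] = (1 − 1/(2n))·‖σ‖², where ‖σ‖² = ∑_{ij} σ_{ij}². -/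
open scoped BigOperators ENNReal

namespace SwitchModel

/-- Next queue state: `q⁺_{ij} = max(q_{ij} + a_{ij} − s_{ij}, 0)` (truncated `ℕ` subtraction). -/
def nextQ (n : ℕ) (q a s : Fin n → Fin n → ℕ) : Fin n → Fin n → ℕ :=
  fun i j => q i j + a i j - s i j

/-- A 0–1 matrix with at most one 1 per row and per column. -/
def IsSchedule (n : ℕ) (s : Fin n → Fin n → ℕ) : Prop :=
  (∀ i j, s i j ≤ 1) ∧ (∀ i, (∑ j, s i j) ≤ 1) ∧ (∀ j, (∑ i, s i j) ≤ 1)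

/-- A permutation matrix: exactly one 1 per row and per column. -/
def IsPerm (n : ℕ) (s : Fin n → Fin n → ℕ) : Prop :=
  (∀ i j, s i j ≤ 1) ∧ (∀ i, (∑ j, s i j) = 1) ∧ (∀ j, (∑ i, s i j) = 1)

/-- MaxWeight selection: `sched q` is a permutation matrix maximizing `∑ q_{ij} s_{ij}`. -/
def IsMaxWeight (n : ℕ) (sched : (Fin n → Fin n → ℕ) → (Fin n → Fin n → ℕ)) : Prop :=
  ∀ q, IsPerm n (sched q) ∧
    ∀ s, IsPerm n s → (∑ i, ∑ j, q i j * s i j) ≤ (∑ i, ∑ j, q i j * sched q i j)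

/-- Joint arrival probability: the entries are mutually independent with marginals `A i j`. -/
noncomputable def jointA (n : ℕ) (A : Fin n → Fin n → ℕ → ℝ≥0∞) (a : Fin n → Fin n → ℕ) : ℝ≥0∞ :=
  ∏ i, ∏ j, A i j (a i j)

/-- `A i j` is a probability distribution on `ℕ` supported on `[0, amax]`,
with mean `lam i j` and variance `(sig i j)^2`. -/
def ArrivalDist (n : ℕ) (A : Fin n → Fin n → ℕ → ℝ≥0∞)
    (lam sig : Fin n → Fin n → ℝ) (amax : ℕ) : Prop :=
  (∀ i j, (∑' k : ℕ, A i j k) = 1) ∧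
  (∀ i j k, A i j k ≠ 0 → k ≤ amax) ∧
  (∀ i j, (∑' k : ℕ, (A i j k).toReal * (k : ℝ)) = lam i j) ∧
  (∀ i j, (∑' k : ℕ, (A i j k).toReal * ((k : ℝ) - lam i j) ^ 2) = (sig i j) ^ 2)

/-- Transition kernel of the switch under a deterministic scheduling map `sched`. -/
noncomputable def kernelMW (n : ℕ) (A : Fin n → Fin n → ℕ → ℝ≥0∞)
    (sched : (Fin n → Fin n → ℕ) → (Fin n → Fin n → ℕ))
    (q q' : Fin n → Fin n → ℕ) : ℝ≥0∞ :=
  ∑' a : Fin n → Fin n → ℕ, jointA n A a * (if nextQ n q a (sched q) = q' then 1 else 0)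

/-- Transition kernel of the switch under a randomized scheduling policy `pol`
(the schedule is chosen independently of the current arrivals). -/
noncomputable def kernelPol (n : ℕ) (A : Fin n → Fin n → ℕ → ℝ≥0∞)
    (pol : (Fin n → Fin n → ℕ) → (Fin n → Fin n → ℕ) → ℝ≥0∞)
    (q q' : Fin n → Fin n → ℕ) : ℝ≥0∞ :=
  ∑' a : Fin n → Fin n → ℕ, ∑' s : Fin n → Fin n → ℕ,
    jointA n A a * pol q s * (if nextQ n q a s = q' then 1 else 0)

/-- `pd` is an invariant (stationary) probability distribution of the kernel `P`. -/
def IsInvariant (n : ℕ)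
    (P : (Fin n → Fin n → ℕ) → (Fin n → Fin n → ℕ) → ℝ≥0∞)
    (pd : (Fin n → Fin n → ℕ) → ℝ≥0∞) : Prop :=
  (∑' q : Fin n → Fin n → ℕ, pd q) = 1 ∧
  ∀ q', (∑' q : Fin n → Fin n → ℕ, pd q * P q q') = pd q'

/-- The face `F`: nonnegative matrices with all row and column sums equal to 1. -/
def memF (n : ℕ) (ν : Fin n → Fin n → ℝ) : Prop :=
  (∀ i j, 0 ≤ ν i j) ∧ (∀ i, (∑ j, ν i j) = 1) ∧ (∀ j, (∑ i, ν i j) = 1)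

/-- Steady-state expectation of the total queue length `∑_{ij} q_{ij}`. -/
noncomputable def Etot (n : ℕ) (pd : (Fin n → Fin n → ℕ) → ℝ≥0∞) : ℝ≥0∞ :=
  ∑' q : Fin n → Fin n → ℕ, pd q * (∑ i, ∑ j, (q i j : ℝ≥0∞))

/-- Steady-state expectation of `(∑_{ij} q_{ij})²`. -/
noncomputable def Etot2 (n : ℕ) (pd : (Fin n → Fin n → ℕ) → ℝ≥0∞) : ℝ≥0∞ :=
  ∑' q : Fin n → Fin n → ℕ, pd q * (∑ i, ∑ j, (q i j : ℝ≥0∞)) ^ 2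

/-- Euclidean norm on `ℝ^{n×n}`. -/
noncomputable def normE (n : ℕ) (x : Fin n → Fin n → ℝ) : ℝ :=
  Real.sqrt (∑ i, ∑ j, x i j ^ 2)

/-- The cone `K = {x : x_{ij} = w_i + w̃_j, w, w̃ ≥ 0}`. -/
def coneK (n : ℕ) : Set (Fin n → Fin n → ℝ) :=
  {x | ∃ w wt : Fin n → ℝ, (∀ i, 0 ≤ w i) ∧ (∀ j, 0 ≤ wt j) ∧ ∀ i j, x i j = w i + wt j}

/-- Embedding of queue states into `ℝ^{n×n}`. -/
def toR (n : ℕ) (q : Fin n → Fin n → ℕ) : Fin n → Fin n → ℝ :=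
  fun i j => (q i j : ℝ)

/-- `proj` is the nearest-point projection onto the cone `K`. -/
def IsConeProj (n : ℕ) (proj : (Fin n → Fin n → ℝ) → (Fin n → Fin n → ℝ)) : Prop :=
  ∀ x, proj x ∈ coneK n ∧ ∀ y ∈ coneK n, normE n (x - proj x) ≤ normE n (x - y)

/-- Bernoulli distribution on `ℕ` with success probability `p`. -/
noncomputable def bern (p : ℝ) : ℕ → ℝ≥0∞ :=
  fun k => if k = 0 then ENNReal.ofReal (1 - p) else if k = 1 then ENNReal.ofReal p else 0

end SwitchModel

open SwitchModel Filter

/-!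
Let `K` be the cone of matrices `w_i + w̃_j` with `w, w̃ ≥ 0` and `L` its span. MaxWeight pushes the
residual of the queue vector `Q` off `K` back at a rate bounded below uniformly in `ε`, so the drift
of its fourth power bounds its second moment uniformly in `ε` (state space collapse).

Stationarity of `‖Pr_L Q‖²` then gives an exact balance. On `L` the drift is `-ε v`, where `v` is
the unit vector with all entries `1 / n`, so the drift contributes `2 ε E⟨v, Q⟩`; the centred
arrivals `W` contribute `E⟨W, Pr_L W⟩ = (2 / n - 1 / n²) ∑ σ²`; and the unused service `U` satisfies
`⟨Q⁺, U⟩ = 0` and `E‖U‖² = n ε`, so its terms only see the residual of `Q` and are `O(√ε)`.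
-/

namespace SwitchModel

open MeasureTheory ProbabilityTheory
open scoped RealInnerProductSpace

/-- The bound that the fourth-power test function gives for the second moment of a nonnegative
function with increments of size `B` and negative drift `δ`. -/
noncomputable def collapseConst (B δ : ℝ) : ℝ :=
  (10 * B ^ 2 + 1) ^ 3 / (16 * δ ^ 2) + 2 * B ^ 4

lemma collapseConst_nonneg (B δ : ℝ) : 0 ≤ collapseConst B δ := by
  unfold collapseConst
  positivity

lemma mul_sq_le_mul_cube_add {k δ v : ℝ} (hk : 0 ≤ k) (hδ : 0 < δ) (hv : 0 ≤ v) :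
    k * v ^ 2 ≤ 4 * δ * v ^ 3 + k ^ 3 / (16 * δ ^ 2) := by
  rcases le_total v (k / (4 * δ)) with h | h
  · calc k * v ^ 2 ≤ k * (k / (4 * δ)) ^ 2 := by gcongr
      _ = k ^ 3 / (16 * δ ^ 2) := by ring
      _ ≤ 4 * δ * v ^ 3 + k ^ 3 / (16 * δ ^ 2) := le_add_of_nonneg_left (by positivity)
  · rw [div_le_iff₀ (by positivity)] at h
    calc k * v ^ 2 ≤ v * (4 * δ) * v ^ 2 := by gcongr
      _ = 4 * δ * v ^ 3 := by ring
      _ ≤ 4 * δ * v ^ 3 + k ^ 3 / (16 * δ ^ 2) := le_add_of_nonneg_right (by positivity)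

lemma pow_four_le_of_sq_le {v v' t B : ℝ} (hstep : v' ^ 2 ≤ v ^ 2 + 2 * t + B ^ 2)
    (ht : |t| ≤ B * v) :
    v' ^ 4 ≤ v ^ 4 + 10 * B ^ 2 * v ^ 2 + 2 * B ^ 4 + 4 * v ^ 2 * t := by
  have ht2 : t ^ 2 ≤ (B * v) ^ 2 := sq_le_sq' (neg_le_of_abs_le ht) (le_of_abs_le ht)
  have hsq : (v' ^ 2) ^ 2 ≤ (v ^ 2 + 2 * t + B ^ 2) ^ 2 := pow_le_pow_left₀ (sq_nonneg _) hstep 2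
  nlinarith [sq_nonneg (2 * t - B ^ 2)]

section Lyapunov

variable {X Ω : Type*} [MeasurableSpace Ω] {P : Measure Ω} [IsProbabilityMeasure P]
  {T : X × Ω → X}

lemma lintegral_min_add_indicator_le {V f : X → ℝ≥0∞} {b : ℝ≥0∞} {x : X}
    (hdrift : ∫⁻ ω, V (T (x, ω)) ∂P + f x ≤ V x + b) (M : ℝ≥0∞) :
    ∫⁻ ω, min (V (T (x, ω))) M ∂P + {y | V y ≤ M}.indicator f x ≤ min (V x) M + b := by
  by_cases hx : V x ≤ M
  · rw [Set.indicator_of_mem (by exact hx), min_eq_left hx]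
    exact le_trans (by gcongr; exact min_le_left _ _) hdrift
  · rw [Set.indicator_of_notMem (by exact hx), add_zero, min_eq_right (le_of_not_ge hx)]
    calc ∫⁻ ω, min (V (T (x, ω))) M ∂P ≤ ∫⁻ _, M ∂P := by gcongr; exact min_le_right _ _
      _ = M := by simp
      _ ≤ M + b := le_self_add

variable {V : X → ℝ} {t : X → Ω → ℝ} {B δ : ℝ}

lemma lintegral_pow_four_add_sq_le (hδ : 0 < δ) {x : X} (hV : 0 ≤ V x)
    (ht_meas : AEStronglyMeasurable (t x) P)
    (hstep : ∀ᵐ ω ∂P, V (T (x, ω)) ^ 2 ≤ V x ^ 2 + 2 * t x ω + B ^ 2)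
    (ht : ∀ᵐ ω ∂P, |t x ω| ≤ B * V x) (hdrift : ∫ ω, t x ω ∂P ≤ -δ * V x) :
    ∫⁻ ω, ENNReal.ofReal (V (T (x, ω)) ^ 4) ∂P + ENNReal.ofReal (V x ^ 2) ≤
      ENNReal.ofReal (V x ^ 4) + ENNReal.ofReal (collapseConst B δ) := by
  let g : Ω → ℝ := fun ω =>
    V x ^ 4 + 10 * B ^ 2 * V x ^ 2 + 2 * B ^ 4 + 4 * V x ^ 2 * t x ω
  have ht_int : Integrable (t x) P := .of_bound ht_meas _ ht
  have hg : ∀ᵐ ω ∂P, V (T (x, ω)) ^ 4 ≤ g ω := by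
    filter_upwards [hstep, ht] with ω h₁ h₂ using pow_four_le_of_sq_le h₁ h₂
  have hg_int : Integrable g P := (integrable_const _).add (ht_int.const_mul _)
  have hg_mean : ∫ ω, g ω ∂P + V x ^ 2 ≤ V x ^ 4 + collapseConst B δ := by
    have hmean : ∫ ω, g ω ∂P =
        V x ^ 4 + 10 * B ^ 2 * V x ^ 2 + 2 * B ^ 4 + 4 * V x ^ 2 * ∫ ω, t x ω ∂P := by
      rw [integral_add (integrable_const _) (ht_int.const_mul _), integral_const_mul]
      simp
    have hcube := mul_sq_le_mul_cube_add (k := 10 * B ^ 2 + 1) (by positivity) hδ hV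
    have hmul := mul_le_mul_of_nonneg_left hdrift (by positivity : 0 ≤ 4 * V x ^ 2)
    rw [hmean, collapseConst]
    linarith
  calc ∫⁻ ω, ENNReal.ofReal (V (T (x, ω)) ^ 4) ∂P + ENNReal.ofReal (V x ^ 2)
      ≤ ∫⁻ ω, ENNReal.ofReal (g ω) ∂P + ENNReal.ofReal (V x ^ 2) := by
        gcongr ?_ + _
        exact lintegral_mono_ae (hg.mono fun _ h => ENNReal.ofReal_le_ofReal h)
    _ = ENNReal.ofReal (∫ ω, g ω ∂P + V x ^ 2) := by
        have hg_nonneg : 0 ≤ᵐ[P] g := hg.mono fun ω h => le_trans (by positivity) h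
        rw [ENNReal.ofReal_add (integral_nonneg_of_ae hg_nonneg) (sq_nonneg _),
          ofReal_integral_eq_lintegral_ofReal hg_int hg_nonneg]
    _ ≤ ENNReal.ofReal (V x ^ 4) + ENNReal.ofReal (collapseConst B δ) := by
        rw [← ENNReal.ofReal_add (by positivity) (collapseConst_nonneg B δ)]
        exact ENNReal.ofReal_le_ofReal hg_mean

variable [MeasurableSpace X] {μ : Measure X}

lemma lintegral_lintegral_comp_eq (hT : MeasurePreserving T (μ.prod P) μ) {V : X → ℝ≥0∞}
    (hV : Measurable V) : ∫⁻ x, ∫⁻ ω, V (T (x, ω)) ∂P ∂μ = ∫⁻ x, V x ∂μ := by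
  rw [← hT.lintegral_comp hV]
  exact (lintegral_prod _ (hV.comp hT.measurable).aemeasurable).symm

variable [IsProbabilityMeasure μ]

-- The truncations have finite mean, so stationarity lets them cancel even if `∫⁻ V = ∞`.
theorem lintegral_le_of_stationary_of_drift (hT : MeasurePreserving T (μ.prod P) μ)
    {V f : X → ℝ≥0∞} (hV : Measurable V) (hV_top : ∀ x, V x ≠ ∞) (hf : Measurable f) {b : ℝ≥0∞}
    (hdrift : ∀ x, ∫⁻ ω, V (T (x, ω)) ∂P + f x ≤ V x + b) : ∫⁻ x, f x ∂μ ≤ b := by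
  have hlevel (M : ℕ) : MeasurableSet {x | V x ≤ M} := hV measurableSet_Iic
  have htrunc (M : ℕ) : ∫⁻ x in {x | V x ≤ M}, f x ∂μ ≤ b := by
    have hVM : Measurable fun x => min (V x) (M : ℝ≥0∞) := hV.min measurable_const
    have hfin : ∫⁻ x, min (V x) (M : ℝ≥0∞) ∂μ ≠ ∞ := by
      refine ((lintegral_mono fun x => min_le_right _ _).trans_lt ?_).ne
      simp
    refine (ENNReal.add_le_add_iff_left hfin).1 ?_
    calc ∫⁻ x, min (V x) (M : ℝ≥0∞) ∂μ + ∫⁻ x in {x | V x ≤ M}, f x ∂μ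
        = ∫⁻ x, (∫⁻ ω, min (V (T (x, ω))) M ∂P + {y | V y ≤ M}.indicator f x) ∂μ := by
          rw [← lintegral_indicator (hlevel M), ← lintegral_lintegral_comp_eq hT hVM,
            lintegral_add_right _ (hf.indicator (hlevel M))]
      _ ≤ ∫⁻ x, (min (V x) (M : ℝ≥0∞) + b) ∂μ :=
          lintegral_mono fun x => lintegral_min_add_indicator_le (hdrift x) M
      _ = ∫⁻ x, min (V x) (M : ℝ≥0∞) ∂μ + b := by rw [lintegral_add_left hVM]; simp
  have hunion : ⋃ M : ℕ, {x | V x ≤ M} = Set.univ :=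
    Set.eq_univ_of_forall fun x => Set.mem_iUnion.2
      ((ENNReal.exists_nat_gt (hV_top x)).imp fun _ h => h.le)
  have hmono : Monotone fun M : ℕ => {x | V x ≤ M} := fun M N hMN =>
    Set.ofPred_subset_ofPred.2 fun _ hx => hx.trans (Nat.cast_le.2 hMN)
  rw [← setLIntegral_univ, ← hunion, setLIntegral_iUnion_of_directed _ hmono.directed_le]
  exact iSup_le htrunc

theorem lintegral_sq_le_collapseConst (hT : MeasurePreserving T (μ.prod P) μ)
    (hV_meas : Measurable V) (hV : ∀ x, 0 ≤ V x) (hδ : 0 < δ)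
    (ht_meas : ∀ x, AEStronglyMeasurable (t x) P)
    (hstep : ∀ x, ∀ᵐ ω ∂P, V (T (x, ω)) ^ 2 ≤ V x ^ 2 + 2 * t x ω + B ^ 2)
    (ht : ∀ x, ∀ᵐ ω ∂P, |t x ω| ≤ B * V x) (hdrift : ∀ x, ∫ ω, t x ω ∂P ≤ -δ * V x) :
    ∫⁻ x, ENNReal.ofReal (V x ^ 2) ∂μ ≤ ENNReal.ofReal (collapseConst B δ) :=
  lintegral_le_of_stationary_of_drift (V := fun x => ENNReal.ofReal (V x ^ 4)) hT
    (hV_meas.pow_const 4).ennreal_ofReal (fun _ => ENNReal.ofReal_ne_top)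
    (hV_meas.pow_const 2).ennreal_ofReal fun x =>
      lintegral_pow_four_add_sq_le hδ (hV x) (ht_meas x) (hstep x) (ht x) (hdrift x)

end Lyapunov

section ConeProjection

variable {E : Type*} [NormedAddCommGroup E] [InnerProductSpace ℝ E] [CompleteSpace E]
  (K : ProperCone ℝ E) {x k : E}

theorem exists_mem_properCone_inner_eq_zero (x : E) :
    ∃ p ∈ K, ⟪x - p, p⟫ = 0 ∧ ∀ k ∈ K, ⟪x - p, k⟫ ≤ 0 := by
  have hconv : Convex ℝ (K : Set E) := K.convex
  obtain ⟨p, hp, hmin⟩ :=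
    exists_norm_eq_iInf_of_complete_convex K.nonempty K.isClosed.isComplete hconv x
  have hinner : ∀ w ∈ K, ⟪x - p, w - p⟫ ≤ 0 := (norm_eq_iInf_iff_real_inner_le_zero hconv hp).1 hmin
  have hp_le : ⟪x - p, p⟫ ≤ 0 := by
    simpa [two_smul] using hinner (p + p) (add_mem hp hp)
  have hp_ge : 0 ≤ ⟪x - p, p⟫ := by
    simpa using hinner 0 (zero_mem K)
  refine ⟨p, hp, hp_le.antisymm hp_ge, fun k hk => ?_⟩
  simpa using hinner (k + p) (add_mem hk hp)

/-- The nearest-point projection onto a closed convex cone. -/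
noncomputable def coneProj (x : E) : E := (exists_mem_properCone_inner_eq_zero K x).choose

/-- The component `x - coneProj K x` of `x` off the cone, which lies in the polar cone of `K`. -/
noncomputable def coneResidual (x : E) : E := x - coneProj K x

lemma coneProj_mem (x : E) : coneProj K x ∈ K :=
  (exists_mem_properCone_inner_eq_zero K x).choose_spec.1

lemma inner_coneResidual_coneProj (x : E) : ⟪coneResidual K x, coneProj K x⟫ = 0 :=
  (exists_mem_properCone_inner_eq_zero K x).choose_spec.2.1

variable {K} in
lemma inner_coneResidual_nonpos (x : E) (hk : k ∈ K) : ⟪coneResidual K x, k⟫ ≤ 0 :=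
  (exists_mem_properCone_inner_eq_zero K x).choose_spec.2.2 k hk

lemma coneProj_add_coneResidual (x : E) : coneProj K x + coneResidual K x = x :=
  add_sub_cancel _ _

lemma inner_self_coneResidual (x : E) : ⟪x, coneResidual K x⟫ = ‖coneResidual K x‖ ^ 2 := by
  nth_rw 1 [← coneProj_add_coneResidual K x]
  rw [inner_add_left, real_inner_comm, inner_coneResidual_coneProj, zero_add,
    real_inner_self_eq_norm_sq]

variable {K} in
lemma norm_coneResidual_le (x : E) (hk : k ∈ K) : ‖coneResidual K x‖ ≤ ‖x - k‖ := by
  have hsq : ‖coneResidual K x‖ ^ 2 ≤ ‖coneResidual K x‖ * ‖x - k‖ :=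
    calc ‖coneResidual K x‖ ^ 2 ≤ ⟪coneResidual K x, x - k⟫ := by
          rw [inner_sub_right, real_inner_comm, inner_self_coneResidual]
          linarith [inner_coneResidual_nonpos x hk]
      _ ≤ ‖coneResidual K x‖ * ‖x - k‖ := real_inner_le_norm _ _
  rcases (norm_nonneg (coneResidual K x)).eq_or_lt with h | h
  · exact h ▸ norm_nonneg _
  · exact le_of_mul_le_mul_left (by rwa [← sq]) h

lemma coneResidual_bot (x : E) : coneResidual (⊥ : ProperCone ℝ E) x = x := by
  rw [coneResidual, ProperCone.mem_bot.1 (coneProj_mem ⊥ x), sub_zero]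

end ConeProjection

section FlattenedMatrices

variable {ι κ : Type*}

/-- Real `ι × κ` matrices as vectors of the Euclidean space on the index set `ι × κ`. -/
noncomputable def flat : (ι → κ → ℝ) ≃ₗ[ℝ] EuclideanSpace ℝ (ι × κ) :=
  (LinearEquiv.curry ℝ ℝ ι κ).symm.trans (WithLp.linearEquiv 2 ℝ (ι × κ → ℝ)).symm

@[simp] lemma flat_apply (M : ι → κ → ℝ) (k : ι × κ) : flat M k = M k.1 k.2 := rfl

variable [Fintype ι] [Fintype κ]

lemma inner_flat (M N : ι → κ → ℝ) : ⟪flat M, flat N⟫ = ∑ i, ∑ j, M i j * N i j := by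
  rw [PiLp.inner_apply, Fintype.sum_prod_type]
  simp [mul_comm]

lemma norm_flat_sq (M : ι → κ → ℝ) : ‖flat M‖ ^ 2 = ∑ i, ∑ j, M i j ^ 2 := by
  simp [EuclideanSpace.norm_sq_eq, Fintype.sum_prod_type]

lemma norm_flat_le_sum {M : ι → κ → ℝ} (hM : ∀ i j, 0 ≤ M i j) :
    ‖flat M‖ ≤ ∑ i, ∑ j, M i j := by
  refine le_of_sq_le_sq ?_ (Finset.sum_nonneg fun i _ => Finset.sum_nonneg fun j _ => hM i j)
  rw [norm_flat_sq, ← Fintype.sum_prod_type', ← Fintype.sum_prod_type']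
  exact Finset.sum_sq_le_sq_sum_of_nonneg fun k _ => hM k.1 k.2

end FlattenedMatrices

section RowColumn

variable (ι κ : Type*) [Fintype ι] [Fintype κ]

/-- The matrices of the form `x_{ij} = w_i + w̃_j`: the linear span of the cone `coneK` onto which
the queue lengths collapse in heavy traffic. -/
def rowColSubspace : Submodule ℝ (EuclideanSpace ℝ (ι × κ)) where
  carrier := {x | ∃ (w : ι → ℝ) (w' : κ → ℝ), ∀ i j, x (i, j) = w i + w' j}
  zero_mem' := ⟨0, 0, by simp⟩
  add_mem' := by
    rintro x y ⟨w, w', hx⟩ ⟨z, z', hy⟩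
    exact ⟨w + z, w' + z', fun i j => by simp [hx, hy]; ring⟩
  smul_mem' := by
    rintro c x ⟨w, w', hx⟩
    exact ⟨c • w, c • w', fun i j => by simp [hx, mul_add]⟩

/-- The nonnegative matrices in `rowColSubspace`; on square matrices this is the cone `coneK`. -/
def rowColCone : ProperCone ℝ (EuclideanSpace ℝ (ι × κ)) where
  carrier := {x | x ∈ rowColSubspace ι κ ∧ ∀ k, 0 ≤ x k}
  zero_mem' := ⟨zero_mem _, by simp⟩
  add_mem' hx hy := ⟨add_mem hx.1 hy.1, fun k => add_nonneg (hx.2 k) (hy.2 k)⟩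
  smul_mem' c x hx := ⟨Submodule.smul_mem _ (c : ℝ) hx.1, fun k => mul_nonneg c.2 (hx.2 k)⟩
  isClosed' := by
    have hnonneg : IsClosed {x : EuclideanSpace ℝ (ι × κ) | ∀ k, 0 ≤ x k} := by
      simp only [Set.ofPred_forall]
      exact isClosed_iInter fun k => isClosed_le continuous_const (by fun_prop)
    exact (Submodule.closed_of_finiteDimensional _).inter hnonneg

variable {ι κ}

lemma nonneg_of_mem_rowColCone {x : EuclideanSpace ℝ (ι × κ)} (hx : x ∈ rowColCone ι κ)
    (k : ι × κ) : 0 ≤ x k :=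
  hx.2 k

lemma mem_rowColSubspace_of_mem_rowColCone {x : EuclideanSpace ℝ (ι × κ)}
    (hx : x ∈ rowColCone ι κ) : x ∈ rowColSubspace ι κ :=
  hx.1

lemma inner_eq_zero_of_mem_rowColSubspace {x y : EuclideanSpace ℝ (ι × κ)}
    (hx : x ∈ rowColSubspace ι κ) (hrow : ∀ i, ∑ j, y (i, j) = 0) (hcol : ∀ j, ∑ i, y (i, j) = 0) :
    ⟪x, y⟫ = 0 := by
  obtain ⟨w, w', hx⟩ := hx
  calc ⟪x, y⟫ = ∑ i, ∑ j, w i * y (i, j) + ∑ j, ∑ i, w' j * y (i, j) := by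
        rw [Finset.sum_comm (γ := κ), ← Finset.sum_add_distrib, PiLp.inner_apply,
          Fintype.sum_prod_type]
        refine Finset.sum_congr rfl fun i _ => ?_
        rw [← Finset.sum_add_distrib]
        refine Finset.sum_congr rfl fun j _ => ?_
        simp only [hx, RCLike.inner_apply, conj_trivial]
        ring
    _ = 0 := by simp [← Finset.mul_sum, hrow, hcol]

lemma norm_sub_starProjection_le_norm_coneResidual (x : EuclideanSpace ℝ (ι × κ)) :
    ‖x - (rowColSubspace ι κ).starProjection x‖ ≤ ‖coneResidual (rowColCone ι κ) x‖ := by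
  rw [Submodule.starProjection_minimal]
  exact ciInf_le ⟨0, Set.forall_mem_range.2 fun _ => norm_nonneg _⟩
    (⟨_, mem_rowColSubspace_of_mem_rowColCone (coneProj_mem (rowColCone ι κ) x)⟩ :
      rowColSubspace ι κ)

lemma sum_row_coneResidual_nonpos (x : EuclideanSpace ℝ (ι × κ)) (i : ι) :
    ∑ j, coneResidual (rowColCone ι κ) x (i, j) ≤ 0 := by
  classical
  have hmem : flat (fun i' (_ : κ) => if i' = i then (1 : ℝ) else 0) ∈ rowColCone ι κ :=
    ⟨⟨fun i' => if i' = i then 1 else 0, 0, fun _ _ => by simp⟩,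
      fun k => by rw [flat_apply]; split_ifs <;> simp⟩
  simpa [PiLp.inner_apply, Fintype.sum_prod_type_right] using inner_coneResidual_nonpos x hmem

lemma sum_col_coneResidual_nonpos (x : EuclideanSpace ℝ (ι × κ)) (j : κ) :
    ∑ i, coneResidual (rowColCone ι κ) x (i, j) ≤ 0 := by
  classical
  have hmem : flat (fun (_ : ι) j' => if j' = j then (1 : ℝ) else 0) ∈ rowColCone ι κ :=
    ⟨⟨0, fun j' => if j' = j then 1 else 0, fun _ _ => by simp⟩,
      fun k => by rw [flat_apply]; split_ifs <;> simp⟩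
  simpa [PiLp.inner_apply, Fintype.sum_prod_type] using inner_coneResidual_nonpos x hmem

open Fintype in
theorem starProjection_rowColSubspace_apply (x : EuclideanSpace ℝ (ι × κ)) (i : ι) (j : κ) :
    (rowColSubspace ι κ).starProjection x (i, j) =
      (∑ j', x (i, j')) / card κ + (∑ i', x (i', j)) / card ι -
        (∑ i', ∑ j', x (i', j')) / (card ι * card κ) := by
  have : Nonempty ι := ⟨i⟩
  have : Nonempty κ := ⟨j⟩
  let y : EuclideanSpace ℝ (ι × κ) := flat fun i j =>
    (∑ j', x (i, j')) / card κ + ((∑ i', x (i', j)) / card ι -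
      (∑ i', ∑ j', x (i', j')) / (card ι * card κ))
  have hy : y ∈ rowColSubspace ι κ := ⟨fun i => (∑ j', x (i, j')) / card κ,
    fun j => (∑ i', x (i', j)) / card ι - (∑ i', ∑ j', x (i', j')) / (card ι * card κ),
    fun _ _ => rfl⟩
  have hrow (i : ι) : ∑ j, (x - y) (i, j) = 0 := by
    have hswap := Finset.sum_comm (s := Finset.univ) (t := Finset.univ) (f := fun i j => x (i, j))
    simp only [y, PiLp.sub_apply, flat_apply, Finset.sum_sub_distrib, Finset.sum_add_distrib,
      ← Finset.sum_div, Finset.sum_const, Finset.card_univ, nsmul_eq_mul, hswap]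
    field_simp
    ring
  have hcol (j : κ) : ∑ i, (x - y) (i, j) = 0 := by
    simp only [y, PiLp.sub_apply, flat_apply, Finset.sum_sub_distrib, Finset.sum_add_distrib,
      ← Finset.sum_div, Finset.sum_const, Finset.card_univ, nsmul_eq_mul]
    field_simp
    ring
  have hproj : (rowColSubspace ι κ).starProjection x = y :=
    Submodule.eq_starProjection_of_mem_of_inner_eq_zero hy fun w hw => by
      rw [real_inner_comm]
      exact inner_eq_zero_of_mem_rowColSubspace hw hrow hcol
  rw [hproj]
  exact (add_sub_assoc _ _ _).symm

lemma starProjection_rowColSubspace_single_apply_self [DecidableEq ι] [DecidableEq κ]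
    (k : ι × κ) :
    (rowColSubspace ι κ).starProjection (EuclideanSpace.single k 1) k =
      1 / Fintype.card κ + 1 / Fintype.card ι - 1 / (Fintype.card ι * Fintype.card κ) := by
  obtain ⟨i, j⟩ := k
  simp [starProjection_rowColSubspace_apply, Prod.ext_iff, ite_and, mul_comm]

end RowColumn

section DoublyStochastic

variable {ι : Type*} [Fintype ι] [DecidableEq ι]

lemma sum_mul_le_of_mem_doublyStochastic {c m : ι → ι → ℝ} {b : ℝ}
    (hc : ∀ σ : Equiv.Perm ι, ∑ i, ∑ j, c i j * σ.permMatrix ℝ i j ≤ b)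
    (hm : m ∈ doublyStochastic ℝ ι) : ∑ i, ∑ j, c i j * m i j ≤ b := by
  let f : Matrix ι ι ℝ →ₗ[ℝ] ℝ := ∑ i, ∑ j, c i j • Matrix.entryLinearMap ℝ ℝ i j
  have hf (M : Matrix ι ι ℝ) : f M = ∑ i, ∑ j, c i j * M i j := by simp [f]
  have hsub : convexHull ℝ {M | ∃ σ : Equiv.Perm ι, σ.permMatrix ℝ = M} ⊆ {M | f M ≤ b} :=
    convexHull_min (by rintro _ ⟨σ, rfl⟩; exact (hf _).trans_le (hc σ))
      (convex_halfSpace_le f.isLinear b)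
  rw [← hf m]
  exact hsub (doublyStochastic_eq_convexHull_permMatrix (R := ℝ) (n := ι) ▸ hm)

-- The deficits `1 - R_i` and `1 - C_j` of the row and column sums have the same total, so their
-- normalised outer product fills both.
lemma exists_mem_doublyStochastic_ge {m : ι → ι → ℝ} (hm : ∀ i j, 0 ≤ m i j)
    (hrow : ∀ i, ∑ j, m i j ≤ 1) (hcol : ∀ j, ∑ i, m i j ≤ 1) :
    ∃ m' ∈ doublyStochastic ℝ ι, ∀ i j, m i j ≤ m' i j := by
  let r : ι → ℝ := fun i => 1 - ∑ j, m i j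
  let c : ι → ℝ := fun j => 1 - ∑ i, m i j
  have hr (i : ι) : 0 ≤ r i := sub_nonneg.2 (hrow i)
  have hc (j : ι) : 0 ≤ c j := sub_nonneg.2 (hcol j)
  have htotal : ∑ j, c j = ∑ i, r i := by
    simp only [r, c, Finset.sum_sub_distrib]
    rw [Finset.sum_comm]
  have hr_sum : 0 ≤ ∑ i, r i := Finset.sum_nonneg fun i _ => hr i
  have hr_cancel (i : ι) : r i * (∑ i, r i) / ∑ i, r i = r i :=
    mul_div_cancel_of_imp fun h => (Finset.sum_eq_zero_iff_of_nonneg fun i _ => hr i).1 h i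
      (Finset.mem_univ i)
  have hc_cancel (j : ι) : (∑ i, r i) * c j / ∑ i, r i = c j :=
    mul_div_cancel_left_of_imp fun h => (Finset.sum_eq_zero_iff_of_nonneg fun j _ => hc j).1
      (htotal.trans h) j (Finset.mem_univ j)
  have hfill (i j : ι) : 0 ≤ r i * c j / ∑ i, r i := div_nonneg (mul_nonneg (hr i) (hc j)) hr_sum
  refine ⟨fun i j => m i j + r i * c j / ∑ i, r i, mem_doublyStochastic_iff_sum.2
    ⟨fun i j => add_nonneg (hm i j) (hfill i j), fun i => ?_, fun j => ?_⟩,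
    fun i j => le_add_of_nonneg_right (hfill i j)⟩
  · rw [Finset.sum_add_distrib, ← Finset.sum_div, ← Finset.mul_sum, htotal, hr_cancel]
    exact add_sub_cancel _ _
  · rw [Finset.sum_add_distrib, ← Finset.sum_div, ← Finset.sum_mul, hc_cancel]
    exact add_sub_cancel _ _

end DoublyStochastic

section MaxWeight

variable {n : ℕ} {s : Fin n → Fin n → ℕ} {S : (Fin n → Fin n → ℕ) → Fin n → Fin n → ℕ}

/-- Matrices of natural numbers (queues, arrivals, schedules) as Euclidean vectors. -/
noncomputable def natVec (M : Fin n → Fin n → ℕ) : EuclideanSpace ℝ (Fin n × Fin n) :=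
  flat (toR n M)

@[simp] lemma natVec_apply (M : Fin n → Fin n → ℕ) (k : Fin n × Fin n) :
    natVec M k = M k.1 k.2 := rfl

lemma IsPerm.memF_toR (hs : IsPerm n s) : memF n (toR n s) :=
  ⟨fun _ _ => Nat.cast_nonneg _, fun i => by simp only [toR]; exact_mod_cast hs.2.1 i,
    fun j => by simp only [toR]; exact_mod_cast hs.2.2 j⟩

lemma isPerm_permMatrix (σ : Equiv.Perm (Fin n)) : IsPerm n (σ.permMatrix ℕ) := by
  obtain ⟨-, hrow, hcol⟩ :=
    mem_doublyStochastic_iff_sum.1 (permMatrix_mem_doublyStochastic (R := ℕ) (σ := σ))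
  refine ⟨fun i j => ?_, hrow, hcol⟩
  rw [← hrow i]
  exact Finset.single_le_sum (fun _ _ => Nat.zero_le _) (Finset.mem_univ j)

lemma toR_permMatrix (σ : Equiv.Perm (Fin n)) : toR n (σ.permMatrix ℕ) = σ.permMatrix ℝ := by
  ext i j
  simp [toR, Equiv.Perm.permMatrix, PEquiv.toMatrix_apply]

lemma IsMaxWeight.inner_le (hS : IsMaxWeight n S) (q : Fin n → Fin n → ℕ)
    {x : EuclideanSpace ℝ (Fin n × Fin n)} (hx : ∀ k, 0 ≤ x k)
    (hrow : ∀ i, ∑ j, x (i, j) ≤ 1) (hcol : ∀ j, ∑ i, x (i, j) ≤ 1) :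
    ⟪natVec q, x⟫ ≤ ⟪natVec q, natVec (S q)⟫ := by
  obtain ⟨m, hm, hxm⟩ := exists_mem_doublyStochastic_ge (fun i j => hx (i, j)) hrow hcol
  have hperm (σ : Equiv.Perm (Fin n)) :
      ∑ i, ∑ j, toR n q i j * σ.permMatrix ℝ i j ≤ ∑ i, ∑ j, toR n q i j * toR n (S q) i j := by
    rw [← toR_permMatrix]
    unfold toR
    exact_mod_cast (hS q).2 _ (isPerm_permMatrix σ)
  calc ⟪natVec q, x⟫ = ∑ i, ∑ j, toR n q i j * x (i, j) := inner_flat _ fun i j => x (i, j)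
    _ ≤ ∑ i, ∑ j, toR n q i j * m i j := by
        gcongr with i _ j _
        · exact Nat.cast_nonneg _
        · exact hxm i j
    _ ≤ ∑ i, ∑ j, toR n q i j * toR n (S q) i j := sum_mul_le_of_mem_doublyStochastic hperm hm
    _ = ⟪natVec q, natVec (S q)⟫ := (inner_flat _ _).symm

lemma inner_flat_sub_eq_zero_of_mem_rowColSubspace {x : EuclideanSpace ℝ (Fin n × Fin n)}
    (hx : x ∈ rowColSubspace (Fin n) (Fin n)) {M N : Fin n → Fin n → ℝ} (hM : memF n M)
    (hN : memF n N) : ⟪x, flat M - flat N⟫ = 0 :=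
  inner_eq_zero_of_mem_rowColSubspace hx (fun i => by simp [hM.2.1, hN.2.1])
    fun j => by simp [hM.2.2, hN.2.2]

variable {ν : Fin n → Fin n → ℝ} {νmin : ℝ}

-- Compare the schedule with the substochastic matrix `ν + (νmin / ‖r‖) r`, `r` being the residual.
lemma IsMaxWeight.inner_coneResidual_sub_le (hS : IsMaxWeight n S) (hν : memF n ν)
    (hνmin : 0 ≤ νmin) (hle : ∀ i j, νmin ≤ ν i j) (q : Fin n → Fin n → ℕ) :
    ⟪coneResidual (rowColCone (Fin n) (Fin n)) (natVec q), flat ν - natVec (S q)⟫ ≤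
      -νmin * ‖coneResidual (rowColCone (Fin n) (Fin n)) (natVec q)‖ := by
  let K := rowColCone (Fin n) (Fin n)
  set x := natVec q
  set r := coneResidual K x with hr
  have hc : 0 ≤ νmin / ‖r‖ := by positivity
  have hweight : ⟪x, flat ν + (νmin / ‖r‖) • r⟫ ≤ ⟪x, natVec (S q)⟫ := by
    refine hS.inner_le q (fun k => ?_) (fun i => ?_) fun j => ?_
    · have hrk : -1 ≤ r k / ‖r‖ := by
        refine neg_le_of_abs_le ?_
        rw [abs_div, abs_norm]
        exact div_le_one_of_le₀ (PiLp.norm_apply_le r k) (norm_nonneg _)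
      calc 0 ≤ ν k.1 k.2 - νmin := sub_nonneg.2 (hle _ _)
        _ ≤ ν k.1 k.2 + νmin * (r k / ‖r‖) := by nlinarith
        _ = (flat ν + (νmin / ‖r‖) • r) k := by simp; ring
    · simpa [Finset.sum_add_distrib, hν.2.1, ← Finset.mul_sum] using
        mul_nonpos_of_nonneg_of_nonpos hc (sum_row_coneResidual_nonpos x i)
    · simpa [Finset.sum_add_distrib, hν.2.2, ← Finset.mul_sum] using
        mul_nonpos_of_nonneg_of_nonpos hc (sum_col_coneResidual_nonpos x j)
  have hproj : ⟪coneProj K x, flat ν - natVec (S q)⟫ = 0 :=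
    inner_flat_sub_eq_zero_of_mem_rowColSubspace
      (mem_rowColSubspace_of_mem_rowColCone (coneProj_mem K x)) hν (hS q).1.memF_toR
  have hnorm : ⟪x, (νmin / ‖r‖) • r⟫ = νmin * ‖r‖ := by
    rw [real_inner_smul_right, inner_self_coneResidual, ← hr, div_mul_eq_mul_div, mul_div_assoc, sq,
      mul_self_div_self]
  calc ⟪r, flat ν - natVec (S q)⟫ = ⟪x, flat ν - natVec (S q)⟫ := by
        rw [hr, coneResidual, inner_sub_left, hproj, sub_zero]
    _ ≤ -νmin * ‖r‖ := by
        rw [inner_add_right, hnorm] at hweight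
        rw [inner_sub_right]
        linarith

lemma IsMaxWeight.drift_coneResidual_le (hS : IsMaxWeight n S) (hν : memF n ν) (hνmin : 0 ≤ νmin)
    (hle : ∀ i j, νmin ≤ ν i j) {ε : ℝ} (hε : 0 ≤ ε) (hεν : ε * ‖flat ν‖ ≤ νmin / 2)
    (q : Fin n → Fin n → ℕ) :
    ⟪coneResidual (rowColCone (Fin n) (Fin n)) (natVec q), flat ((1 - ε) • ν) - natVec (S q)⟫ ≤
      -(νmin / 2) * ‖coneResidual (rowColCone (Fin n) (Fin n)) (natVec q)‖ := by
  have hface := hS.inner_coneResidual_sub_le hν hνmin hle q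
  set r := coneResidual (rowColCone (Fin n) (Fin n)) (natVec q)
  have hperturb : -(ε * ⟪r, flat ν⟫) ≤ νmin / 2 * ‖r‖ :=
    calc -(ε * ⟪r, flat ν⟫) ≤ ε * (‖r‖ * ‖flat ν‖) := by
          rw [← mul_neg]
          gcongr
          exact (neg_le_abs _).trans (abs_real_inner_le_norm _ _)
      _ = ε * ‖flat ν‖ * ‖r‖ := by ring
      _ ≤ νmin / 2 * ‖r‖ := by gcongr
  rw [inner_sub_right] at hface ⊢
  rw [map_smul, real_inner_smul_right]
  linarith

lemma IsMaxWeight.drift_natVec_le (hS : IsMaxWeight n S) (hν : memF n ν)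
    (hνmin : 0 ≤ νmin) (hle : ∀ i j, νmin ≤ ν i j) {ε : ℝ} (hε : 0 ≤ ε) (q : Fin n → Fin n → ℕ) :
    ⟪natVec q, flat ((1 - ε) • ν) - natVec (S q)⟫ ≤ -(ε * νmin) * ‖natVec q‖ := by
  have hweight : ⟪natVec q, flat ν⟫ ≤ ⟪natVec q, natVec (S q)⟫ :=
    hS.inner_le q (fun k => hν.1 _ _) (fun i => (hν.2.1 i).le) fun j => (hν.2.2 j).le
  have hmin : νmin * ‖natVec q‖ ≤ ⟪natVec q, flat ν⟫ :=
    calc νmin * ‖natVec q‖ ≤ νmin * ∑ i, ∑ j, toR n q i j := by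
          gcongr
          exact norm_flat_le_sum fun i j => Nat.cast_nonneg _
      _ ≤ ∑ i, ∑ j, toR n q i j * ν i j := by
          simp_rw [Finset.mul_sum, mul_comm νmin]
          gcongr with i _ j _
          · exact Nat.cast_nonneg _
          · exact hle i j
      _ = ⟪natVec q, flat ν⟫ := (inner_flat _ _).symm
  have hε_min := mul_le_mul_of_nonneg_left hmin hε
  rw [inner_sub_right, map_smul, real_inner_smul_right]
  linarith

end MaxWeight

section Dynamics

variable {n : ℕ}

/-- The service offered to empty queues, so that `nextQ n q a s = q + a - s + unusedService n q a s`
without truncation. -/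
def unusedService (n : ℕ) (q a s : Fin n → Fin n → ℕ) : Fin n → Fin n → ℕ :=
  fun i j => s i j - (q i j + a i j)

variable {q a s : Fin n → Fin n → ℕ}

lemma natVec_nextQ (q a s : Fin n → Fin n → ℕ) :
    natVec (nextQ n q a s) =
      natVec q + (natVec a - natVec s) + natVec (unusedService n q a s) := by
  ext k
  have hbalance : nextQ n q a s k.1 k.2 + s k.1 k.2 =
      q k.1 k.2 + a k.1 k.2 + unusedService n q a s k.1 k.2 := by
    unfold nextQ unusedService
    omega
  have hcast : (nextQ n q a s k.1 k.2 + s k.1 k.2 : ℝ) =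
      q k.1 k.2 + a k.1 k.2 + unusedService n q a s k.1 k.2 := by exact_mod_cast hbalance
  simp only [PiLp.add_apply, PiLp.sub_apply, natVec_apply]
  linarith

lemma inner_natVec_eq_zero {M N : Fin n → Fin n → ℕ} (h : ∀ i j, M i j * N i j = 0) :
    ⟪natVec M, natVec N⟫ = 0 := by
  simp only [natVec, inner_flat, toR, ← Nat.cast_mul, h, Nat.cast_zero, Finset.sum_const_zero]

lemma inner_natVec_unusedService (hs : ∀ i j, s i j ≤ 1) :
    ⟪natVec q, natVec (unusedService n q a s)⟫ = 0 := by
  refine inner_natVec_eq_zero fun i j => ?_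
  have := hs i j
  rw [Nat.mul_eq_zero, unusedService]
  omega

lemma inner_natVec_nextQ_unusedService :
    ⟪natVec (nextQ n q a s), natVec (unusedService n q a s)⟫ = 0 := by
  refine inner_natVec_eq_zero fun i j => ?_
  rw [Nat.mul_eq_zero, unusedService, nextQ]
  omega

lemma norm_natVec_unusedService_sq (hs : ∀ i j, s i j ≤ 1) :
    ‖natVec (unusedService n q a s)‖ ^ 2 = ∑ k, natVec (unusedService n q a s) k := by
  rw [EuclideanSpace.norm_sq_eq]
  refine Finset.sum_congr rfl fun k _ => ?_
  have hle : unusedService n q a s k.1 k.2 ≤ 1 := (Nat.sub_le _ _).trans (hs _ _)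
  rw [natVec_apply]
  interval_cases unusedService n q a s k.1 k.2 <;> simp

lemma norm_le_mul_of_abs_le {x : EuclideanSpace ℝ (Fin n × Fin n)} {c : ℝ} (hc : 0 ≤ c)
    (hx : ∀ k, |x k| ≤ c) : ‖x‖ ≤ n * c := by
  refine le_of_sq_le_sq ?_ (by positivity)
  calc ‖x‖ ^ 2 ≤ ∑ _k : Fin n × Fin n, c ^ 2 := by
        rw [EuclideanSpace.norm_sq_eq]
        gcongr with k
        exact hx k
    _ = (n * c) ^ 2 := by simp; ring

variable {amax : ℕ}

lemma norm_natVec_sub_natVec_le (ha : ∀ i j, a i j ≤ amax) (hs : ∀ i j, s i j ≤ 1) :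
    ‖natVec a - natVec s‖ ≤ n * (amax + 1) := by
  refine norm_le_mul_of_abs_le (by positivity) fun k => ?_
  have ha' : (a k.1 k.2 : ℝ) ≤ amax := by exact_mod_cast ha _ _
  have hs' : (s k.1 k.2 : ℝ) ≤ 1 := by exact_mod_cast hs _ _
  rw [PiLp.sub_apply, natVec_apply, natVec_apply, abs_le]
  constructor <;> linarith [(a k.1 k.2).cast_nonneg (α := ℝ), (s k.1 k.2).cast_nonneg (α := ℝ)]

lemma norm_natVec_nextQ_sub_le (ha : ∀ i j, a i j ≤ amax) (hs : ∀ i j, s i j ≤ 1) :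
    ‖natVec (nextQ n q a s) - natVec q‖ ≤ n * (amax + 1) := by
  refine norm_le_mul_of_abs_le (by positivity) fun k => ?_
  have hup : nextQ n q a s k.1 k.2 ≤ q k.1 k.2 + amax := by
    have := ha k.1 k.2
    unfold nextQ
    omega
  have hdown : q k.1 k.2 ≤ nextQ n q a s k.1 k.2 + 1 := by
    have := hs k.1 k.2
    unfold nextQ
    omega
  have hup' : (nextQ n q a s k.1 k.2 : ℝ) ≤ q k.1 k.2 + amax := by exact_mod_cast hup
  have hdown' : (q k.1 k.2 : ℝ) ≤ nextQ n q a s k.1 k.2 + 1 := by exact_mod_cast hdown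
  rw [PiLp.sub_apply, natVec_apply, natVec_apply, abs_le]
  constructor <;> linarith [amax.cast_nonneg (α := ℝ)]

theorem norm_coneResidual_nextQ_sq_le {K : ProperCone ℝ (EuclideanSpace ℝ (Fin n × Fin n))}
    (hK : ∀ x ∈ K, ∀ k, 0 ≤ x k) (ha : ∀ i j, a i j ≤ amax) (hs : ∀ i j, s i j ≤ 1) :
    ‖coneResidual K (natVec (nextQ n q a s))‖ ^ 2 ≤ ‖coneResidual K (natVec q)‖ ^ 2 +
      2 * ⟪coneResidual K (natVec q), natVec a - natVec s⟫ + (n * (amax + 1) : ℝ) ^ 2 := by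
  set p := coneProj K (natVec q)
  set r := coneResidual K (natVec q) with hr
  set u := natVec (unusedService n q a s)
  set y := natVec (nextQ n q a s)
  have hp : p ∈ K := coneProj_mem K (natVec q)
  have hstep : y - natVec q = (natVec a - natVec s) + u := by
    rw [sub_eq_iff_eq_add', ← add_assoc]
    exact natVec_nextQ q a s
  have hpu : 0 ≤ ⟪p, u⟫ := by
    rw [PiLp.inner_apply]
    exact Finset.sum_nonneg fun k _ => mul_nonneg (Nat.cast_nonneg _) (hK p hp k)
  have hru : ⟪r, u⟫ ≤ 0 := by
    rw [hr, coneResidual, inner_sub_left, inner_natVec_unusedService hs, zero_sub]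
    exact neg_nonpos.2 hpu
  calc ‖coneResidual K y‖ ^ 2 ≤ ‖y - p‖ ^ 2 := by gcongr; exact norm_coneResidual_le y hp
    _ = ‖r + (y - natVec q)‖ ^ 2 := by rw [hr, coneResidual]; congr 2; abel
    _ = ‖r‖ ^ 2 + 2 * (⟪r, natVec a - natVec s⟫ + ⟪r, u⟫) + ‖y - natVec q‖ ^ 2 := by
        rw [norm_add_sq_real, ← inner_add_right, ← hstep]
    _ ≤ ‖r‖ ^ 2 + 2 * (⟪r, natVec a - natVec s⟫ + 0) + (n * (amax + 1) : ℝ) ^ 2 := by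
        gcongr
        exact norm_natVec_nextQ_sub_le ha hs
    _ = _ := by rw [add_zero]

end Dynamics

section DiscreteMeasure

variable {X : Type*} [MeasurableSpace X] [MeasurableSingletonClass X] {p : X → ℝ≥0∞}

/-- The measure with point masses `p`. -/
noncomputable def discreteMeasure (p : X → ℝ≥0∞) : Measure X :=
  Measure.sum fun x => p x • Measure.dirac x

lemma lintegral_discreteMeasure (f : X → ℝ≥0∞) :
    ∫⁻ x, f x ∂discreteMeasure p = ∑' x, p x * f x := by
  simp [discreteMeasure, lintegral_sum_measure]

lemma discreteMeasure_singleton (x : X) : discreteMeasure p {x} = p x := by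
  classical
  rw [discreteMeasure, Measure.sum_apply _ (measurableSet_singleton x), tsum_eq_single x]
  · simp
  · intro y hy
    simp [hy]

lemma isProbabilityMeasure_discreteMeasure (hp : ∑' x, p x = 1) :
    IsProbabilityMeasure (discreteMeasure p) :=
  ⟨by rw [← hp, ← lintegral_one, lintegral_discreteMeasure]; simp⟩

lemma integral_discreteMeasure [Countable X] {f : X → ℝ} (hf : Integrable f (discreteMeasure p)) :
    ∫ x, f x ∂discreteMeasure p = ∑' x, (p x).toReal * f x := by
  rw [integral_countable hf]
  simp [Measure.real, discreteMeasure_singleton]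

end DiscreteMeasure

section Arrivals

variable {n : ℕ} {A : Fin n → Fin n → ℕ → ℝ≥0∞} {lam sig : Fin n → Fin n → ℝ} {amax : ℕ}

/-- The law of the arrival matrix: the product of the entry laws, transported along currying. -/
noncomputable def arrivalMeasure (A : Fin n → Fin n → ℕ → ℝ≥0∞) : Measure (Fin n → Fin n → ℕ) :=
  (Measure.pi fun k : Fin n × Fin n => discreteMeasure (A k.1 k.2)).map Function.curry

lemma ArrivalDist.isProbabilityMeasure_entry (hA : ArrivalDist n A lam sig amax)
    (i j : Fin n) : IsProbabilityMeasure (discreteMeasure (A i j)) :=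
  isProbabilityMeasure_discreteMeasure (hA.1 i j)

lemma ArrivalDist.isProbabilityMeasure (hA : ArrivalDist n A lam sig amax) :
    IsProbabilityMeasure (arrivalMeasure A) := by
  have := hA.isProbabilityMeasure_entry
  exact Measure.isProbabilityMeasure_map (measurable_of_countable _).aemeasurable

lemma ArrivalDist.arrivalMeasure_singleton (hA : ArrivalDist n A lam sig amax)
    (a : Fin n → Fin n → ℕ) : arrivalMeasure A {a} = jointA n A a := by
  have := hA.isProbabilityMeasure_entry
  have hpre : Function.curry ⁻¹' {a} = {Function.uncurry a} := by
    ext ω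
    exact (Equiv.eq_symm_apply (Equiv.curry _ _ _)).symm
  rw [arrivalMeasure, Measure.map_apply (measurable_of_countable _) (measurableSet_singleton a),
    hpre, Measure.pi_singleton, Fintype.prod_prod_type]
  simp [discreteMeasure_singleton, jointA]

lemma ArrivalDist.measurePreserving_entry (hA : ArrivalDist n A lam sig amax) (i j : Fin n) :
    MeasurePreserving (fun a : Fin n → Fin n → ℕ => a i j) (arrivalMeasure A)
      (discreteMeasure (A i j)) := by
  have := hA.isProbabilityMeasure_entry
  refine ⟨measurable_of_countable _, ?_⟩
  rw [arrivalMeasure, Measure.map_map (measurable_of_countable _) (measurable_of_countable _)]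
  exact (measurePreserving_eval (fun k : Fin n × Fin n => discreteMeasure (A k.1 k.2))
    (i, j)).map_eq

lemma ArrivalDist.iIndepFun_entry (hA : ArrivalDist n A lam sig amax) :
    iIndepFun (fun (k : Fin n × Fin n) (a : Fin n → Fin n → ℕ) => a k.1 k.2)
      (arrivalMeasure A) := by
  have := hA.isProbabilityMeasure
  rw [iIndepFun_iff_map_fun_eq_pi_map fun _ => (measurable_of_countable _).aemeasurable]
  simp_rw [(hA.measurePreserving_entry _ _).map_eq]
  rw [arrivalMeasure, Measure.map_map (measurable_of_countable _) (measurable_of_countable _)]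
  exact Measure.map_id

lemma ArrivalDist.ae_entry_le (hA : ArrivalDist n A lam sig amax) (i j : Fin n) :
    ∀ᵐ k ∂discreteMeasure (A i j), k ≤ amax :=
  ae_iff_of_countable.2 fun k hk => hA.2.1 i j k (by rwa [discreteMeasure_singleton] at hk)

lemma ArrivalDist.ae_le (hA : ArrivalDist n A lam sig amax) :
    ∀ᵐ a ∂arrivalMeasure A, ∀ i j, a i j ≤ amax :=
  ae_all_iff.2 fun i => ae_all_iff.2 fun j =>
    (hA.measurePreserving_entry i j).quasiMeasurePreserving.ae (hA.ae_entry_le i j)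

lemma ArrivalDist.integral_comp_entry (hA : ArrivalDist n A lam sig amax) (f : ℕ → ℝ)
    (i j : Fin n) : ∫ a, f (a i j) ∂arrivalMeasure A = ∑' k, (A i j k).toReal * f k := by
  have := hA.isProbabilityMeasure_entry i j
  have hf : Integrable f (discreteMeasure (A i j)) := by
    refine .of_bound (measurable_of_countable f).aestronglyMeasurable
      (∑ l ∈ Finset.range (amax + 1), ‖f l‖) ?_
    filter_upwards [hA.ae_entry_le i j] with k hk
    exact Finset.single_le_sum (f := fun l => ‖f l‖) (fun _ _ => norm_nonneg _)
      (Finset.mem_range_succ_iff.2 hk)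
  rw [← integral_discreteMeasure hf, ← (hA.measurePreserving_entry i j).map_eq,
    integral_map (measurable_of_countable _).aemeasurable
      (measurable_of_countable f).aestronglyMeasurable]

lemma ArrivalDist.memLp_natVec (hA : ArrivalDist n A lam sig amax) (k : Fin n × Fin n) :
    MemLp (fun a => natVec a k) 2 (arrivalMeasure A) := by
  have := hA.isProbabilityMeasure
  refine .of_bound (measurable_of_countable _).aestronglyMeasurable amax ?_
  filter_upwards [hA.ae_le] with a ha
  simpa using ha k.1 k.2

lemma ArrivalDist.memLp_centered (hA : ArrivalDist n A lam sig amax) (k : Fin n × Fin n) :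
    MemLp (fun a => (natVec a - flat lam) k) 2 (arrivalMeasure A) :=
  have := hA.isProbabilityMeasure
  (hA.memLp_natVec k).sub (memLp_const _)

lemma ArrivalDist.integral_natVec (hA : ArrivalDist n A lam sig amax) (k : Fin n × Fin n) :
    ∫ a, natVec a k ∂arrivalMeasure A = lam k.1 k.2 :=
  (hA.integral_comp_entry (fun m => (m : ℝ)) k.1 k.2).trans (hA.2.2.1 k.1 k.2)

lemma ArrivalDist.integral_centered (hA : ArrivalDist n A lam sig amax) (k : Fin n × Fin n) :
    ∫ a, (natVec a - flat lam) k ∂arrivalMeasure A = 0 := by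
  have := hA.isProbabilityMeasure
  simp only [PiLp.sub_apply]
  rw [integral_sub ((hA.memLp_natVec k).integrable one_le_two) (integrable_const _),
    hA.integral_natVec]
  simp

lemma ArrivalDist.integral_centered_sq (hA : ArrivalDist n A lam sig amax) (k : Fin n × Fin n) :
    ∫ a, (natVec a - flat lam) k ^ 2 ∂arrivalMeasure A = sig k.1 k.2 ^ 2 :=
  (hA.integral_comp_entry (fun m => ((m : ℝ) - lam k.1 k.2) ^ 2) k.1 k.2).trans
    (hA.2.2.2 k.1 k.2)

lemma ArrivalDist.integral_centered_mul (hA : ArrivalDist n A lam sig amax) {k l : Fin n × Fin n}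
    (hkl : k ≠ l) :
    ∫ a, (natVec a - flat lam) k * (natVec a - flat lam) l ∂arrivalMeasure A = 0 := by
  have hindep : IndepFun (fun a => (natVec a - flat lam) k) (fun a => (natVec a - flat lam) l)
      (arrivalMeasure A) :=
    IndepFun.comp (φ := fun m : ℕ => (m : ℝ) - lam k.1 k.2)
      (ψ := fun m : ℕ => (m : ℝ) - lam l.1 l.2)
      (hA.iIndepFun_entry.indepFun hkl) (measurable_of_countable _) (measurable_of_countable _)
  rw [hindep.integral_fun_mul_eq_mul_integral (measurable_of_countable _).aestronglyMeasurable
    (measurable_of_countable _).aestronglyMeasurable, hA.integral_centered, zero_mul]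

end Arrivals

section QuadraticForm

variable {Ω κ : Type*} [MeasurableSpace Ω] {P : Measure Ω} [Fintype κ] [DecidableEq κ]

theorem integral_inner_map_of_uncorrelated {W : Ω → EuclideanSpace ℝ κ}
    (hW : ∀ k, MemLp (fun ω => W ω k) 2 P)
    (huncorr : ∀ k l, k ≠ l → ∫ ω, W ω k * W ω l ∂P = 0)
    (L : EuclideanSpace ℝ κ →ₗ[ℝ] EuclideanSpace ℝ κ) :
    ∫ ω, ⟪W ω, L (W ω)⟫ ∂P = ∑ k, L (EuclideanSpace.single k 1) k * ∫ ω, W ω k ^ 2 ∂P := by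
  have hexpand (x : EuclideanSpace ℝ κ) :
      ⟪x, L x⟫ = ∑ k, ∑ l, L (EuclideanSpace.single l 1) k * (x k * x l) := by
    have hLx : L x = ∑ l, x l • L (EuclideanSpace.single l 1) := by
      conv_lhs => rw [← (EuclideanSpace.basisFun κ ℝ).sum_repr x]
      simp [map_sum]
    simp only [hLx, PiLp.inner_apply, RCLike.inner_apply, conj_trivial, WithLp.ofLp_sum,
      Finset.sum_apply, PiLp.smul_apply, smul_eq_mul, Finset.sum_mul]
    exact Finset.sum_congr rfl fun k _ => Finset.sum_congr rfl fun l _ => by ring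
  have hint (k l : κ) :
      Integrable (fun ω => L (EuclideanSpace.single l 1) k * (W ω k * W ω l)) P :=
    ((hW k).integrable_mul (hW l)).const_mul _
  simp_rw [hexpand]
  rw [integral_finsetSum _ fun k _ => integrable_finsetSum _ fun l _ => hint k l]
  refine Finset.sum_congr rfl fun k _ => ?_
  rw [integral_finsetSum _ fun l _ => hint k l, Finset.sum_eq_single k]
  · simp_rw [integral_const_mul, sq]
  · intro l _ hlk
    rw [integral_const_mul, huncorr k l hlk.symm, mul_zero]
  · simp

end QuadraticForm

section Stationarity

variable {n : ℕ} {A : Fin n → Fin n → ℕ → ℝ≥0∞} {lam sig : Fin n → Fin n → ℝ} {amax : ℕ}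
  {S : (Fin n → Fin n → ℕ) → Fin n → Fin n → ℕ} {pd : (Fin n → Fin n → ℕ) → ℝ≥0∞}

lemma ArrivalDist.kernelMW_eq (hA : ArrivalDist n A lam sig amax) (q q' : Fin n → Fin n → ℕ) :
    kernelMW n A S q q' = arrivalMeasure A {a | nextQ n q a (S q) = q'} := by
  rw [kernelMW, ← Measure.tsum_indicator_apply_singleton _ _ (MeasurableSet.of_discrete)]
  refine tsum_congr fun a => ?_
  rw [Set.indicator_apply, hA.arrivalMeasure_singleton]
  simp

theorem IsInvariant.measurePreserving (hI : IsInvariant n (kernelMW n A S) pd)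
    (hA : ArrivalDist n A lam sig amax) :
    MeasurePreserving (fun p : (Fin n → Fin n → ℕ) × (Fin n → Fin n → ℕ) =>
      nextQ n p.1 p.2 (S p.1)) ((discreteMeasure pd).prod (arrivalMeasure A))
      (discreteMeasure pd) := by
  have := hA.isProbabilityMeasure
  have hmeas : Measurable fun p : (Fin n → Fin n → ℕ) × (Fin n → Fin n → ℕ) =>
      nextQ n p.1 p.2 (S p.1) := measurable_of_countable _
  refine ⟨hmeas, Measure.ext_of_singleton fun q' => ?_⟩
  rw [Measure.map_apply hmeas (measurableSet_singleton q'),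
    Measure.prod_apply (hmeas (measurableSet_singleton q')), lintegral_discreteMeasure,
    discreteMeasure_singleton, ← hI.2 q']
  exact tsum_congr fun q => congrArg (pd q * ·) (hA.kernelMW_eq q q').symm

end Stationarity

section SquareIntegrable

variable {α E : Type*} [MeasurableSpace α] {m : Measure α} [NormedAddCommGroup E]
  [InnerProductSpace ℝ E] {f g : α → E}

lemma inner_toLp_ae_eq (hf : MemLp f 2 m) (hg : MemLp g 2 m) :
    (fun x => ⟪hf.toLp f x, hg.toLp g x⟫) =ᵐ[m] fun x => ⟪f x, g x⟫ := by
  filter_upwards [hf.coeFn_toLp, hg.coeFn_toLp] with x hfx hgx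
  rw [hfx, hgx]

lemma integrable_inner_of_memLp_two (hf : MemLp f 2 m) (hg : MemLp g 2 m) :
    Integrable (fun x => ⟪f x, g x⟫) m :=
  (L2.integrable_inner _ _).congr (inner_toLp_ae_eq hf hg)

lemma inner_toLp_toLp (hf : MemLp f 2 m) (hg : MemLp g 2 m) :
    ⟪hf.toLp f, hg.toLp g⟫ = ∫ x, ⟪f x, g x⟫ ∂m :=
  integral_congr_ae (inner_toLp_ae_eq hf hg)

lemma norm_toLp_two (hf : MemLp f 2 m) : ‖hf.toLp f‖ = √(∫ x, ‖f x‖ ^ 2 ∂m) := by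
  rw [norm_eq_sqrt_real_inner, inner_toLp_toLp]
  simp_rw [real_inner_self_eq_norm_sq]

theorem abs_integral_inner_le (hf : MemLp f 2 m) (hg : MemLp g 2 m) :
    |∫ x, ⟪f x, g x⟫ ∂m| ≤ √(∫ x, ‖f x‖ ^ 2 ∂m) * √(∫ x, ‖g x‖ ^ 2 ∂m) := by
  rw [← inner_toLp_toLp hf hg, ← norm_toLp_two hf, ← norm_toLp_two hg]
  exact abs_real_inner_le_norm _ _

end SquareIntegrable

section StationaryBalance

variable {E : Type*} [NormedAddCommGroup E] [InnerProductSpace ℝ E] {L : Submodule ℝ E}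
  [L.HasOrthogonalProjection] {ε : ℝ} {v : E}

lemma inner_eq_neg_of_starProjection_eq (hv : v ∈ L) (hv_norm : ‖v‖ = 1) {d : E}
    (hd : L.starProjection d = -ε • v) : ⟪v, d⟫ = -ε :=
  calc ⟪v, d⟫ = ⟪L.starProjection v, d⟫ := by rw [L.starProjection_eq_self_iff.2 hv]
    _ = -ε * ‖v‖ ^ 2 := by
        rw [L.inner_starProjection_left_eq_right, hd, real_inner_smul_right,
          real_inner_self_eq_norm_sq]
    _ = -ε := by rw [hv_norm]; ring

-- Expand `‖x'‖²` along `L`; orthogonality of `x'` and `u` moves the last cross term off `L`.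
lemma two_mul_inner_eq_of_step (hv : v ∈ L) (hv_norm : ‖v‖ = 1) {x x' w d u : E}
    (hstep : x' = x + (w + d) + u) (hd : L.starProjection d = -ε • v) (horth : ⟪x', u⟫ = 0) :
    2 * ε * ⟪v, x⟫ = ‖L.starProjection x‖ ^ 2 - ‖L.starProjection x'‖ ^ 2 +
      2 * ⟪L.starProjection x - ε • v, w⟫ + ⟪w, L.starProjection w⟫ + ε ^ 2 -
      2 * ⟪x' - L.starProjection x', u⟫ - ‖L.starProjection u‖ ^ 2 := by
  have hself (y : E) : ‖L.starProjection y‖ ^ 2 = ⟪y, L.starProjection y⟫ := by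
    rw [← real_inner_self_eq_norm_sq, L.inner_starProjection_left_eq_right,
      L.starProjection_eq_self_iff.2 (L.starProjection_apply_mem y)]
  have hd_left (y : E) : ⟪d, L.starProjection y⟫ = -ε * ⟪v, y⟫ := by
    rw [← L.inner_starProjection_left_eq_right, hd, real_inner_smul_left]
  have hd_right (y : E) : ⟪y, L.starProjection d⟫ = -ε * ⟪v, y⟫ := by
    rw [hd, real_inner_smul_right, real_inner_comm]
  have hvd : ⟪v, d⟫ = -ε := inner_eq_neg_of_starProjection_eq hv hv_norm hd
  have hcomm (y z : E) : ⟪y, L.starProjection z⟫ = ⟪z, L.starProjection y⟫ := by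
    rw [← L.inner_starProjection_left_eq_right, real_inner_comm]
  have hx' : ⟪x' - L.starProjection x', u⟫ = -⟪x', L.starProjection u⟫ := by
    rw [inner_sub_left, horth, L.inner_starProjection_left_eq_right, zero_sub]
  rw [hx', hself, hself, hself, hstep]
  simp only [map_add, inner_add_left, inner_add_right, inner_sub_left, real_inner_smul_left,
    hd_left, hd_right, hvd, L.inner_starProjection_left_eq_right]
  rw [hcomm w x, hcomm u x, hcomm u w]
  ring

variable [CompleteSpace E] {X Ω : Type*} [MeasurableSpace X] [MeasurableSpace Ω]
  {μ : Measure X} {P : Measure Ω}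
  {T : X × Ω → X} {Q : X → E} {W : Ω → E} {D : X → E} {U : X × Ω → E}

lemma integral_comp_eq_of_measurePreserving (hT : MeasurePreserving T (μ.prod P) μ) {f : X → ℝ}
    (hf : AEStronglyMeasurable f μ) : ∫ p, f (T p) ∂μ.prod P = ∫ x, f x ∂μ := by
  rw [← hT.map_eq] at hf
  rw [← integral_map hT.aemeasurable hf, hT.map_eq]

lemma integral_inner_prod_eq_zero [SFinite μ] [SFinite P] {f : X → E} (hf : Integrable f μ)
    (hW : Integrable W P) (hW_mean : ∫ ω, W ω ∂P = 0) : ∫ p, ⟪f p.1, W p.2⟫ ∂μ.prod P = 0 := by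
  have hbilin := integral_prod_bilin (innerSL ℝ) hf hW
  simp only [hW_mean, map_zero] at hbilin
  exact hbilin

variable [IsProbabilityMeasure μ] [IsProbabilityMeasure P]

theorem integral_inner_reflection_eq (hT : MeasurePreserving T (μ.prod P) μ) (hQ : MemLp Q 2 μ)
    (hW : MemLp W 2 P) (hW_mean : ∫ ω, W ω ∂P = 0) (hv : v ∈ L) (hv_norm : ‖v‖ = 1)
    (hstep : ∀ p, Q (T p) = Q p.1 + (W p.2 + D p.1) + U p)
    (hD : ∀ x, L.starProjection (D x) = -ε • v) : ∫ p, ⟪v, U p⟫ ∂μ.prod P = ε := by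
  have hU (p : X × Ω) : ⟪v, U p⟫ = ⟪v, Q (T p)⟫ - ⟪v, Q p.1⟫ - ⟪v, W p.2⟫ + ε := by
    rw [hstep, inner_add_right, inner_add_right, inner_add_right,
      inner_eq_neg_of_starProjection_eq hv hv_norm (hD p.1)]
    ring
  have hvQ : Integrable (fun x => ⟪v, Q x⟫) μ := (hQ.integrable one_le_two).const_inner v
  have hvW : Integrable (fun ω => ⟪v, W ω⟫) P := (hW.integrable one_le_two).const_inner v
  have hvQT : Integrable (fun p => ⟪v, Q (T p)⟫) (μ.prod P) := hT.integrable_comp_of_integrable hvQ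
  simp_rw [hU]
  rw [integral_add ((hvQT.sub' (hvQ.comp_fst P)).sub' (hvW.comp_snd μ)) (integrable_const _),
    integral_sub (hvQT.sub' (hvQ.comp_fst P)) (hvW.comp_snd μ),
    integral_sub hvQT (hvQ.comp_fst P),
    integral_comp_eq_of_measurePreserving hT hvQ.aestronglyMeasurable,
    integral_fun_fst (fun x => ⟪v, Q x⟫), integral_fun_snd (fun ω => ⟪v, W ω⟫),
    integral_inner (hW.integrable one_le_two), hW_mean]
  simp

theorem stationary_balance (hT : MeasurePreserving T (μ.prod P) μ) (hQ : MemLp Q 2 μ)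
    (hW : MemLp W 2 P) (hW_mean : ∫ ω, W ω ∂P = 0) (hU : MemLp U 2 (μ.prod P)) (hv : v ∈ L)
    (hv_norm : ‖v‖ = 1) (hstep : ∀ p, Q (T p) = Q p.1 + (W p.2 + D p.1) + U p)
    (hD : ∀ x, L.starProjection (D x) = -ε • v) (horth : ∀ p, ⟪Q (T p), U p⟫ = 0) :
    2 * ε * ∫ x, ⟪v, Q x⟫ ∂μ = ∫ ω, ⟪W ω, L.starProjection (W ω)⟫ ∂P + ε ^ 2 -
      2 * ∫ p, ⟪Q (T p) - L.starProjection (Q (T p)), U p⟫ ∂μ.prod P -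
      ∫ p, ‖L.starProjection (U p)‖ ^ 2 ∂μ.prod P := by
  have hLQ : MemLp (fun x => L.starProjection (Q x)) 2 μ := hQ.continuousLinearMap_comp _
  have hV : Integrable (fun x => ‖L.starProjection (Q x)‖ ^ 2) μ :=
    hLQ.integrable_norm_pow' (p := 2)
  have hVT : Integrable (fun p => ‖L.starProjection (Q (T p))‖ ^ 2) (μ.prod P) :=
    hT.integrable_comp_of_integrable hV
  have hf : MemLp (fun x => L.starProjection (Q x) - ε • v) 2 μ := hLQ.sub (memLp_const _)
  have hcross : Integrable (fun p : X × Ω => ⟪L.starProjection (Q p.1) - ε • v, W p.2⟫)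
      (μ.prod P) := integrable_inner_of_memLp_two (hf.comp_fst P) (hW.comp_snd μ)
  have hquad : Integrable (fun ω => ⟪W ω, L.starProjection (W ω)⟫) P :=
    integrable_inner_of_memLp_two hW (hW.continuousLinearMap_comp _)
  have hQT : MemLp (fun p => Q (T p)) 2 (μ.prod P) := hQ.comp_measurePreserving hT
  have hrefl : Integrable (fun p => ⟪Q (T p) - L.starProjection (Q (T p)), U p⟫) (μ.prod P) :=
    integrable_inner_of_memLp_two (hQT.sub (hQT.continuousLinearMap_comp _)) hU
  have hLU : Integrable (fun p => ‖L.starProjection (U p)‖ ^ 2) (μ.prod P) :=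
    (hU.continuousLinearMap_comp L.starProjection).integrable_norm_pow' (p := 2)
  have hsum_drop := (hV.comp_fst P).sub' hVT
  have hsum_cross := hsum_drop.fun_add (hcross.const_mul 2)
  have hsum_quad := hsum_cross.fun_add (hquad.comp_snd μ)
  have hsum_const := hsum_quad.fun_add (integrable_const (ε ^ 2))
  have hsum_refl := hsum_const.sub' (hrefl.const_mul 2)
  calc 2 * ε * ∫ x, ⟪v, Q x⟫ ∂μ = ∫ p, 2 * ε * ⟪v, Q p.1⟫ ∂μ.prod P := by
        rw [integral_const_mul, integral_fun_fst (fun x => ⟪v, Q x⟫)]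
        simp
    _ = _ := by
        simp_rw [fun p : X × Ω => two_mul_inner_eq_of_step hv hv_norm (hstep p) (hD p.1) (horth p)]
        rw [integral_sub hsum_refl hLU, integral_sub hsum_const (hrefl.const_mul 2),
          integral_add hsum_quad (integrable_const _), integral_add hsum_cross (hquad.comp_snd μ),
          integral_add hsum_drop (hcross.const_mul 2), integral_sub (hV.comp_fst P) hVT,
          integral_comp_eq_of_measurePreserving hT hV.aestronglyMeasurable,
          integral_const_mul, integral_const_mul,
          integral_inner_prod_eq_zero (hf.integrable one_le_two) (hW.integrable one_le_two) hW_mean,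
          integral_fun_fst (fun x => ‖L.starProjection (Q x)‖ ^ 2),
          integral_fun_snd (fun ω => ⟪W ω, L.starProjection (W ω)⟫)]
        simp

theorem abs_two_mul_integral_sub_le (hT : MeasurePreserving T (μ.prod P) μ) (hQ : MemLp Q 2 μ)
    (hW : MemLp W 2 P) (hW_mean : ∫ ω, W ω ∂P = 0) (hU : MemLp U 2 (μ.prod P)) (hv : v ∈ L)
    (hv_norm : ‖v‖ = 1) (hstep : ∀ p, Q (T p) = Q p.1 + (W p.2 + D p.1) + U p)
    (hD : ∀ x, L.starProjection (D x) = -ε • v) (horth : ∀ p, ⟪Q (T p), U p⟫ = 0) :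
    |2 * ε * ∫ x, ⟪v, Q x⟫ ∂μ - ∫ ω, ⟪W ω, L.starProjection (W ω)⟫ ∂P| ≤
      ε ^ 2 + 2 * (√(∫ x, ‖Q x - L.starProjection (Q x)‖ ^ 2 ∂μ) *
        √(∫ p, ‖U p‖ ^ 2 ∂μ.prod P)) + ∫ p, ‖U p‖ ^ 2 ∂μ.prod P := by
  have hR : MemLp (fun x => Q x - L.starProjection (Q x)) 2 μ :=
    hQ.sub (hQ.continuousLinearMap_comp _)
  have hcross := abs_integral_inner_le (hR.comp_measurePreserving hT) hU
  simp only [Function.comp_apply] at hcross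
  rw [integral_comp_eq_of_measurePreserving hT
    (f := fun x => ‖Q x - L.starProjection (Q x)‖ ^ 2) (hR.1.norm.pow 2)] at hcross
  have hLU_nonneg : 0 ≤ ∫ p, ‖L.starProjection (U p)‖ ^ 2 ∂μ.prod P :=
    integral_nonneg fun _ => sq_nonneg _
  have hLU_le : ∫ p, ‖L.starProjection (U p)‖ ^ 2 ∂μ.prod P ≤ ∫ p, ‖U p‖ ^ 2 ∂μ.prod P :=
    integral_mono ((hU.continuousLinearMap_comp L.starProjection).integrable_norm_pow' (p := 2))
      (hU.integrable_norm_pow' (p := 2)) fun p => by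
        simp only
        gcongr
        exact L.norm_starProjection_apply_le (U p)
  rw [stationary_balance hT hQ hW hW_mean hU hv hv_norm hstep hD horth]
  rw [abs_le] at hcross ⊢
  constructor <;> linarith [sq_nonneg ε]

end StationaryBalance

section StateSpaceCollapse

variable {n : ℕ} {A : Fin n → Fin n → ℕ → ℝ≥0∞} {lam sig : Fin n → Fin n → ℝ} {amax : ℕ}
  {S : (Fin n → Fin n → ℕ) → Fin n → Fin n → ℕ} {pd : (Fin n → Fin n → ℕ) → ℝ≥0∞}

lemma ArrivalDist.memLp_natVec_sub (hA : ArrivalDist n A lam sig amax)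
    (y : EuclideanSpace ℝ (Fin n × Fin n)) :
    MemLp (fun a => natVec a - y) 2 (arrivalMeasure A) :=
  have := hA.isProbabilityMeasure
  (MemLp.of_eval_piLp hA.memLp_natVec).sub (memLp_const y)

lemma ArrivalDist.integral_natVec_sub (hA : ArrivalDist n A lam sig amax)
    (y : EuclideanSpace ℝ (Fin n × Fin n)) :
    ∫ a, (natVec a - y) ∂arrivalMeasure A = flat lam - y := by
  have := hA.isProbabilityMeasure
  have hmean : ∫ a, natVec a ∂arrivalMeasure A = flat lam := by
    ext k
    rw [eval_integral_piLp fun k => (hA.memLp_natVec k).integrable one_le_two]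
    exact hA.integral_natVec k
  rw [integral_sub ((MemLp.of_eval_piLp hA.memLp_natVec).integrable one_le_two)
    (integrable_const y), hmean]
  simp

theorem lintegral_norm_coneResidual_sq_le
    {K : ProperCone ℝ (EuclideanSpace ℝ (Fin n × Fin n))} (hK : ∀ x ∈ K, ∀ k, 0 ≤ x k) {δ : ℝ}
    (hδ : 0 < δ) (hA : ArrivalDist n A lam sig amax) (hI : IsInvariant n (kernelMW n A S) pd)
    (hS : ∀ q i j, S q i j ≤ 1)
    (hdrift : ∀ q, ⟪coneResidual K (natVec q), flat lam - natVec (S q)⟫ ≤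
      -δ * ‖coneResidual K (natVec q)‖) :
    ∫⁻ q, ENNReal.ofReal (‖coneResidual K (natVec q)‖ ^ 2) ∂discreteMeasure pd ≤
      ENNReal.ofReal (collapseConst (n * (amax + 1)) δ) := by
  have := hA.isProbabilityMeasure
  have := isProbabilityMeasure_discreteMeasure hI.1
  refine lintegral_sq_le_collapseConst
    (t := fun q a => ⟪coneResidual K (natVec q), natVec a - natVec (S q)⟫)
    (hI.measurePreserving hA) (measurable_of_countable _) (fun _ => norm_nonneg _) hδ
    (fun _ => (measurable_of_countable _).aestronglyMeasurable) (fun q => ?_) (fun q => ?_)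
    fun q => ?_
  · filter_upwards [hA.ae_le] with a ha
    exact norm_coneResidual_nextQ_sq_le hK ha (hS q)
  · filter_upwards [hA.ae_le] with a ha
    rw [mul_comm]
    refine (abs_real_inner_le_norm _ _).trans ?_
    gcongr
    exact norm_natVec_sub_natVec_le ha (hS q)
  · rw [integral_inner ((hA.memLp_natVec_sub _).integrable one_le_two), hA.integral_natVec_sub]
    exact hdrift q

end StateSpaceCollapse

section UniformMatrix

/-- The doubly stochastic matrix with all entries `1 / n`: the unit vector along which the total
queue length is measured. -/
noncomputable def uniformVec (n : ℕ) : EuclideanSpace ℝ (Fin n × Fin n) :=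
  flat fun _ _ => (n : ℝ)⁻¹

variable {n : ℕ}

lemma uniformVec_mem_rowColSubspace : uniformVec n ∈ rowColSubspace (Fin n) (Fin n) :=
  ⟨fun _ => (n : ℝ)⁻¹, 0, fun _ _ => by simp [uniformVec]⟩

lemma inner_uniformVec (x : EuclideanSpace ℝ (Fin n × Fin n)) :
    ⟪uniformVec n, x⟫ = (∑ k, x k) / n := by
  simp [uniformVec, PiLp.inner_apply, div_eq_mul_inv, Finset.sum_mul]

lemma norm_uniformVec (hn : n ≠ 0) : ‖uniformVec n‖ = 1 := by
  rw [← sq_eq_sq₀ (norm_nonneg _) zero_le_one, uniformVec, norm_flat_sq]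
  simp
  field_simp

lemma memF_uniform (hn : n ≠ 0) : memF n fun _ _ => (n : ℝ)⁻¹ :=
  ⟨fun _ _ => by positivity, fun _ => by simp [hn], fun _ => by simp [hn]⟩

lemma starProjection_flat_of_memF (hn : n ≠ 0) {M : Fin n → Fin n → ℝ} (hM : memF n M) :
    (rowColSubspace (Fin n) (Fin n)).starProjection (flat M) = uniformVec n :=
  Submodule.eq_starProjection_of_mem_of_inner_eq_zero uniformVec_mem_rowColSubspace fun w hw => by
    rw [real_inner_comm]
    exact inner_flat_sub_eq_zero_of_mem_rowColSubspace hw hM (memF_uniform hn)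

end UniformMatrix

section HeavyTraffic

variable {n : ℕ} {A : Fin n → Fin n → ℕ → ℝ≥0∞} {lam sig : Fin n → Fin n → ℝ} {amax : ℕ}
  {S : (Fin n → Fin n → ℕ) → Fin n → Fin n → ℕ} {pd : (Fin n → Fin n → ℕ) → ℝ≥0∞}

lemma ArrivalDist.integral_inner_starProjection (hA : ArrivalDist n A lam sig amax) :
    ∫ a, ⟪natVec a - flat lam,
      (rowColSubspace (Fin n) (Fin n)).starProjection (natVec a - flat lam)⟫ ∂arrivalMeasure A =
      (2 / n - 1 / n ^ 2) * ∑ i, ∑ j, sig i j ^ 2 := by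
  refine (integral_inner_map_of_uncorrelated hA.memLp_centered
    (fun k l => hA.integral_centered_mul) (rowColSubspace (Fin n) (Fin n)).starProjection).trans ?_
  simp only [ContinuousLinearMap.coe_coe, starProjection_rowColSubspace_single_apply_self,
    hA.integral_centered_sq, Fintype.card_fin]
  rw [← Finset.mul_sum, Fintype.sum_prod_type]
  ring

variable {ν : Fin n → Fin n → ℝ} {νmin ε N : ℝ}

lemma starProjection_flat_sub_natVec (hn : n ≠ 0) (hν : memF n ν) {s : Fin n → Fin n → ℕ}
    (hs : IsPerm n s) :
    (rowColSubspace (Fin n) (Fin n)).starProjection (flat ((1 - ε) • ν) - natVec s) =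
      -ε • uniformVec n := by
  rw [natVec, map_sub, map_smul, map_smul, starProjection_flat_of_memF hn hν,
    starProjection_flat_of_memF hn hs.memF_toR]
  module

lemma natVec_nextQ_eq_add_centered (lam : Fin n → Fin n → ℝ) (q a s : Fin n → Fin n → ℕ) :
    natVec (nextQ n q a s) = natVec q + ((natVec a - flat lam) + (flat lam - natVec s)) +
      natVec (unusedService n q a s) := by
  rw [sub_add_sub_cancel, natVec_nextQ]

lemma memLp_natVec_unusedService (hS : ∀ q i j, S q i j ≤ 1)
    {m : Measure ((Fin n → Fin n → ℕ) × (Fin n → Fin n → ℕ))} [IsFiniteMeasure m] :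
    MemLp (fun p => natVec (unusedService n p.1 p.2 (S p.1))) 2 m := by
  refine .of_bound (measurable_of_countable _).aestronglyMeasurable (n * 1) (.of_forall fun p => ?_)
  refine norm_le_mul_of_abs_le zero_le_one fun k => ?_
  have hle : unusedService n p.1 p.2 (S p.1) k.1 k.2 ≤ 1 := (Nat.sub_le _ _).trans (hS _ _ _)
  rw [natVec_apply, Nat.abs_cast]
  exact Nat.cast_le_one.2 hle

lemma integral_norm_natVec_unusedService_sq (hn : n ≠ 0) (hν : memF n ν)
    (hA : ArrivalDist n A ((1 - ε) • ν) sig amax) (hI : IsInvariant n (kernelMW n A S) pd)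
    (hS : ∀ q, IsPerm n (S q)) (hQ : MemLp natVec 2 (discreteMeasure pd)) :
    ∫ p, ‖natVec (unusedService n p.1 p.2 (S p.1))‖ ^ 2
      ∂(discreteMeasure pd).prod (arrivalMeasure A) = n * ε := by
  have := hA.isProbabilityMeasure
  have := isProbabilityMeasure_discreteMeasure hI.1
  have hnorm (p : (Fin n → Fin n → ℕ) × (Fin n → Fin n → ℕ)) :
      ‖natVec (unusedService n p.1 p.2 (S p.1))‖ ^ 2 =
        n * ⟪uniformVec n, natVec (unusedService n p.1 p.2 (S p.1))⟫ := by
    rw [norm_natVec_unusedService_sq (hS p.1).1, inner_uniformVec]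
    field_simp
  simp_rw [hnorm]
  rw [integral_const_mul, integral_inner_reflection_eq (W := fun a => natVec a - flat ((1 - ε) • ν))
    (D := fun q => flat ((1 - ε) • ν) - natVec (S q)) (hI.measurePreserving hA) hQ
    (hA.memLp_natVec_sub _) (by rw [hA.integral_natVec_sub, sub_self])
    uniformVec_mem_rowColSubspace (norm_uniformVec hn)
    (fun p => natVec_nextQ_eq_add_centered ((1 - ε) • ν) p.1 p.2 (S p.1))
    fun q => starProjection_flat_sub_natVec hn hν (hS q)]

/-- A bound on the distance of `ε · E[∑ q̄]` from its limit, when the stationary mean square of the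
distance of the queue lengths to `rowColCone` is at most `N`. -/
noncomputable def heavyTrafficError (n : ℕ) (N ε : ℝ) : ℝ :=
  n / 2 * (ε ^ 2 + 2 * (√N * √(n * ε)) + n * ε)

lemma tendsto_heavyTrafficError (n : ℕ) (N : ℝ) :
    Tendsto (heavyTrafficError n N) (nhdsWithin 0 (Set.Ioi 0)) (nhds 0) := by
  have hcont : Continuous (heavyTrafficError n N) := by
    unfold heavyTrafficError
    fun_prop
  have hzero : heavyTrafficError n N 0 = 0 := by simp [heavyTrafficError]
  exact (hzero ▸ hcont.tendsto 0).mono_left nhdsWithin_le_nhds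

lemma integral_norm_sub_starProjection_sq_le {μ : Measure (Fin n → Fin n → ℕ)} (hN : 0 ≤ N)
    (hcollapse : ∫⁻ q, ENNReal.ofReal (‖coneResidual (rowColCone (Fin n) (Fin n)) (natVec q)‖ ^ 2)
      ∂μ ≤ ENNReal.ofReal N) :
    ∫ q, ‖natVec q - (rowColSubspace (Fin n) (Fin n)).starProjection (natVec q)‖ ^ 2 ∂μ ≤ N := by
  rw [integral_eq_lintegral_of_nonneg_ae (.of_forall fun _ => sq_nonneg _)
    (measurable_of_countable _).aestronglyMeasurable]
  refine ENNReal.toReal_le_of_le_ofReal hN (le_trans ?_ hcollapse)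
  gcongr with q
  exact norm_sub_starProjection_le_norm_coneResidual _

theorem abs_mul_integral_sum_natVec_sub_le_of_collapse (hn : n ≠ 0) (hν : memF n ν)
    (hA : ArrivalDist n A ((1 - ε) • ν) sig amax) (hI : IsInvariant n (kernelMW n A S) pd)
    (hS : ∀ q, IsPerm n (S q)) (hQ : MemLp natVec 2 (discreteMeasure pd)) (hN : 0 ≤ N)
    (hcollapse : ∫⁻ q, ENNReal.ofReal (‖coneResidual (rowColCone (Fin n) (Fin n)) (natVec q)‖ ^ 2)
      ∂discreteMeasure pd ≤ ENNReal.ofReal N) :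
    |ε * ∫ q, ∑ k, natVec q k ∂discreteMeasure pd -
      (1 - 1 / (2 * n)) * ∑ i, ∑ j, sig i j ^ 2| ≤ heavyTrafficError n N ε := by
  have := hA.isProbabilityMeasure
  have := isProbabilityMeasure_discreteMeasure hI.1
  have hbalance := abs_two_mul_integral_sub_le (W := fun a => natVec a - flat ((1 - ε) • ν))
    (D := fun q => flat ((1 - ε) • ν) - natVec (S q))
    (U := fun p => natVec (unusedService n p.1 p.2 (S p.1))) (hI.measurePreserving hA) hQ
    (hA.memLp_natVec_sub _) (by rw [hA.integral_natVec_sub, sub_self])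
    (memLp_natVec_unusedService fun q => (hS q).1) uniformVec_mem_rowColSubspace
    (norm_uniformVec hn) (fun p => natVec_nextQ_eq_add_centered ((1 - ε) • ν) p.1 p.2 (S p.1))
    (fun q => starProjection_flat_sub_natVec hn hν (hS q))
    fun p => inner_natVec_nextQ_unusedService
  simp_rw [inner_uniformVec] at hbalance
  rw [integral_div, hA.integral_inner_starProjection,
    integral_norm_natVec_unusedService_sq hn hν hA hI hS hQ] at hbalance
  calc |ε * ∫ q, ∑ k, natVec q k ∂discreteMeasure pd - (1 - 1 / (2 * n)) * ∑ i, ∑ j, sig i j ^ 2|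
      = n / 2 * |2 * ε * ((∫ q, ∑ k, natVec q k ∂discreteMeasure pd) / n) -
          (2 / n - 1 / n ^ 2) * ∑ i, ∑ j, sig i j ^ 2| := by
        rw [← abs_of_nonneg (by positivity : (0 : ℝ) ≤ n / 2), ← abs_mul]
        congr 1
        field_simp
    _ ≤ n / 2 * (ε ^ 2 + 2 * (√N * √(n * ε)) + n * ε) := by
        gcongr
        refine hbalance.trans ?_
        gcongr
        exact integral_norm_sub_starProjection_sq_le hN hcollapse

lemma normE_eq_norm_flat (ν : Fin n → Fin n → ℝ) : normE n ν = ‖flat ν‖ := by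
  rw [normE, ← norm_flat_sq, Real.sqrt_sq (norm_nonneg _)]

lemma normE_pos (hn : n ≠ 0) (hν : memF n ν) : 0 < normE n ν := by
  rw [normE_eq_norm_flat, norm_pos_iff, ne_eq, map_eq_zero_iff _ flat.injective]
  rintro rfl
  simpa using hν.2.1 ⟨0, Nat.pos_of_ne_zero hn⟩

lemma IsInvariant.ofReal_integral_sum_natVec (hI : IsInvariant n (kernelMW n A S) pd)
    (hQ : MemLp natVec 2 (discreteMeasure pd)) :
    ENNReal.ofReal (∫ q, ∑ k, natVec q k ∂discreteMeasure pd) = Etot n pd := by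
  have := isProbabilityMeasure_discreteMeasure hI.1
  have hsum (q : Fin n → Fin n → ℕ) :
      ∑ k, natVec q k = ((∑ k : Fin n × Fin n, q k.1 k.2 : ℕ) : ℝ) := by simp
  rw [ofReal_integral_eq_lintegral_ofReal
    (integrable_finsetSum _ fun k _ => (hQ.integrable one_le_two).eval_piLp k)
    (.of_forall fun q => Finset.sum_nonneg fun k _ => Nat.cast_nonneg _), lintegral_discreteMeasure,
    Etot]
  simp_rw [hsum, ENNReal.ofReal_natCast, Fintype.sum_prod_type]
  push_cast
  rfl

lemma IsMaxWeight.memLp_natVec (hS : IsMaxWeight n S) (hν : memF n ν) (hνmin : 0 < νmin)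
    (hle : ∀ i j, νmin ≤ ν i j) (hε : 0 < ε) (hA : ArrivalDist n A ((1 - ε) • ν) sig amax)
    (hI : IsInvariant n (kernelMW n A S) pd) : MemLp natVec 2 (discreteMeasure pd) := by
  have hmeas : AEStronglyMeasurable natVec (discreteMeasure pd) :=
    (measurable_of_countable _).aestronglyMeasurable
  have hbound := lintegral_norm_coneResidual_sq_le (K := ⊥) (by simp) (mul_pos hε hνmin) hA hI
    (fun q => (hS q).1.1) fun q => by
      simpa only [coneResidual_bot] using hS.drift_natVec_le hν hνmin.le hle hε.le q
  simp only [coneResidual_bot] at hbound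
  rw [memLp_two_iff_integrable_sq_norm hmeas]
  exact ⟨hmeas.norm.pow 2, by
    rw [hasFiniteIntegral_iff_ofReal (.of_forall fun _ => sq_nonneg _)]
    exact hbound.trans_lt ENNReal.ofReal_lt_top⟩

theorem IsMaxWeight.abs_mul_integral_sum_natVec_sub_le (hS : IsMaxWeight n S)
    (hn : n ≠ 0) (hν : memF n ν) (hνmin : 0 < νmin) (hle : ∀ i j, νmin ≤ ν i j) (hε : 0 < ε)
    (hεν : ε * ‖flat ν‖ ≤ νmin / 2) (hA : ArrivalDist n A ((1 - ε) • ν) sig amax)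
    (hI : IsInvariant n (kernelMW n A S) pd) :
    |ε * ∫ q, ∑ k, natVec q k ∂discreteMeasure pd -
      (1 - 1 / (2 * n)) * ∑ i, ∑ j, sig i j ^ 2| ≤
      heavyTrafficError n (collapseConst (n * (amax + 1)) (νmin / 2)) ε :=
  abs_mul_integral_sum_natVec_sub_le_of_collapse hn hν hA hI (fun q => (hS q).1)
    (hS.memLp_natVec hν hνmin hle hε hA hI) (collapseConst_nonneg _ _)
    (lintegral_norm_coneResidual_sq_le (fun _ => nonneg_of_mem_rowColCone) (half_pos hνmin) hA hI
      (fun q => (hS q).1.1) fun q => hS.drift_coneResidual_le hν hνmin.le hle hε.le hεν q)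

end HeavyTraffic

end SwitchModel

/-- Theorem 5.2, heavy-traffic limit version: under MaxWeight,
`ε · E[∑ q̄] → (1 − 1/(2n))‖σ‖²` as `ε ↓ 0`. -/
theorem maxweight_heavy_traffic_limit
    (n : ℕ) (hn : 1 ≤ n)
    (ν : Fin n → Fin n → ℝ) (hν : memF n ν)
    (νmin : ℝ) (hνmin : IsLeast {x : ℝ | ∃ i j : Fin n, ν i j = x} νmin)
    (hνminpos : 0 < νmin)
    (amax : ℕ) (hamax : 1 ≤ amax)
    (A : ℝ → Fin n → Fin n → ℕ → ℝ≥0∞)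
    (sig : ℝ → Fin n → Fin n → ℝ)
    (sched : ℝ → (Fin n → Fin n → ℕ) → (Fin n → Fin n → ℕ))
    (pd : ℝ → (Fin n → Fin n → ℕ) → ℝ≥0∞)
    (hsys : ∀ ε ∈ Set.Ioc (0 : ℝ) (νmin / (2 * normE n ν)),
      ArrivalDist n (A ε) (fun i j => (1 - ε) * ν i j) (sig ε) amax ∧
      IsMaxWeight n (sched ε) ∧
      IsInvariant n (kernelMW n (A ε) (sched ε)) (pd ε))
    (sigma : Fin n → Fin n → ℝ)
    (hconv : ∀ i j, Tendsto (fun ε => (sig ε i j) ^ 2)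
      (nhdsWithin 0 (Set.Ioi (0 : ℝ))) (nhds ((sigma i j) ^ 2))) :
    Tendsto (fun ε : ℝ => ENNReal.ofReal ε * Etot n (pd ε))
      (nhdsWithin 0 (Set.Ioi (0 : ℝ)))
      (nhds (ENNReal.ofReal ((1 - 1 / (2 * n)) * (∑ i, ∑ j, (sigma i j) ^ 2)))) := by
  have hn₀ : n ≠ 0 := Nat.one_le_iff_ne_zero.1 hn
  have hnorm : 0 < normE n ν := normE_pos hn₀ hν
  have hle (i j : Fin n) : νmin ≤ ν i j := hνmin.2 ⟨i, j, rfl⟩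
  have hevent : ∀ᶠ ε in nhdsWithin (0 : ℝ) (Set.Ioi 0), ε ∈ Set.Ioc 0 (νmin / (2 * normE n ν)) :=
    Ioc_mem_nhdsGT (by positivity)
  let total (ε : ℝ) : ℝ := ∫ q, ∑ k, natVec q k ∂discreteMeasure (pd ε)
  have htotal : ∀ ε ∈ Set.Ioc (0 : ℝ) (νmin / (2 * normE n ν)),
      ENNReal.ofReal (ε * total ε) = ENNReal.ofReal ε * Etot n (pd ε) := fun ε hε => by
    obtain ⟨hA, hS, hI⟩ := hsys ε hε
    rw [ENNReal.ofReal_mul hε.1.le, hI.ofReal_integral_sum_natVec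
      (hS.memLp_natVec hν hνminpos hle hε.1 hA hI)]
  have hclose : Tendsto (fun ε => ε * total ε - (1 - 1 / (2 * n)) * ∑ i, ∑ j, sig ε i j ^ 2)
      (nhdsWithin 0 (Set.Ioi 0)) (nhds 0) := by
    refine squeeze_zero_norm' (hevent.mono fun ε hε => ?_)
      (tendsto_heavyTrafficError n (collapseConst (n * (amax + 1)) (νmin / 2)))
    obtain ⟨hA, hS, hI⟩ := hsys ε hε
    have hεν : ε * ‖flat ν‖ ≤ νmin / 2 := by
      rw [← normE_eq_norm_flat]
      linarith [(le_div_iff₀ (by positivity)).1 hε.2]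
    exact hS.abs_mul_integral_sum_natVec_sub_le hn₀ hν hνminpos hle hε.1 hεν hA hI
  have hvar := (tendsto_finsetSum Finset.univ fun i _ => tendsto_finsetSum Finset.univ fun j _ =>
    hconv i j).const_mul (1 - 1 / (2 * (n : ℝ)))
  have hlimit := hclose.add hvar
  simp only [sub_add_cancel, zero_add] at hlimit
  exact (ENNReal.tendsto_ofReal hlimit).congr' (hevent.mono htotal)
end

section
/- MaxWeight queue-length bounds for uniform Bernoulli traffic (Theorem 6.1, MaxWeight part). Fix n ≥ 1 and 0 < ε ≤ 1/(2n), and suppose each arrival entry a_{ij} is Bernoulli with P(a_{ij}=1) = (1−ε)/n (entries independent). Let π be an invariant distribution of the MaxWeight Markov chain. Then for every integer r ≥ 2: (1/ε)·(n − 3/2 + 1/(2n)) − B̃₁ ≤ E_π[∑_{ij} q̄_{ij}] ≤ (1/ε)·(n − 3/2 + 1/(2n)) + B̃₂, where M̃_r = (2√r·e)^{1/r}·16·(r/e)·n²·(n+1), B̃₁ = (1 − ε/2)(n − 2 + 1/n) + n − 1/2 + 3·n^{2−1/r}·ε^{−1/r}·M̃_r, and B̃₂ = −(1 − ε/2)(n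 − 2 + 1/n) + (n+1)/2 + 2·n^{2−1/r}·ε^{−1/r}·M̃_r. -/
open scoped BigOperators ENNReal

open SwitchModel

/-!
Project the queue lengths `q` onto the span of the cone `K` of matrices `f i + g j`, and write `P`
for this projection and `u` for the unused service of a slot. In steady state the drift of
`‖P q‖ ^ 2` vanishes, which expresses `E[∑ q]` through the variance of `P (a - s)`, the term
`‖P u‖ ^ 2` and the cross term `⟪P q⁺, u⟫`. The first is explicit. Since `u` has at most one service
in each row and column and `E[∑ u] = n ε`, the second is known up to a constant. Since `q⁺` and `u`
have disjoint supports, the third equals `-⟪q⁺ - P q⁺, u⟫`, which is at most `‖u‖` times the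
distance `W` of `q⁺` to `K`.

MaxWeight drives the queues towards `K` at rate `1 / (2 n)` while the increments are at most `n`, so
`exp (θ W)` has bounded mean for `θ` of order `1 / n ^ 2`, whatever `ε` is; this bounds the moments
of `W`. Finally `W ‖u‖ ≤ c ‖u‖ ^ 2 + W ^ r / c ^ (r - 1)`, and `c = M (n ε) ^ (-1 / r)` balances the
two terms.
-/

open MeasureTheory ProbabilityTheory
open scoped RealInnerProductSpace

namespace MaxWeight

theorem exp_mul_one_div_four_mul_sub_le_two {t : ℝ} (ht : 1 / 8 ≤ t) :
    Real.exp t * (1 / (4 * t) - 3 / 8) ≤ 2 := by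
  have ht₀ : 0 < t := by linarith
  obtain h | h := le_or_gt (2 / 3) t
  · have hneg : 1 / (4 * t) - 3 / 8 ≤ 0 := by
      rw [sub_nonpos, div_le_iff₀ (by positivity)]; linarith
    linarith [mul_nonpos_of_nonneg_of_nonpos (Real.exp_pos t).le hneg]
  · have hexp : Real.exp t * (1 - t) ≤ 1 :=
      calc Real.exp t * (1 - t) ≤ Real.exp t * Real.exp (-t) := by
            gcongr; linarith [Real.add_one_le_exp (-t)]
        _ = 1 := by rw [← Real.exp_add, add_neg_cancel, Real.exp_zero]
    have hfrac : 1 / (4 * t) ≤ 2 * (1 - t) + 3 / 8 := by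
      rw [div_le_iff₀ (by positivity)]; nlinarith
    calc Real.exp t * (1 / (4 * t) - 3 / 8) ≤ Real.exp t * (2 * (1 - t)) := by gcongr; linarith
      _ ≤ 2 := by linarith

theorem abs_sqrt_sq_add_sq_sub_le (x y l : ℝ) :
    |√(y ^ 2 + l ^ 2) - √(x ^ 2 + l ^ 2)| ≤ |y - x| := by
  have h := abs_norm_sub_norm_le (y + l * Complex.I) (x + l * Complex.I)
  rwa [Complex.norm_add_mul_I, Complex.norm_add_mul_I, add_sub_add_right_eq_sub,
    ← Complex.ofReal_sub, Complex.norm_real] at h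

theorem sqrt_sq_add_sq_sub_le (x y : ℝ) {l : ℝ} (hl : 0 < l) :
    √(y ^ 2 + l ^ 2) - √(x ^ 2 + l ^ 2) ≤ (y ^ 2 - x ^ 2) / (2 * √(x ^ 2 + l ^ 2)) := by
  rw [le_div_iff₀ (by positivity)]
  nlinarith [sq_nonneg (√(y ^ 2 + l ^ 2) - √(x ^ 2 + l ^ 2)),
    Real.sq_sqrt (show 0 ≤ x ^ 2 + l ^ 2 by positivity),
    Real.sq_sqrt (show 0 ≤ y ^ 2 + l ^ 2 by positivity)]

theorem exp_mul_sqrt_sq_add_sq_le (x y : ℝ) {l θ : ℝ} (hl : 0 < l) (hθ : 0 < θ)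
    (hxy : θ * |y - x| ≤ 1) :
    Real.exp (θ * √(y ^ 2 + l ^ 2)) ≤ Real.exp (θ * √(x ^ 2 + l ^ 2)) *
      (1 + θ * ((y ^ 2 - x ^ 2) / (2 * √(x ^ 2 + l ^ 2))) + θ ^ 2 * (y - x) ^ 2) := by
  set d := √(y ^ 2 + l ^ 2) - √(x ^ 2 + l ^ 2)
  have habs : |d| ≤ |y - x| := abs_sqrt_sq_add_sq_sub_le x y l
  have hsmall : |θ * d| ≤ 1 := by
    rw [abs_mul, abs_of_pos hθ]
    exact (mul_le_mul_of_nonneg_left habs hθ.le).trans hxy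
  have hstep : θ * d ≤ θ * ((y ^ 2 - x ^ 2) / (2 * √(x ^ 2 + l ^ 2))) := by
    gcongr; exact sqrt_sq_add_sq_sub_le x y hl
  have hsq : θ ^ 2 * d ^ 2 ≤ θ ^ 2 * (y - x) ^ 2 := by gcongr 1; exact sq_le_sq.mpr habs
  calc Real.exp (θ * √(y ^ 2 + l ^ 2)) = Real.exp (θ * √(x ^ 2 + l ^ 2)) * Real.exp (θ * d) := by
        rw [← Real.exp_add]; congr 1; ring
    _ ≤ _ := by
        gcongr
        linarith [(abs_le.mp (Real.abs_exp_sub_one_sub_id_le hsmall)).2, mul_pow θ d 2]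

theorem mul_le_mul_sq_add_pow_div_pow {W K v : ℝ} (hW : 0 ≤ W) (hK : 0 < K) (hv : v = 0 ∨ 1 ≤ v)
    {r : ℕ} (hr : 2 ≤ r) : W * v ≤ K * v ^ 2 + W ^ r / K ^ (r - 1) := by
  have hrest : 0 ≤ W ^ r / K ^ (r - 1) := by positivity
  obtain rfl | hv := hv
  · simpa using hrest
  obtain hle | hlt := le_or_gt W (K * v)
  · calc W * v ≤ K * v * v := by gcongr
      _ = K * v ^ 2 := by ring
      _ ≤ _ := le_add_of_nonneg_right hrest
  · calc W * v ≤ W * (W / K) ^ (r - 1) := by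
          gcongr
          calc v ≤ v ^ (r - 1) := le_self_pow₀ hv (by omega)
            _ ≤ (W / K) ^ (r - 1) := by gcongr; rw [le_div_iff₀ hK]; linarith
      _ = W ^ r / K ^ (r - 1) := by
          rw [div_pow, mul_div_assoc', mul_pow_sub_one (by omega)]
      _ ≤ _ := le_add_of_nonneg_left (by positivity)

theorem abs_integral_le_of_abs_le {α : Type*} [MeasurableSpace α] {μ : Measure α} {f g : α → ℝ}
    (h : ∀ x, |f x| ≤ g x) (hg : Integrable g μ) : |∫ x, f x ∂μ| ≤ ∫ x, g x ∂μ :=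
  norm_integral_le_of_norm_le (f := f) hg (.of_forall h)

section RandomRecursion

variable {X Ω : Type*} [MeasurableSpace X] [MeasurableSpace Ω] {μ : Measure Ω} {π : Measure X}
  [IsProbabilityMeasure μ] {F : X → Ω → X}

theorem lintegral_lintegral_comp_eq (hF : MeasurePreserving (Function.uncurry F) (π.prod μ) π)
    {g : X → ℝ≥0∞} (hg : Measurable g) : ∫⁻ x, ∫⁻ ω, g (F x ω) ∂μ ∂π = ∫⁻ x, g x ∂π := by
  rw [← hF.lintegral_comp hg]
  exact (lintegral_prod _ (hg.comp hF.measurable).aemeasurable).symm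

theorem integrable_integral_comp (hF : MeasurePreserving (Function.uncurry F) (π.prod μ) π)
    {g : X → ℝ} (hg : Integrable g π) : Integrable (fun x ↦ ∫ ω, g (F x ω) ∂μ) π :=
  (hF.integrable_comp_of_integrable hg).integral_prod_left

theorem integral_integral_comp_eq [SFinite π]
    (hF : MeasurePreserving (Function.uncurry F) (π.prod μ) π) {g : X → ℝ} (hg : Integrable g π) :
    ∫ x, ∫ ω, g (F x ω) ∂μ ∂π = ∫ x, g x ∂π := by
  calc ∫ x, ∫ ω, g (F x ω) ∂μ ∂π = ∫ z, g (Function.uncurry F z) ∂π.prod μ :=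
        (integral_prod _ (hF.integrable_comp_of_integrable hg)).symm
    _ = ∫ x, g x ∂(π.prod μ).map (Function.uncurry F) :=
        (integral_map hF.aemeasurable (by rw [hF.map_eq]; exact hg.1)).symm
    _ = ∫ x, g x ∂π := by rw [hF.map_eq]

variable [IsProbabilityMeasure π]

-- `V` need not be `π`-integrable, so the drift inequality is integrated for `min V m` instead.
theorem setLIntegral_le_of_drift (hF : MeasurePreserving (Function.uncurry F) (π.prod μ) π)
    {V f : X → ℝ≥0∞} {c : ℝ≥0∞} (hV : Measurable V)
    (hdrift : ∀ x, ∫⁻ ω, V (F x ω) ∂μ + f x ≤ V x + c) (m : ℕ) :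
    ∫⁻ x in {x | V x ≤ m}, f x ∂π ≤ c := by
  set S := {x | V x ≤ m}
  have hS : MeasurableSet S := measurableSet_le hV measurable_const
  have hVm : Measurable fun x ↦ min (V x) m := hV.min measurable_const
  have hfin : ∫⁻ x, min (V x) m ∂π ≠ ∞ :=
    ((lintegral_mono fun x ↦ min_le_right _ _).trans_lt
      ((lintegral_const _).trans_lt (by simp))).ne
  have htrunc (x : X) :
      ∫⁻ ω, min (V (F x ω)) m ∂μ + S.indicator f x ≤ min (V x) m + c := by
    by_cases hx : x ∈ S
    · rw [Set.indicator_of_mem hx, min_eq_left (show V x ≤ m from hx)]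
      exact (add_le_add_left (lintegral_mono fun ω ↦ min_le_left _ _) _).trans (hdrift x)
    · rw [Set.indicator_of_notMem hx, min_eq_right (not_le.mp fun h ↦ hx h).le, add_zero]
      calc ∫⁻ ω, min (V (F x ω)) m ∂μ ≤ ∫⁻ _, (m : ℝ≥0∞) ∂μ :=
            lintegral_mono fun ω ↦ min_le_right _ _
        _ ≤ m + c := by simp
  refine (ENNReal.add_le_add_iff_left hfin).mp ?_
  calc ∫⁻ x, min (V x) m ∂π + ∫⁻ x in S, f x ∂π
      = ∫⁻ x, ∫⁻ ω, min (V (F x ω)) m ∂μ ∂π + ∫⁻ x, S.indicator f x ∂π := by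
        rw [lintegral_lintegral_comp_eq hF hVm, lintegral_indicator hS]
    _ = ∫⁻ x, ∫⁻ ω, min (V (F x ω)) m ∂μ + S.indicator f x ∂π :=
        (lintegral_add_left (hVm.comp hF.measurable).lintegral_prod_right' _).symm
    _ ≤ ∫⁻ x, min (V x) m + c ∂π := lintegral_mono htrunc
    _ = ∫⁻ x, min (V x) m ∂π + c := by simp [lintegral_add_left hVm]

theorem lintegral_le_of_drift (hF : MeasurePreserving (Function.uncurry F) (π.prod μ) π)
    {V f : X → ℝ≥0∞} {c : ℝ≥0∞} (hV : Measurable V) (hV_ne_top : ∀ x, V x ≠ ∞)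
    (hdrift : ∀ x, ∫⁻ ω, V (F x ω) ∂μ + f x ≤ V x + c) :
    ∫⁻ x, f x ∂π ≤ c := by
  have hmono : Monotone fun m : ℕ ↦ {x | V x ≤ m} := fun _ _ hab _ hx ↦
    le_trans (Set.mem_ofPred.mp hx) (Nat.cast_le.mpr hab)
  have hcover : ⋃ m : ℕ, {x | V x ≤ m} = Set.univ := Set.eq_univ_of_forall fun x ↦
    Set.mem_iUnion.mpr ((ENNReal.exists_nat_gt (hV_ne_top x)).imp fun _ h ↦ h.le)
  rw [← setLIntegral_univ, ← hcover, setLIntegral_iUnion_of_directed f hmono.directed_le]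
  exact iSup_le (setLIntegral_le_of_drift hF hV hdrift)

-- `√(N ^ 2 + l ^ 2)` stands in for `N`: it is comparable to `N`, and being bounded away from `0` it
-- turns a drift of `N ^ 2` into a drift of the exponential even near `N = 0`.
theorem integral_exp_mul_sqrt_le {N A l θ : ℝ} {N' : Ω → ℝ} (hN' : Measurable N') (hl : 0 < l)
    (hθ : 0 < θ) (hstep : ∀ ω, |N' ω - N| ≤ A) (hθA : θ * A ≤ 1) :
    ∫ ω, Real.exp (θ * √(N' ω ^ 2 + l ^ 2)) ∂μ ≤ Real.exp (θ * √(N ^ 2 + l ^ 2)) *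
      (1 + θ * ((∫ ω, N' ω ^ 2 ∂μ - N ^ 2) / (2 * √(N ^ 2 + l ^ 2))) +
        θ ^ 2 * ∫ ω, (N' ω - N) ^ 2 ∂μ) := by
  have hbdd (ω : Ω) : |N' ω| ≤ |N| + A := by
    linarith [abs_sub_abs_le_abs_sub (N' ω) N, hstep ω]
  have hint : Integrable (fun ω ↦ N' ω ^ 2) μ :=
    .of_bound (by fun_prop) ((|N| + A) ^ 2) (.of_forall fun ω ↦ by
      rw [Real.norm_eq_abs, abs_pow]; gcongr; exact hbdd ω)
  have hint' : Integrable (fun ω ↦ (N' ω - N) ^ 2) μ :=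
    .of_bound (by fun_prop) (A ^ 2) (.of_forall fun ω ↦ by
      rw [Real.norm_eq_abs, abs_pow]; gcongr; exact hstep ω)
  calc ∫ ω, Real.exp (θ * √(N' ω ^ 2 + l ^ 2)) ∂μ
      ≤ ∫ ω, Real.exp (θ * √(N ^ 2 + l ^ 2)) *
          (1 + θ * ((N' ω ^ 2 - N ^ 2) / (2 * √(N ^ 2 + l ^ 2))) +
            θ ^ 2 * (N' ω - N) ^ 2) ∂μ :=
        integral_mono_of_nonneg (.of_forall fun _ ↦ (Real.exp_pos _).le)
          (by fun_prop) (.of_forall fun ω ↦ exp_mul_sqrt_sq_add_sq_le N (N' ω) hl hθ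
            ((mul_le_mul_of_nonneg_left (hstep ω) hθ.le).trans hθA))
    _ = _ := by
        rw [integral_const_mul, integral_add (by fun_prop) (by fun_prop),
          integral_add (by fun_prop) (by fun_prop), integral_const_mul, integral_const_mul,
          integral_div, integral_sub hint (by fun_prop)]
        simp

theorem integral_exp_mul_sqrt_le_of_drift {N A β : ℝ} {N' : Ω → ℝ} (hN' : Measurable N')
    (hN : 0 ≤ N) (hA : 0 < A) (hβ : 0 < β) (hβ8 : β ≤ 8) (hstep : ∀ ω, |N' ω - N| ≤ A)
    (hvar : ∫ ω, (N' ω - N) ^ 2 ∂μ ≤ 2 * A)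
    (hdrift : ∫ ω, N' ω ^ 2 ∂μ ≤ N ^ 2 - 2 * β * N + 2 * A) {θ l : ℝ} (hθ_def : θ = β / (8 * A))
    (hl_def : l = A / β) :
    ∫ ω, Real.exp (θ * √(N' ω ^ 2 + l ^ 2)) ∂μ ≤
      (1 - 3 / 8 * (θ * β)) * Real.exp (θ * √(N ^ 2 + l ^ 2)) + 2 * (θ * β) := by
  have hθ : 0 < θ := by rw [hθ_def]; positivity
  have hl : 0 < l := by rw [hl_def]; positivity
  have hβθ : β = 8 * A * θ := by rw [hθ_def]; field_simp
  have hβl : β * l = A := by rw [hl_def]; field_simp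
  refine (integral_exp_mul_sqrt_le (μ := μ) hN' hl hθ hstep (by linarith)).trans ?_
  set G := √(N ^ 2 + l ^ 2)
  have hlG : l ≤ G := Real.le_sqrt_of_sq_le (by nlinarith)
  have hGN : G ≤ N + l := Real.sqrt_le_iff.mpr ⟨by positivity, by nlinarith⟩
  have hG : 0 < G := hl.trans_le hlG
  have hquad : (∫ ω, N' ω ^ 2 ∂μ - N ^ 2) / (2 * G) ≤ 2 * A / G - β := by
    rw [div_le_iff₀ (by positivity)]
    have hrhs : (2 * A / G - β) * (2 * G) = 4 * A - 2 * β * G := by field_simp; ring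
    linarith [mul_le_mul_of_nonneg_left hGN hβ.le]
  have hθG : 1 / 8 ≤ θ * G :=
    calc 1 / 8 = θ * l := by rw [hθ_def, hl_def]; field_simp
      _ ≤ θ * G := by gcongr
  calc Real.exp (θ * G) * (1 + θ * ((∫ ω, N' ω ^ 2 ∂μ - N ^ 2) / (2 * G)) +
          θ ^ 2 * ∫ ω, (N' ω - N) ^ 2 ∂μ)
      ≤ Real.exp (θ * G) * (1 + θ * (2 * A / G - β) + θ ^ 2 * (2 * A)) := by gcongr
    _ = (1 - 3 / 8 * (θ * β)) * Real.exp (θ * G) +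
          θ * β * (Real.exp (θ * G) * (1 / (4 * (θ * G)) - 3 / 8)) := by
        rw [hβθ]; field_simp; ring
    _ ≤ (1 - 3 / 8 * (θ * β)) * Real.exp (θ * G) + θ * β * 2 := by
        gcongr; exact exp_mul_one_div_four_mul_sub_le_two hθG
    _ = _ := by ring

theorem lintegral_exp_le_of_drift (hF : MeasurePreserving (Function.uncurry F) (π.prod μ) π)
    {N : X → ℝ} {A β : ℝ} (hNm : Measurable N) (hN : ∀ x, 0 ≤ N x) (hA : 0 < A) (hβ : 0 < β)
    (hβ8 : β ≤ 8) (hstep : ∀ x ω, |N (F x ω) - N x| ≤ A)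
    (hvar : ∀ x, ∫ ω, (N (F x ω) - N x) ^ 2 ∂μ ≤ 2 * A)
    (hdrift : ∀ x, ∫ ω, N (F x ω) ^ 2 ∂μ ≤ N x ^ 2 - 2 * β * N x + 2 * A) :
    ∫⁻ x, ENNReal.ofReal (Real.exp (β / (8 * A) * N x)) ∂π ≤ ENNReal.ofReal (16 / 3) := by
  obtain ⟨θ, hθ_def⟩ : ∃ θ, θ = β / (8 * A) := ⟨_, rfl⟩
  obtain ⟨l, hl_def⟩ : ∃ l, l = A / β := ⟨_, rfl⟩
  have hθ : 0 < θ := by rw [hθ_def]; positivity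
  rw [← hθ_def]
  set V : X → ℝ := fun x ↦ Real.exp (θ * √(N x ^ 2 + l ^ 2)) with hV
  have hVm : Measurable V := by fun_prop
  have hFx (x : X) : Measurable (F x) := hF.measurable.comp measurable_prodMk_left
  have hNV (x : X) : Real.exp (θ * N x) ≤ V x := by
    simp only [hV]; gcongr; exact Real.le_sqrt_of_sq_le (by nlinarith)
  have hVint (x : X) : Integrable (fun ω ↦ V (F x ω)) μ := by
    refine .of_bound (hVm.comp (hFx x)).aestronglyMeasurable
      (Real.exp (θ * (√(N x ^ 2 + l ^ 2) + A))) (.of_forall fun ω ↦ ?_)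
    rw [Real.norm_eq_abs, Real.abs_exp]
    gcongr
    linarith [(abs_le.mp (abs_sqrt_sq_add_sq_sub_le (N x) (N (F x ω)) l)).2, hstep x ω]
  have hdriftV (x : X) := integral_exp_mul_sqrt_le_of_drift (μ := μ) (hNm.comp (hFx x))
    (hN x) hA hβ hβ8 (hstep x) (hvar x) (hdrift x) hθ_def hl_def
  refine lintegral_le_of_drift hF (V := fun x ↦ ENNReal.ofReal (8 / (3 * (θ * β)) * V x))
    (by fun_prop) (fun x ↦ ENNReal.ofReal_ne_top) fun x ↦ ?_
  rw [← ofReal_integral_eq_lintegral_ofReal ((hVint x).const_mul _)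
    (.of_forall fun _ ↦ by positivity), ← ENNReal.ofReal_add (by positivity) (by positivity),
    ← ENNReal.ofReal_add (by positivity) (by positivity), integral_const_mul]
  apply ENNReal.ofReal_le_ofReal
  calc 8 / (3 * (θ * β)) * ∫ ω, V (F x ω) ∂μ + Real.exp (θ * N x)
      ≤ 8 / (3 * (θ * β)) * ((1 - 3 / 8 * (θ * β)) * V x + 2 * (θ * β)) + V x := by
        gcongr; exacts [hdriftV x, hNV x]
    _ = 8 / (3 * (θ * β)) * V x + 16 / 3 := by field_simp; ring

theorem integral_pow_le_of_drift (hF : MeasurePreserving (Function.uncurry F) (π.prod μ) π)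
    {N : X → ℝ} {A β : ℝ} (hNm : Measurable N) (hN : ∀ x, 0 ≤ N x) (hA : 0 < A) (hβ : 0 < β)
    (hβ8 : β ≤ 8) (hstep : ∀ x ω, |N (F x ω) - N x| ≤ A)
    (hvar : ∀ x, ∫ ω, (N (F x ω) - N x) ^ 2 ∂μ ≤ 2 * A)
    (hdrift : ∀ x, ∫ ω, N (F x ω) ^ 2 ∂μ ≤ N x ^ 2 - 2 * β * N x + 2 * A) (r : ℕ) :
    Integrable (fun x ↦ N x ^ r) π ∧
      ∫ x, N x ^ r ∂π ≤ r.factorial * (8 * A / β) ^ r * (16 / 3) := by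
  have hpow (x : X) :
      N x ^ r ≤ r.factorial * (8 * A / β) ^ r * Real.exp (β / (8 * A) * N x) := by
    have hx := Real.pow_div_factorial_le_exp (β / (8 * A) * N x)
      (mul_nonneg (by positivity) (hN x)) r
    calc N x ^ r = r.factorial * (8 * A / β) ^ r *
          ((β / (8 * A) * N x) ^ r / r.factorial) := by
          rw [mul_pow, div_pow, div_pow]; field_simp
      _ ≤ _ := by gcongr
  have hlint : ∫⁻ x, ENNReal.ofReal (N x ^ r) ∂π ≤
      ENNReal.ofReal (r.factorial * (8 * A / β) ^ r * (16 / 3)) :=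
    calc ∫⁻ x, ENNReal.ofReal (N x ^ r) ∂π
        ≤ ∫⁻ x, ENNReal.ofReal (r.factorial * (8 * A / β) ^ r) *
            ENNReal.ofReal (Real.exp (β / (8 * A) * N x)) ∂π := by
          refine lintegral_mono fun x ↦ ?_
          rw [← ENNReal.ofReal_mul (by positivity)]
          exact ENNReal.ofReal_le_ofReal (hpow x)
      _ ≤ _ := by
          rw [lintegral_const_mul _ (by fun_prop), ENNReal.ofReal_mul (q := 16 / 3) (by positivity)]
          gcongr
          exact lintegral_exp_le_of_drift hF hNm hN hA hβ hβ8 hstep hvar hdrift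
  have hnonneg (x : X) : 0 ≤ N x ^ r := pow_nonneg (hN x) r
  refine ⟨⟨by fun_prop, ?_⟩, ?_⟩
  · rw [hasFiniteIntegral_iff_ofReal (.of_forall hnonneg)]
    exact hlint.trans_lt ENNReal.ofReal_lt_top
  · rw [integral_eq_lintegral_of_nonneg_ae (.of_forall hnonneg) (by fun_prop)]
    exact ENNReal.toReal_le_of_le_ofReal (by positivity) hlint

end RandomRecursion

theorem exists_mem_properCone_norm_sub_eq_infDist {H : Type*} [NormedAddCommGroup H]
    [InnerProductSpace ℝ H] [CompleteSpace H] (C : ProperCone ℝ H) (x : H) :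
    ∃ y ∈ C, ‖x - y‖ = Metric.infDist x C ∧ ⟪x - y, y⟫ = 0 ∧ ∀ z ∈ C, ⟪x - y, z⟫ ≤ 0 := by
  obtain ⟨y, hy, hmin⟩ :=
    exists_norm_eq_iInf_of_complete_convex C.nonempty C.isClosed.isComplete C.convex x
  have hvar := (norm_eq_iInf_iff_real_inner_le_zero C.convex hy).mp hmin
  have hzero : ⟪x - y, y⟫ = 0 := by
    have h₀ := hvar 0 (zero_mem C)
    have h₂ := hvar (y + y) (add_mem hy hy)
    rw [zero_sub, inner_neg_right] at h₀
    rw [add_sub_cancel_right] at h₂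
    linarith
  refine ⟨y, hy, ?_, hzero, fun z hz ↦ ?_⟩
  · simpa only [Metric.infDist_eq_iInf, dist_eq_norm] using hmin
  · have h := hvar z hz
    rwa [inner_sub_right, hzero, sub_zero] at h

section Matrices

variable {ι κ : Type*} [Fintype ι] [Fintype κ]

/-- The space `ℝ^{ι × κ}` of real matrices with the Frobenius inner product. -/
abbrev Mat (ι κ : Type*) : Type _ := EuclideanSpace ℝ (ι × κ)

/-- The sum of the entries of the row `i`. -/
def rowSum (x : Mat ι κ) (i : ι) : ℝ := ∑ j, x (i, j)

/-- The sum of the entries of the column `j`. -/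
def colSum (x : Mat ι κ) (j : κ) : ℝ := ∑ i, x (i, j)

/-- The sum of all entries of a matrix. -/
def total (x : Mat ι κ) : ℝ := ∑ k, x k

theorem sum_rowSum (x : Mat ι κ) : ∑ i, rowSum x i = total x := (Fintype.sum_prod_type _).symm

theorem sum_colSum (x : Mat ι κ) : ∑ j, colSum x j = total x :=
  (Fintype.sum_prod_type_right _).symm

theorem norm_le_total {x : Mat ι κ} (hx : ∀ k, 0 ≤ x k) :
    ‖x‖ ≤ total x := by
  refine abs_le_of_sq_le_sq' ?_ (Finset.sum_nonneg fun k _ ↦ hx k) |>.2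
  rw [EuclideanSpace.real_norm_sq_eq]
  exact Finset.sum_sq_le_sq_sum_of_nonneg fun k _ ↦ hx k

theorem abs_total_le (x : Mat ι ι) :
    |total x| ≤ Fintype.card ι * ‖x‖ := by
  refine abs_le_of_sq_le_sq ?_ (by positivity)
  rw [mul_pow, EuclideanSpace.real_norm_sq_eq]
  refine sq_sum_le_card_mul_sum_sq.trans_eq ?_
  simp [pow_two]

theorem inner_eq_sum_mul (x y : Mat ι κ) : ⟪x, y⟫ = ∑ k, x k * y k := by
  simp only [PiLp.inner_apply, RCLike.inner_apply, conj_trivial, mul_comm]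

/-- The matrices with entries `f i + g j`: the linear span of the cone `K` of the collapse. -/
def additive (ι κ : Type*) : Submodule ℝ (Mat ι κ) where
  carrier := {x | ∃ (f : ι → ℝ) (g : κ → ℝ), ∀ i j, x (i, j) = f i + g j}
  zero_mem' := ⟨0, 0, fun i j ↦ by simp⟩
  add_mem' := by
    rintro x y ⟨f, g, hx⟩ ⟨f', g', hy⟩
    refine ⟨f + f', g + g', fun i j ↦ ?_⟩
    simp only [PiLp.add_apply, hx, hy, Pi.add_apply]
    ring
  smul_mem' := by
    rintro c x ⟨f, g, hx⟩
    exact ⟨c • f, c • g, fun i j ↦ by simp [hx, mul_add]⟩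

theorem inner_eq_of_apply_eq_add (x : Mat ι κ) {y : Mat ι κ} {f : ι → ℝ} {g : κ → ℝ}
    (hy : ∀ i j, y (i, j) = f i + g j) :
    ⟪x, y⟫ = ∑ i, rowSum x i * f i + ∑ j, colSum x j * g j := by
  simp only [inner_eq_sum_mul, hy, mul_add, rowSum, colSum, Finset.sum_mul,
    Finset.sum_add_distrib, Fintype.sum_prod_type]
  rw [Finset.sum_comm (f := fun i j ↦ x (i, j) * g j)]

theorem starProjection_additive_apply (x : Mat ι κ) (i : ι) (j : κ) :
    (additive ι κ).starProjection x (i, j) = rowSum x i / Fintype.card κ +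
      (colSum x j / Fintype.card ι - total x / (Fintype.card ι * Fintype.card κ)) := by
  have : Nonempty ι := ⟨i⟩
  have : Nonempty κ := ⟨j⟩
  set f : ι → ℝ := fun i ↦ rowSum x i / Fintype.card κ with hf
  set g : κ → ℝ := fun j ↦
    colSum x j / Fintype.card ι - total x / (Fintype.card ι * Fintype.card κ) with hg
  let p : Mat ι κ := WithLp.toLp 2 fun k ↦ f k.1 + g k.2
  have hrow (i : ι) : rowSum (x - p) i = 0 := by
    have : rowSum (x - p) i = rowSum x i - (Fintype.card κ * f i + ∑ j, g j) := by
      simp [rowSum, p, Finset.sum_add_distrib]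
    rw [this]
    simp only [hf, hg, Finset.sum_sub_distrib, ← Finset.sum_div, sum_colSum, Finset.sum_const,
      Finset.card_univ, nsmul_eq_mul]
    field_simp
    ring
  have hcol (j : κ) : colSum (x - p) j = 0 := by
    have : colSum (x - p) j = colSum x j - (∑ i, f i + Fintype.card ι * g j) := by
      simp [colSum, p, Finset.sum_add_distrib]
    rw [this]
    simp only [hf, hg, ← Finset.sum_div, sum_rowSum]
    field_simp
    ring
  have hproj : (additive ι κ).starProjection x = p := by
    refine Submodule.eq_starProjection_of_mem_of_inner_eq_zero ⟨f, g, fun _ _ ↦ rfl⟩ ?_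
    rintro y ⟨f', g', hy⟩
    simp [inner_eq_of_apply_eq_add _ hy, hrow, hcol]
  rw [hproj]

theorem total_starProjection_additive (x : Mat ι κ) :
    total ((additive ι κ).starProjection x) = total x := by
  have h := Submodule.starProjection_inner_eq_zero (K := additive ι κ) x (WithLp.toLp 2 1)
    ⟨1, 0, fun _ _ ↦ by simp⟩
  rw [inner_eq_sum_mul] at h
  refine (sub_eq_zero.mp ?_).symm
  simpa [total] using h

theorem norm_starProjection_additive_sq (x : Mat ι κ) :
    ‖(additive ι κ).starProjection x‖ ^ 2 = (∑ i, rowSum x i ^ 2) / Fintype.card κ +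
      (∑ j, colSum x j ^ 2) / Fintype.card ι -
        total x ^ 2 / (Fintype.card ι * Fintype.card κ) := by
  have hinner : ‖(additive ι κ).starProjection x‖ ^ 2 = ⟪x, (additive ι κ).starProjection x⟫ := by
    rw [← real_inner_self_eq_norm_sq, eq_comm, ← sub_eq_zero, ← inner_sub_left]
    exact Submodule.starProjection_inner_eq_zero x _ (Submodule.starProjection_apply_mem _ x)
  rw [hinner, inner_eq_of_apply_eq_add x (starProjection_additive_apply x)]
  simp only [mul_sub, Finset.sum_sub_distrib, ← Finset.sum_mul, sum_colSum, Finset.sum_div]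
  simp only [pow_two, mul_div_assoc]
  ring

/-- The cone `K` of the state space collapse: nonnegative matrices of the form `f i + g j`. -/
def additiveCone (ι κ : Type*) [Fintype ι] [Fintype κ] : ProperCone ℝ (Mat ι κ) where
  carrier := {x | x ∈ additive ι κ ∧ ∀ k, 0 ≤ x k}
  zero_mem' := ⟨zero_mem _, fun _ ↦ le_rfl⟩
  add_mem' hx hy := ⟨add_mem hx.1 hy.1, fun k ↦ add_nonneg (hx.2 k) (hy.2 k)⟩
  smul_mem' c _ hx := ⟨Submodule.smul_mem _ (c : ℝ) hx.1, fun k ↦ mul_nonneg c.2 (hx.2 k)⟩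
  isClosed' := by
    have hnonneg : IsClosed {x : Mat ι κ | ∀ k, 0 ≤ x k} := by
      simp only [Set.ofPred_forall]
      exact isClosed_iInter fun k ↦ isClosed_le continuous_const (by fun_prop)
    exact (additive ι κ).closed_of_finiteDimensional.inter hnonneg

theorem norm_sub_starProjection_le_infDist (x : Mat ι κ) :
    ‖x - (additive ι κ).starProjection x‖ ≤ Metric.infDist x (additiveCone ι κ) := by
  refine (Metric.le_infDist (additiveCone ι κ).nonempty).mpr fun y hy ↦ ?_
  rw [dist_eq_norm, Submodule.starProjection_minimal]
  exact ciInf_le ⟨0, Set.forall_mem_range.mpr fun _ ↦ norm_nonneg _⟩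
    (⟨y, hy.1⟩ : additive ι κ)

theorem rowSum_nonpos_of_inner_additiveCone_nonpos {x : Mat ι κ}
    (hx : ∀ z ∈ additiveCone ι κ, ⟪x, z⟫ ≤ 0) (i : ι) : rowSum x i ≤ 0 := by
  classical
  have hz : WithLp.toLp 2 (fun k : ι × κ ↦ (Pi.single i 1 : ι → ℝ) k.1) ∈ additiveCone ι κ :=
    ⟨⟨Pi.single i 1, 0, fun _ _ ↦ by simp⟩, fun k ↦
      (Pi.single_nonneg.mpr zero_le_one : 0 ≤ (Pi.single i 1 : ι → ℝ)) k.1⟩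
  have h := hx _ hz
  rw [inner_eq_of_apply_eq_add x (f := Pi.single i 1) (g := 0) fun _ _ ↦ by simp] at h
  simpa [Pi.single_apply] using h

theorem colSum_nonpos_of_inner_additiveCone_nonpos {x : Mat ι κ}
    (hx : ∀ z ∈ additiveCone ι κ, ⟪x, z⟫ ≤ 0) (j : κ) : colSum x j ≤ 0 := by
  classical
  have hz : WithLp.toLp 2 (fun k : ι × κ ↦ (Pi.single j 1 : κ → ℝ) k.2) ∈ additiveCone ι κ :=
    ⟨⟨0, Pi.single j 1, fun _ _ ↦ by simp⟩, fun k ↦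
      (Pi.single_nonneg.mpr zero_le_one : 0 ≤ (Pi.single j 1 : κ → ℝ)) k.2⟩
  have h := hx _ hz
  rw [inner_eq_of_apply_eq_add x (f := 0) (g := Pi.single j 1) fun _ _ ↦ by simp] at h
  simpa [Pi.single_apply] using h

end Matrices

section MaxWeightOptimality

theorem exists_mem_doublyStochastic_ge {ι : Type*} [Fintype ι] [DecidableEq ι]
    {m : Matrix ι ι ℝ} (hm : ∀ i j, 0 ≤ m i j) (hrow : ∀ i, ∑ j, m i j ≤ 1)
    (hcol : ∀ j, ∑ i, m i j ≤ 1) : ∃ d ∈ doublyStochastic ℝ ι, ∀ i j, m i j ≤ d i j := by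
  set R : ι → ℝ := fun i ↦ 1 - ∑ j, m i j with hR
  set C : ι → ℝ := fun j ↦ 1 - ∑ i, m i j with hC
  have hR₀ (i : ι) : 0 ≤ R i := sub_nonneg.mpr (hrow i)
  have hC₀ (j : ι) : 0 ≤ C j := sub_nonneg.mpr (hcol j)
  have hRC : ∑ i, R i = ∑ j, C j := by
    simp only [hR, hC, Finset.sum_sub_distrib]
    rw [Finset.sum_comm]
  have hdeficit {D : ι → ℝ} (hD : ∀ i, 0 ≤ D i) (hsum : ∑ i, D i = ∑ j, C j) (i : ι) :
      D i * (∑ j, C j) / ∑ j, C j = D i := by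
    refine mul_div_cancel_of_imp fun h ↦ ?_
    exact (Finset.sum_eq_zero_iff_of_nonneg fun i _ ↦ hD i).mp (hsum.trans h) i (Finset.mem_univ i)
  have hcorr (i j : ι) : 0 ≤ R i * C j / ∑ j, C j :=
    div_nonneg (mul_nonneg (hR₀ i) (hC₀ j)) (Finset.sum_nonneg fun j _ ↦ hC₀ j)
  refine ⟨.of fun i j ↦ m i j + R i * C j / ∑ j, C j, ?_, fun i j ↦ ?_⟩
  · simp only [mem_doublyStochastic_iff_sum, Matrix.of_apply, Finset.sum_add_distrib,
      ← Finset.sum_div]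
    refine ⟨fun i j ↦ add_nonneg (hm i j) (hcorr i j), fun i ↦ ?_, fun j ↦ ?_⟩
    · rw [← Finset.mul_sum, hdeficit hR₀ hRC, add_sub_cancel]
    · rw [← Finset.sum_mul, hRC, mul_comm, hdeficit hC₀ rfl, add_sub_cancel]
  · exact le_add_of_nonneg_right (hcorr i j)

variable {n : ℕ} {sched : (Fin n → Fin n → ℕ) → Fin n → Fin n → ℕ}

theorem isPerm_of_mem_doublyStochastic {s : Matrix (Fin n) (Fin n) ℕ}
    (hs : s ∈ doublyStochastic ℕ (Fin n)) : IsPerm n s :=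
  ⟨fun _ _ ↦ le_one_of_mem_doublyStochastic hs, sum_row_of_mem_doublyStochastic hs,
    sum_col_of_mem_doublyStochastic hs⟩

theorem sum_mul_le_of_mem_doublyStochastic (hsched : IsMaxWeight n sched) (q : Fin n → Fin n → ℕ)
    {d : Matrix (Fin n) (Fin n) ℝ} (hd : d ∈ doublyStochastic ℝ (Fin n)) :
    ∑ i, ∑ j, q i j * d i j ≤ ∑ i, ∑ j, (q i j * sched q i j : ℝ) := by
  have hlin : IsLinearMap ℝ fun d : Matrix (Fin n) (Fin n) ℝ ↦ ∑ i, ∑ j, q i j * d i j :=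
    ⟨fun x y ↦ by simp only [Matrix.add_apply, mul_add, Finset.sum_add_distrib],
      fun c x ↦ by
        simp only [Matrix.smul_apply, smul_eq_mul, Finset.mul_sum, mul_left_comm]⟩
  have hsub : (doublyStochastic ℝ (Fin n) : Set (Matrix (Fin n) (Fin n) ℝ)) ⊆
      {d | ∑ i, ∑ j, q i j * d i j ≤ ∑ i, ∑ j, (q i j * sched q i j : ℝ)} := by
    rw [doublyStochastic_eq_convexHull_permMatrix]
    refine convexHull_min ?_ (convex_halfSpace_le hlin _)
    rintro _ ⟨σ, rfl⟩
    have h := (hsched q).2 _ (isPerm_of_mem_doublyStochastic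
      (permMatrix_mem_doublyStochastic (σ := σ)))
    have hcast (i j : Fin n) : σ.permMatrix ℝ i j = (σ.permMatrix ℕ i j : ℝ) := by
      simp [Equiv.Perm.permMatrix, PEquiv.toMatrix_apply]
    simp only [Set.mem_ofPred_eq, hcast]
    exact_mod_cast h
  exact hsub hd

/-- A matrix of natural numbers, viewed as a point of the Euclidean space of real matrices. -/
def vec {ι κ : Type*} (m : ι → κ → ℕ) : Mat ι κ := WithLp.toLp 2 fun k ↦ m k.1 k.2

theorem inner_vec_le_inner_vec_sched (hsched : IsMaxWeight n sched) (q : Fin n → Fin n → ℕ)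
    {m : Mat (Fin n) (Fin n)} (hm : ∀ k, 0 ≤ m k) (hrow : ∀ i, rowSum m i ≤ 1)
    (hcol : ∀ j, colSum m j ≤ 1) : ⟪vec q, m⟫ ≤ ⟪vec q, vec (sched q)⟫ := by
  obtain ⟨d, hd, hmd⟩ := exists_mem_doublyStochastic_ge (m := fun i j ↦ m (i, j))
    (fun i j ↦ hm (i, j)) hrow hcol
  simp only [inner_eq_sum_mul, Fintype.sum_prod_type, vec]
  refine le_trans ?_ (sum_mul_le_of_mem_doublyStochastic hsched q hd)
  gcongr with i _ j _
  exact hmd i j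

end MaxWeightOptimality

section BernoulliArrivals

variable {κ : Type*} [Fintype κ] {p : unitInterval}

/-- The law of a family of independent Bernoulli variables with parameter `p`. -/
noncomputable def bernoulliPi (κ : Type*) [Fintype κ] (p : unitInterval) : Measure (κ → Bool) :=
  .pi fun _ ↦ bernoulliMeasure true false p

instance : IsProbabilityMeasure (bernoulliPi κ p) :=
  inferInstanceAs (IsProbabilityMeasure (Measure.pi _))

theorem integral_comp_eval_bernoulliPi (f : Bool → ℝ) (k : κ) :
    ∫ ω, f (ω k) ∂bernoulliPi κ p = p * f true + (1 - p) * f false :=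
  (integral_comp_eval .of_discrete).trans (integral_bernoulliMeasure true false p f)

theorem variance_sum_toNat_bernoulliPi (s : Finset κ) :
    Var[∑ k ∈ s, fun ω ↦ ((ω k).toNat : ℝ); bernoulliPi κ p] = s.card * (p * (1 - p)) := by
  have hindep : iIndepFun (fun k (ω : κ → Bool) ↦ ((ω k).toNat : ℝ)) (bernoulliPi κ p) :=
    iIndepFun_pi (X := fun _ (b : Bool) ↦ (b.toNat : ℝ)) fun _ ↦ .of_discrete
  have hvar (k : κ) : Var[fun ω : κ → Bool ↦ ((ω k).toNat : ℝ); bernoulliPi κ p] =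
      p * (1 - p) := by
    rw [variance_eq_sub .of_discrete]
    simp only [Pi.pow_apply]
    rw [integral_comp_eval_bernoulliPi fun b ↦ (b.toNat : ℝ),
      integral_comp_eval_bernoulliPi fun b ↦ (b.toNat : ℝ) ^ 2]
    simp
    ring
  rw [IndepFun.variance_sum (fun _ _ ↦ .of_discrete) fun i _ j _ hij ↦ hindep.indepFun hij]
  simp [hvar]

theorem integral_sum_toNat_sub_sq_bernoulliPi (s : Finset κ) (c : ℝ) :
    ∫ ω, (∑ k ∈ s, ((ω k).toNat : ℝ) - c) ^ 2 ∂bernoulliPi κ p =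
      s.card * (p * (1 - p)) + (s.card * p - c) ^ 2 := by
  have hmean : ∫ ω, (∑ k ∈ s, ((ω k).toNat : ℝ) - c) ∂bernoulliPi κ p = s.card * p - c := by
    rw [integral_sub .of_finite .of_finite, integral_finsetSum _ fun _ _ ↦ .of_finite]
    simp [integral_comp_eval_bernoulliPi fun b ↦ (b.toNat : ℝ)]
  have hvar : Var[fun ω ↦ ∑ k ∈ s, ((ω k).toNat : ℝ) - c; bernoulliPi κ p] =
      s.card * (p * (1 - p)) := by
    rw [variance_sub_const .of_discrete, ← variance_sum_toNat_bernoulliPi s]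
    congr 1
    ext ω
    simp
  rw [variance_eq_sub .of_discrete, hmean] at hvar
  exact sub_eq_iff_eq_add.mp hvar

end BernoulliArrivals

section Dynamics

variable {n : ℕ} {q a s : Fin n → Fin n → ℕ}

theorem rowSum_vec (m : Fin n → Fin n → ℕ) (i : Fin n) : rowSum (vec m) i = ↑(∑ j, m i j) := by
  simp only [rowSum, vec, Nat.cast_sum]

theorem colSum_vec (m : Fin n → Fin n → ℕ) (j : Fin n) : colSum (vec m) j = ↑(∑ i, m i j) := by
  simp only [colSum, vec, Nat.cast_sum]

theorem total_vec_of_isPerm (hs : IsPerm n s) : total (vec s) = n := by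
  simp [← sum_rowSum, rowSum_vec, hs.2.1]

theorem inner_vec_of_isPerm (hs : IsPerm n s) {y : Mat (Fin n) (Fin n)}
    (hy : y ∈ additive (Fin n) (Fin n)) : ⟪y, vec s⟫ = total y / n := by
  obtain ⟨f, g, hfg⟩ := hy
  rw [real_inner_comm, inner_eq_of_apply_eq_add _ hfg]
  simp only [rowSum_vec, colSum_vec, hs.2.1, hs.2.2, total, Fintype.sum_prod_type, hfg,
    Finset.sum_add_distrib, Finset.sum_const, Finset.card_univ, Fintype.card_fin, nsmul_eq_mul,
    ← Finset.mul_sum, Nat.cast_one, one_mul]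
  obtain rfl | hn := eq_or_ne n 0
  · simp
  · field_simp

/-- The services that find an empty queue: the Skorokhod correction of the queue recursion. -/
def unused (q a s : Fin n → Fin n → ℕ) : Fin n → Fin n → ℕ := fun i j ↦ s i j - (q i j + a i j)

theorem vec_nextQ (q a s : Fin n → Fin n → ℕ) :
    vec (nextQ n q a s) = vec q + (vec a - vec s) + vec (unused q a s) := by
  ext k
  have h : nextQ n q a s k.1 k.2 + s k.1 k.2 = q k.1 k.2 + a k.1 k.2 + unused q a s k.1 k.2 := by
    simp only [nextQ, unused]
    omega
  have h' : (nextQ n q a s k.1 k.2 + s k.1 k.2 : ℝ) =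
    q k.1 k.2 + a k.1 k.2 + unused q a s k.1 k.2 := mod_cast h
  simp only [vec, PiLp.add_apply, PiLp.sub_apply]
  linarith

theorem inner_vec_nextQ_vec_unused (q a s : Fin n → Fin n → ℕ) :
    ⟪vec (nextQ n q a s), vec (unused q a s)⟫ = 0 := by
  rw [inner_eq_sum_mul]
  refine Finset.sum_eq_zero fun k _ ↦ mul_eq_zero.mpr ?_
  simp only [vec, Nat.cast_eq_zero, nextQ, unused]
  omega

theorem norm_vec_nextQ_sub_sq_le (q a s : Fin n → Fin n → ℕ) {y : Mat (Fin n) (Fin n)}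
    (hy : ∀ k, 0 ≤ y k) :
    ‖vec (nextQ n q a s) - y‖ ^ 2 ≤ ‖vec q - y + (vec a - vec s)‖ ^ 2 := by
  set u := vec (unused q a s) with hu
  have hdecomp : vec q - y + (vec a - vec s) = vec (nextQ n q a s) - y - u := by
    rw [vec_nextQ]
    abel
  have hyu : 0 ≤ ⟪y, u⟫ := by
    rw [inner_eq_sum_mul]
    exact Finset.sum_nonneg fun k _ ↦ mul_nonneg (hy k) (Nat.cast_nonneg _)
  rw [hdecomp, norm_sub_sq_real _ u, inner_sub_left, hu, inner_vec_nextQ_vec_unused, ← hu]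
  linarith [sq_nonneg ‖u‖]

theorem norm_vec_sub_vec_sq_le (ha : ∀ i j, a i j ≤ 1) (hs : ∀ i j, s i j ≤ 1) :
    ‖vec a - vec s‖ ^ 2 ≤ total (vec a) + total (vec s) := by
  rw [EuclideanSpace.real_norm_sq_eq, total, total, ← Finset.sum_add_distrib]
  refine Finset.sum_le_sum fun k _ ↦ ?_
  have ha' : (a k.1 k.2 : ℝ) ≤ 1 := mod_cast ha k.1 k.2
  have hs' : (s k.1 k.2 : ℝ) ≤ 1 := mod_cast hs k.1 k.2
  have ha₀ : (0 : ℝ) ≤ a k.1 k.2 := Nat.cast_nonneg _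
  have hs₀ : (0 : ℝ) ≤ s k.1 k.2 := Nat.cast_nonneg _
  simp only [vec, PiLp.sub_apply]
  nlinarith [mul_nonneg ha₀ hs₀]

theorem norm_vec_sub_vec_le (ha : ∀ i j, a i j ≤ 1) (hs : ∀ i j, s i j ≤ 1) :
    ‖vec a - vec s‖ ≤ n := by
  refine abs_le_of_sq_le_sq' ?_ n.cast_nonneg |>.2
  rw [EuclideanSpace.real_norm_sq_eq]
  calc ∑ k, (vec a - vec s) k ^ 2 ≤ ∑ _ : Fin n × Fin n, (1 : ℝ) := by
        refine Finset.sum_le_sum fun k _ ↦ (sq_le_one_iff_abs_le_one _).mpr ?_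
        have ha' : (a k.1 k.2 : ℝ) ≤ 1 := mod_cast ha k.1 k.2
        have hs' : (s k.1 k.2 : ℝ) ≤ 1 := mod_cast hs k.1 k.2
        simp only [vec, PiLp.sub_apply]
        exact abs_sub_le_of_nonneg_of_le (Nat.cast_nonneg _) ha' (Nat.cast_nonneg _) hs'
    _ = (n : ℝ) ^ 2 := by simp [pow_two]

end Dynamics

section Drift

variable {n : ℕ} {sched : (Fin n → Fin n → ℕ) → Fin n → Fin n → ℕ} {p : unitInterval}

/-- The arrival matrix encoded by the family `ω` of Bernoulli variables. -/
def arrival (ω : Fin n × Fin n → Bool) : Fin n → Fin n → ℕ := fun i j ↦ (ω (i, j)).toNat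

/-- One time slot of the switch, as a random map driven by the arrivals `ω`. -/
def step (sched : (Fin n → Fin n → ℕ) → Fin n → Fin n → ℕ) (q : Fin n → Fin n → ℕ)
    (ω : Fin n × Fin n → Bool) : Fin n → Fin n → ℕ :=
  nextQ n q (arrival ω) (sched q)

theorem arrival_le_one (ω : Fin n × Fin n → Bool) (i j : Fin n) : arrival ω i j ≤ 1 :=
  Bool.toNat_le _

theorem integral_inner_vec_arrival (z : Mat (Fin n) (Fin n)) :
    ∫ ω, ⟪z, vec (arrival ω)⟫ ∂bernoulliPi _ p = p * total z := by
  simp only [inner_eq_sum_mul, vec, arrival]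
  rw [integral_finsetSum _ fun _ _ ↦ .of_finite]
  simp only [integral_const_mul, integral_comp_eval_bernoulliPi fun b ↦ (b.toNat : ℝ), total,
    Finset.mul_sum]
  simp [mul_comm]

theorem integral_total_vec_arrival :
    ∫ ω : Fin n × Fin n → Bool, total (vec (arrival ω)) ∂bernoulliPi _ p = n ^ 2 * p := by
  simp only [total, vec, arrival]
  rw [integral_finsetSum _ fun _ _ ↦ .of_finite]
  simp [integral_comp_eval_bernoulliPi fun b ↦ (b.toNat : ℝ), pow_two]

theorem integral_inner_vec_arrival_sub_vec (z : Mat (Fin n) (Fin n)) (s : Fin n → Fin n → ℕ) :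
    ∫ ω, ⟪z, vec (arrival ω) - vec s⟫ ∂bernoulliPi _ p = p * total z - ⟪z, vec s⟫ := by
  simp only [inner_sub_right]
  rw [integral_sub .of_finite .of_finite, integral_inner_vec_arrival]
  simp

theorem integral_norm_vec_step_sub_sq_le (hsched : IsMaxWeight n sched) (hp : n * (p : ℝ) ≤ 1)
    (q : Fin n → Fin n → ℕ) {y : Mat (Fin n) (Fin n)} (hy : ∀ k, 0 ≤ y k) :
    ∫ ω, ‖vec (step sched q ω) - y‖ ^ 2 ∂bernoulliPi _ p ≤
      ‖vec q - y‖ ^ 2 + 2 * (p * total (vec q - y) - ⟪vec q - y, vec (sched q)⟫) + 2 * n := by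
  have hnorm (ω : Fin n × Fin n → Bool) :
      ‖vec (step sched q ω) - y‖ ^ 2 ≤ ‖vec q - y‖ ^ 2 +
        2 * ⟪vec q - y, vec (arrival ω) - vec (sched q)⟫ + (total (vec (arrival ω)) + n) := by
    refine (norm_vec_nextQ_sub_sq_le q (arrival ω) (sched q) hy).trans ?_
    rw [norm_add_sq_real, ← total_vec_of_isPerm (hsched q).1]
    gcongr
    exact norm_vec_sub_vec_sq_le (arrival_le_one ω) (hsched q).1.1
  calc ∫ ω, ‖vec (step sched q ω) - y‖ ^ 2 ∂bernoulliPi _ p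
      ≤ ∫ ω, (‖vec q - y‖ ^ 2 + 2 * ⟪vec q - y, vec (arrival ω) - vec (sched q)⟫ +
          (total (vec (arrival ω)) + n)) ∂bernoulliPi _ p :=
        integral_mono .of_finite .of_finite hnorm
    _ = ‖vec q - y‖ ^ 2 + 2 * (p * total (vec q - y) - ⟪vec q - y, vec (sched q)⟫) +
          (n * (n * p) + n) := by
        simp only [integral_add .of_finite .of_finite, integral_const_mul,
          integral_inner_vec_arrival_sub_vec, integral_total_vec_arrival, integral_const,
          probReal_univ, one_smul]
        ring
    _ ≤ _ := by linarith [mul_le_mul_of_nonneg_left hp n.cast_nonneg]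

theorem norm_vec_step_sub_le (hsched : IsMaxWeight n sched) (q : Fin n → Fin n → ℕ)
    (ω : Fin n × Fin n → Bool) : ‖vec (step sched q ω) - vec q‖ ≤ n := by
  have h := norm_vec_nextQ_sub_sq_le q (arrival ω) (sched q) (y := vec q)
    fun k ↦ Nat.cast_nonneg _
  rw [sub_self, zero_add] at h
  exact (abs_le_of_sq_le_sq' h (norm_nonneg _)).2.trans
    (norm_vec_sub_vec_le (arrival_le_one ω) (hsched q).1.1)

theorem integral_infDist_pow_le (hsched : IsMaxWeight n sched) (hn : 0 < n)
    (hp : n * (p : ℝ) ≤ 1) {π : Measure (Fin n → Fin n → ℕ)} [IsProbabilityMeasure π]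
    (hπ : MeasurePreserving (Function.uncurry (step sched)) (π.prod (bernoulliPi _ p)) π)
    {C : Set (Mat (Fin n) (Fin n))} (hC : ∀ y ∈ C, ∀ k, 0 ≤ y k) {β : ℝ} (hβ : 0 < β) (hβ8 : β ≤ 8)
    (hdrift : ∀ q, ∃ y ∈ C, ‖vec q - y‖ = Metric.infDist (vec q) C ∧
      p * total (vec q - y) - ⟪vec q - y, vec (sched q)⟫ ≤ -β * ‖vec q - y‖) (r : ℕ) :
    Integrable (fun q ↦ Metric.infDist (vec q) C ^ r) π ∧
      ∫ q, Metric.infDist (vec q) C ^ r ∂π ≤ r.factorial * (8 * n / β) ^ r * (16 / 3) := by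
  have hlip (q q' : Fin n → Fin n → ℕ) :
      |Metric.infDist (vec q') C - Metric.infDist (vec q) C| ≤ ‖vec q' - vec q‖ := by
    rw [← dist_eq_norm, ← Real.dist_eq]
    exact (Metric.lipschitz_infDist_pt C).dist_le_mul _ _ |>.trans_eq (by simp)
  refine integral_pow_le_of_drift hπ .of_discrete (fun q ↦ Metric.infDist_nonneg)
    (Nat.cast_pos.mpr hn) hβ hβ8
    (fun q ω ↦ (hlip q _).trans (norm_vec_step_sub_le hsched q ω)) (fun q ↦ ?_) (fun q ↦ ?_) r
  · calc ∫ ω, (Metric.infDist (vec (step sched q ω)) C - Metric.infDist (vec q) C) ^ 2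
            ∂bernoulliPi _ p
        ≤ ∫ ω, ‖vec (step sched q ω) - vec q‖ ^ 2 ∂bernoulliPi _ p :=
          integral_mono .of_finite .of_finite fun ω ↦
            sq_le_sq.mpr ((hlip q _).trans (le_abs_self _))
      _ ≤ 2 * n := by
          simpa [total] using integral_norm_vec_step_sub_sq_le hsched hp q (y := vec q)
            fun k ↦ Nat.cast_nonneg _
  · obtain ⟨y, hyC, hy, hle⟩ := hdrift q
    calc ∫ ω, Metric.infDist (vec (step sched q ω)) C ^ 2 ∂bernoulliPi _ p
        ≤ ∫ ω, ‖vec (step sched q ω) - y‖ ^ 2 ∂bernoulliPi _ p := by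
          refine integral_mono .of_finite .of_finite fun ω ↦ ?_
          have := Metric.infDist_le_dist_of_mem (x := vec (step sched q ω)) hyC
          rw [dist_eq_norm] at this
          exact pow_le_pow_left₀ Metric.infDist_nonneg this 2
      _ ≤ _ := integral_norm_vec_step_sub_sq_le hsched hp q (hC y hyC)
      _ ≤ _ := by rw [← hy]; linarith

end Drift

section Collapse

variable {n : ℕ} {sched : (Fin n → Fin n → ℕ) → Fin n → Fin n → ℕ} {p : unitInterval} {ε : ℝ}

theorem total_div_add_inner_div_le_inner_vec_sched (hsched : IsMaxWeight n sched)
    (q : Fin n → Fin n → ℕ) {x : Mat (Fin n) (Fin n)} (hrow : ∀ i, rowSum x i ≤ 0)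
    (hcol : ∀ j, colSum x j ≤ 0) :
    total (vec q) / n + ⟪vec q, x⟫ / (n * ‖x‖) ≤ ⟪vec q, vec (sched q)⟫ := by
  -- Tilting the uniform schedule `1 / n` towards `x` keeps all row and column sums at most `1`.
  let m : Mat (Fin n) (Fin n) := WithLp.toLp 2 fun k ↦ (n : ℝ)⁻¹ + x k * (n * ‖x‖)⁻¹
  have hm (k : Fin n × Fin n) : 0 ≤ m k := by
    have hk : |x k / ‖x‖| ≤ 1 := by
      rw [abs_div, abs_norm]
      exact div_le_one_of_le₀ (PiLp.norm_apply_le x k) (norm_nonneg x)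
    have : m k = (n : ℝ)⁻¹ * (1 + x k / ‖x‖) := by simp only [m, mul_inv]; ring
    rw [this]
    exact mul_nonneg (by positivity) (by linarith [neg_le_of_abs_le hk])
  have hc : 0 ≤ (n * ‖x‖)⁻¹ := by positivity
  have hmrow (i : Fin n) : rowSum m i ≤ 1 :=
    calc rowSum m i = n * (n : ℝ)⁻¹ + rowSum x i * (n * ‖x‖)⁻¹ := by
          simp only [rowSum, m, Finset.sum_add_distrib, Finset.sum_mul]; simp
      _ ≤ 1 := by
          linarith [mul_nonpos_of_nonpos_of_nonneg (hrow i) hc, mul_inv_le_one (a := (n : ℝ))]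
  have hmcol (j : Fin n) : colSum m j ≤ 1 :=
    calc colSum m j = n * (n : ℝ)⁻¹ + colSum x j * (n * ‖x‖)⁻¹ := by
          simp only [colSum, m, Finset.sum_add_distrib, Finset.sum_mul]; simp
      _ ≤ 1 := by
          linarith [mul_nonpos_of_nonpos_of_nonneg (hcol j) hc, mul_inv_le_one (a := (n : ℝ))]
  calc total (vec q) / n + ⟪vec q, x⟫ / (n * ‖x‖) = ⟪vec q, m⟫ := by
        simp only [inner_eq_sum_mul, m, total, mul_add, Finset.sum_add_distrib, Finset.sum_mul,
          div_eq_mul_inv, mul_assoc]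
    _ ≤ ⟪vec q, vec (sched q)⟫ := inner_vec_le_inner_vec_sched hsched q hm hmrow hmcol

theorem drift_vec_le (hsched : IsMaxWeight n sched) (hp : n * (p : ℝ) = 1 - ε) (hε : 0 ≤ ε)
    (q : Fin n → Fin n → ℕ) :
    p * total (vec q) - ⟪vec q, vec (sched q)⟫ ≤ -(ε / n) * ‖vec q‖ := by
  have hmax := total_div_add_inner_div_le_inner_vec_sched hsched q (x := 0)
    (fun _ ↦ by simp [rowSum]) (fun _ ↦ by simp [colSum])
  rw [inner_zero_right, zero_div, add_zero] at hmax
  obtain rfl | hn := n.eq_zero_or_pos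
  · simp [Subsingleton.elim (vec q) 0, total]
  have hpn : (p : ℝ) = 1 / n - ε / n := by field_simp; linarith
  calc p * total (vec q) - ⟪vec q, vec (sched q)⟫
      ≤ p * total (vec q) - total (vec q) / n := by gcongr
    _ = -(ε / n) * total (vec q) := by rw [hpn]; ring
    _ ≤ -(ε / n) * ‖vec q‖ := by
        rw [neg_mul, neg_mul, neg_le_neg_iff]
        gcongr
        exact norm_le_total fun _ ↦ Nat.cast_nonneg _

theorem total_div_sub_inner_vec_sched_le (hsched : IsMaxWeight n sched) (q : Fin n → Fin n → ℕ)
    {y : Mat (Fin n) (Fin n)} (hy : y ∈ additive (Fin n) (Fin n)) (horth : ⟪vec q - y, y⟫ = 0)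
    (hpolar : ∀ z ∈ additiveCone (Fin n) (Fin n), ⟪vec q - y, z⟫ ≤ 0) :
    total (vec q - y) / n - ⟪vec q - y, vec (sched q)⟫ ≤ -(‖vec q - y‖ / n) := by
  have hmax := total_div_add_inner_div_le_inner_vec_sched hsched q
    (rowSum_nonpos_of_inner_additiveCone_nonpos hpolar)
    (colSum_nonpos_of_inner_additiveCone_nonpos hpolar)
  have hself : ⟪vec q, vec q - y⟫ = ‖vec q - y‖ ^ 2 := by
    rw [← real_inner_self_eq_norm_sq, ← sub_eq_zero, ← inner_sub_left, sub_sub_cancel,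
      real_inner_comm, horth]
  have hnorm : ‖vec q - y‖ ^ 2 / (n * ‖vec q - y‖) = ‖vec q - y‖ / n := by
    rw [pow_two, mul_div_mul_comm, div_mul_eq_mul_div, mul_div_assoc', mul_self_div_self]
  have hsplit : total (vec q - y) = total (vec q) - total y := by
    simp only [total, PiLp.sub_apply, Finset.sum_sub_distrib]
  rw [hself, hnorm] at hmax
  rw [hsplit, inner_sub_left, inner_vec_of_isPerm (hsched q).1 hy, sub_div]
  linarith

theorem drift_vec_sub_le (hsched : IsMaxWeight n sched) (hn : 0 < n) (hp : n * (p : ℝ) = 1 - ε)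
    (hε₀ : 0 ≤ ε) (hε : ε ≤ 1 / (2 * n)) (q : Fin n → Fin n → ℕ) {y : Mat (Fin n) (Fin n)}
    (hy : y ∈ additive (Fin n) (Fin n)) (horth : ⟪vec q - y, y⟫ = 0)
    (hpolar : ∀ z ∈ additiveCone (Fin n) (Fin n), ⟪vec q - y, z⟫ ≤ 0) :
    p * total (vec q - y) - ⟪vec q - y, vec (sched q)⟫ ≤ -(1 / (2 * n)) * ‖vec q - y‖ := by
  have hpn : (p : ℝ) = 1 / n - ε / n := by field_simp; linarith
  have htotal := abs_total_le (vec q - y)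
  rw [Fintype.card_fin] at htotal
  calc p * total (vec q - y) - ⟪vec q - y, vec (sched q)⟫
      = total (vec q - y) / n - ⟪vec q - y, vec (sched q)⟫ + ε / n * -total (vec q - y) := by
        rw [hpn]; ring
    _ ≤ -(‖vec q - y‖ / n) + ε / n * (n * ‖vec q - y‖) := by
        gcongr
        · exact total_div_sub_inner_vec_sched_le hsched q hy horth hpolar
        · exact (neg_le_abs _).trans htotal
    _ = -(‖vec q - y‖ / n) + ε * ‖vec q - y‖ := by field_simp
    _ ≤ -(‖vec q - y‖ / n) + 1 / (2 * n) * ‖vec q - y‖ := by gcongr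
    _ = -(1 / (2 * n)) * ‖vec q - y‖ := by field_simp; ring

variable {π : Measure (Fin n → Fin n → ℕ)} [IsProbabilityMeasure π]

theorem integrable_norm_vec_pow (hsched : IsMaxWeight n sched) (hn : 0 < n)
    (hp : n * (p : ℝ) = 1 - ε) (hε₀ : 0 < ε)
    (hπ : MeasurePreserving (Function.uncurry (step sched)) (π.prod (bernoulliPi _ p)) π) (r : ℕ) :
    Integrable (fun q ↦ ‖vec q‖ ^ r) π := by
  have hε₁ : ε ≤ 1 := by linarith [mul_nonneg n.cast_nonneg p.2.1]
  have hβ8 : ε / n ≤ 8 :=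
    (div_le_self hε₀.le (Nat.one_le_cast.mpr hn)).trans (hε₁.trans (by norm_num))
  have h := (integral_infDist_pow_le hsched hn (by linarith) hπ (C := {0}) (by simp)
    (by positivity) hβ8 (fun q ↦ ⟨0, by simp, by simp, by
      simpa only [sub_zero] using drift_vec_le hsched hp hε₀.le q⟩) r).1
  simpa only [Metric.infDist_singleton, dist_zero_right] using h

theorem integral_infDist_additiveCone_pow_le (hsched : IsMaxWeight n sched) (hn : 0 < n)
    (hp : n * (p : ℝ) = 1 - ε) (hε₀ : 0 ≤ ε) (hε : ε ≤ 1 / (2 * n))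
    (hπ : MeasurePreserving (Function.uncurry (step sched)) (π.prod (bernoulliPi _ p)) π) (r : ℕ) :
    Integrable (fun q ↦ Metric.infDist (vec q) (additiveCone (Fin n) (Fin n)) ^ r) π ∧
      ∫ q, Metric.infDist (vec q) (additiveCone (Fin n) (Fin n)) ^ r ∂π ≤
        r.factorial * (16 * n ^ 2) ^ r * (16 / 3) := by
  have hβ8 : 1 / (2 * n : ℝ) ≤ 8 := by
    have : (1 : ℝ) ≤ n := mod_cast hn
    rw [div_le_iff₀ (by positivity)]
    linarith
  have hconst : 8 * n / (1 / (2 * n)) = (16 * n ^ 2 : ℝ) := by field_simp; norm_num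
  rw [← hconst]
  refine integral_infDist_pow_le hsched hn (by linarith) hπ (fun y hy ↦ hy.2) (by positivity)
    hβ8 (fun q ↦ ?_) r
  obtain ⟨y, hy, hdist, horth, hpolar⟩ :=
    exists_mem_properCone_norm_sub_eq_infDist (additiveCone (Fin n) (Fin n)) (vec q)
  exact ⟨y, hy, hdist, drift_vec_sub_le hsched hn hp hε₀ hε q hy.1 horth hpolar⟩

end Collapse

section DriftBalance

variable {n : ℕ} {q a s u : Fin n → Fin n → ℕ}

theorem isSchedule_unused (q a : Fin n → Fin n → ℕ) (hs : IsPerm n s) :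
    IsSchedule n (unused q a s) :=
  ⟨fun i j ↦ (Nat.sub_le _ _).trans (hs.1 i j),
    fun i ↦ (Finset.sum_le_sum fun _ _ ↦ Nat.sub_le _ _).trans (hs.2.1 i).le,
    fun j ↦ (Finset.sum_le_sum fun _ _ ↦ Nat.sub_le _ _).trans (hs.2.2 j).le⟩

theorem natCast_sq_eq_of_le_one {m : ℕ} (hm : m ≤ 1) : (m : ℝ) ^ 2 = m := by
  interval_cases m <;> simp

theorem norm_vec_sq_of_le_one (hu : ∀ i j, u i j ≤ 1) : ‖vec u‖ ^ 2 = total (vec u) := by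
  rw [EuclideanSpace.real_norm_sq_eq]
  exact Finset.sum_congr rfl fun k _ ↦ natCast_sq_eq_of_le_one (hu k.1 k.2)

theorem norm_vec_eq_zero_or_one_le (m : Fin n → Fin n → ℕ) : ‖vec m‖ = 0 ∨ 1 ≤ ‖vec m‖ := by
  rw [norm_eq_zero, or_iff_not_imp_left]
  intro hne
  obtain ⟨k, hk⟩ : ∃ k, vec m k ≠ 0 := by
    by_contra! h
    exact hne (by ext k; exact h k)
  calc (1 : ℝ) ≤ vec m k := Nat.one_le_cast.mpr (Nat.one_le_iff_ne_zero.mpr fun h ↦ hk (by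
        simp [vec, h]))
    _ ≤ ‖vec m k‖ := le_abs_self _
    _ ≤ ‖vec m‖ := PiLp.norm_apply_le _ k

theorem abs_norm_starProjection_vec_sq_sub_le (hu : IsSchedule n u) :
    |‖(additive (Fin n) (Fin n)).starProjection (vec u)‖ ^ 2 - 3 / 2 * (total (vec u) / n)| ≤
      1 / 2 * (total (vec u) / n) := by
  have hrow : ∑ i, rowSum (vec u) i ^ 2 = total (vec u) := by
    rw [← sum_rowSum]
    simp only [rowSum_vec, natCast_sq_eq_of_le_one (hu.2.1 _)]
  have hcol : ∑ j, colSum (vec u) j ^ 2 = total (vec u) := by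
    rw [← sum_colSum]
    simp only [colSum_vec, natCast_sq_eq_of_le_one (hu.2.2 _)]
  have htotal : total (vec u) ≤ n := by
    rw [← sum_rowSum]
    refine (Finset.sum_le_card_nsmul _ _ 1 fun i _ ↦ ?_).trans_eq (by simp)
    rw [rowSum_vec]
    exact mod_cast hu.2.1 i
  have htotal₀ : 0 ≤ total (vec u) := Finset.sum_nonneg fun _ _ ↦ Nat.cast_nonneg _
  have hquad : total (vec u) / n * (total (vec u) / n) ≤ total (vec u) / n :=
    mul_le_of_le_one_right (by positivity) (div_le_one_of_le₀ htotal n.cast_nonneg)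
  have hquad₀ : 0 ≤ total (vec u) / n * (total (vec u) / n) := by positivity
  rw [norm_starProjection_additive_sq, hrow, hcol, Fintype.card_fin, pow_two, mul_div_mul_comm,
    abs_le]
  constructor <;> linarith

theorem abs_inner_starProjection_vec_nextQ_le (q a : Fin n → Fin n → ℕ) (hs : IsPerm n s) {K : ℝ}
    (hK : 0 < K) {r : ℕ} (hr : 2 ≤ r) :
    |⟪(additive (Fin n) (Fin n)).starProjection (vec (nextQ n q a s)), vec (unused q a s)⟫| ≤
      K * total (vec (unused q a s)) +
        Metric.infDist (vec (nextQ n q a s)) (additiveCone (Fin n) (Fin n)) ^ r / K ^ (r - 1) := by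
  set x := vec (nextQ n q a s)
  set P := (additive (Fin n) (Fin n)).starProjection
  set u := vec (unused q a s) with hu
  have hx : ⟪x, u⟫ = 0 := inner_vec_nextQ_vec_unused q a s
  calc |⟪P x, u⟫| = |⟪x - P x, u⟫| := by rw [inner_sub_left, hx, zero_sub, abs_neg]
    _ ≤ ‖x - P x‖ * ‖u‖ := abs_real_inner_le_norm _ _
    _ ≤ Metric.infDist x (additiveCone (Fin n) (Fin n)) * ‖u‖ := by
        gcongr
        exact norm_sub_starProjection_le_infDist x
    _ ≤ _ := by
        rw [hu, ← norm_vec_sq_of_le_one (isSchedule_unused q a hs).1]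
        exact mul_le_mul_sq_add_pow_div_pow Metric.infDist_nonneg hK
          (norm_vec_eq_zero_or_one_le _) hr

theorem abs_norm_starProjection_vec_nextQ_sq_sub_le (q a : Fin n → Fin n → ℕ) (hs : IsPerm n s)
    {K : ℝ} (hK : 0 < K) {r : ℕ} (hr : 2 ≤ r) {P : Mat (Fin n) (Fin n) →L[ℝ] Mat (Fin n) (Fin n)}
    (hP : P = (additive (Fin n) (Fin n)).starProjection) :
    |‖P (vec (nextQ n q a s))‖ ^ 2 - ‖P (vec q)‖ ^ 2 - 2 * ⟪P (vec q), vec a - vec s⟫ -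
        ‖P (vec a - vec s)‖ ^ 2 + 3 / 2 * (total (vec (unused q a s)) / n)| ≤
      (2 * K + 1 / (2 * n)) * total (vec (unused q a s)) + 2 / K ^ (r - 1) *
        Metric.infDist (vec (nextQ n q a s)) (additiveCone (Fin n) (Fin n)) ^ r := by
  have hcross := abs_inner_starProjection_vec_nextQ_le q a hs hK hr
  have hquad := abs_norm_starProjection_vec_sq_sub_le (isSchedule_unused q a hs)
  rw [← hP] at hcross hquad
  set u := vec (unused q a s)
  set α := vec a - vec s
  set x := vec (nextQ n q a s)
  have hsymm (y z : Mat (Fin n) (Fin n)) : ⟪P y, P z⟫ = ⟪P y, z⟫ := by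
    rw [hP, Submodule.inner_starProjection_left_eq_right,
      Submodule.starProjection_eq_self_iff.mpr (Submodule.starProjection_apply_mem _ _),
      ← Submodule.inner_starProjection_left_eq_right]
  have hexpand : ‖P x - P u‖ ^ 2 = ‖P (vec q) + P α‖ ^ 2 := by
    rw [← map_sub, ← map_add, sub_eq_of_eq_add (vec_nextQ q a s)]
  rw [norm_sub_sq_real, norm_add_sq_real, hsymm, hsymm] at hexpand
  calc _ = |2 * ⟪P x, u⟫ - (‖P u‖ ^ 2 - 3 / 2 * (total u / n))| := by
        congr 1
        linarith
    _ ≤ 2 * |⟪P x, u⟫| + |‖P u‖ ^ 2 - 3 / 2 * (total u / n)| :=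
        (abs_sub _ _).trans_eq (by rw [abs_mul, abs_two])
    _ ≤ 2 * (K * total u + Metric.infDist x (additiveCone (Fin n) (Fin n)) ^ r / K ^ (r - 1)) +
          1 / 2 * (total u / n) := by gcongr
    _ = _ := by ring

end DriftBalance

section SteadyState

variable {n : ℕ} {sched : (Fin n → Fin n → ℕ) → Fin n → Fin n → ℕ} {s : Fin n → Fin n → ℕ}
  {p : unitInterval} {ε : ℝ}

theorem integral_rowSum_vec_arrival_sub_sq (hs : IsPerm n s) (i : Fin n) :
    ∫ ω, rowSum (vec (arrival ω) - vec s) i ^ 2 ∂bernoulliPi _ p =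
      n * (p * (1 - p)) + (n * p - 1) ^ 2 := by
  have hsum (ω : Fin n × Fin n → Bool) : rowSum (vec (arrival ω) - vec s) i =
      ∑ k ∈ {i} ×ˢ Finset.univ, ((ω k).toNat : ℝ) - 1 := by
    have h := rowSum_vec s i
    rw [hs.2.1 i, Nat.cast_one] at h
    rw [Finset.sum_product, Finset.sum_singleton, ← h]
    exact Finset.sum_sub_distrib _ _
  simp only [hsum, integral_sum_toNat_sub_sq_bernoulliPi, Finset.card_product,
    Finset.card_singleton, Finset.card_univ, Fintype.card_fin, one_mul]

theorem integral_colSum_vec_arrival_sub_sq (hs : IsPerm n s) (j : Fin n) :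
    ∫ ω, colSum (vec (arrival ω) - vec s) j ^ 2 ∂bernoulliPi _ p =
      n * (p * (1 - p)) + (n * p - 1) ^ 2 := by
  have hsum (ω : Fin n × Fin n → Bool) : colSum (vec (arrival ω) - vec s) j =
      ∑ k ∈ Finset.univ ×ˢ {j}, ((ω k).toNat : ℝ) - 1 := by
    have h := colSum_vec s j
    rw [hs.2.2 j, Nat.cast_one] at h
    rw [Finset.sum_product_right, Finset.sum_singleton, ← h]
    exact Finset.sum_sub_distrib _ _
  simp only [hsum, integral_sum_toNat_sub_sq_bernoulliPi, Finset.card_product,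
    Finset.card_singleton, Finset.card_univ, Fintype.card_fin, mul_one]

theorem integral_total_vec_arrival_sub_sq (hs : IsPerm n s) :
    ∫ ω, total (vec (arrival ω) - vec s) ^ 2 ∂bernoulliPi _ p =
      n ^ 2 * (p * (1 - p)) + (n * (n * p - 1)) ^ 2 := by
  have hsum (ω : Fin n × Fin n → Bool) : total (vec (arrival ω) - vec s) =
      ∑ k, ((ω k).toNat : ℝ) - n := by
    rw [← total_vec_of_isPerm hs]
    exact Finset.sum_sub_distrib _ _
  simp only [hsum, integral_sum_toNat_sub_sq_bernoulliPi, Finset.card_univ, Fintype.card_prod,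
    Fintype.card_fin, Nat.cast_mul]
  ring

theorem integral_norm_starProjection_vec_arrival_sub_sq (hn : 0 < n) (hs : IsPerm n s) :
    ∫ ω, ‖(additive (Fin n) (Fin n)).starProjection (vec (arrival ω) - vec s)‖ ^ 2
      ∂bernoulliPi _ p = (2 * n - 1) * (p * (1 - p)) + (n * p - 1) ^ 2 := by
  simp only [norm_starProjection_additive_sq]
  rw [integral_sub .of_finite .of_finite, integral_add .of_finite .of_finite]
  simp only [integral_div]
  rw [integral_finsetSum _ fun _ _ ↦ .of_finite, integral_finsetSum _ fun _ _ ↦ .of_finite]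
  simp only [integral_rowSum_vec_arrival_sub_sq hs, integral_colSum_vec_arrival_sub_sq hs,
    integral_total_vec_arrival_sub_sq hs, Finset.sum_const, Finset.card_univ, Fintype.card_fin,
    nsmul_eq_mul]
  field_simp
  ring

theorem integral_inner_starProjection_vec_arrival_sub (hn : 0 < n) (hs : IsPerm n s)
    (hp : n * (p : ℝ) = 1 - ε) (x : Mat (Fin n) (Fin n)) :
    ∫ ω, ⟪(additive (Fin n) (Fin n)).starProjection x, vec (arrival ω) - vec s⟫
      ∂bernoulliPi _ p = -(ε / n * total x) := by
  have hpn : (p : ℝ) = 1 / n - ε / n := by field_simp; linarith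
  rw [integral_inner_vec_arrival_sub_vec,
    inner_vec_of_isPerm hs (Submodule.starProjection_apply_mem _ _),
    total_starProjection_additive, hpn]
  ring

theorem integral_total_vec_unused (hsched : IsMaxWeight n sched) (hp : n * (p : ℝ) = 1 - ε)
    (q : Fin n → Fin n → ℕ) :
    ∫ ω, total (vec (unused q (arrival ω) (sched q))) ∂bernoulliPi _ p =
      ∫ ω, total (vec (step sched q ω)) ∂bernoulliPi _ p - total (vec q) + n * ε := by
  have hbalance (ω : Fin n × Fin n → Bool) : total (vec (unused q (arrival ω) (sched q))) =
      total (vec (step sched q ω)) - total (vec q) - total (vec (arrival ω)) + n := by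
    rw [step, vec_nextQ, ← total_vec_of_isPerm (hsched q).1]
    simp only [total, PiLp.add_apply, PiLp.sub_apply, Finset.sum_add_distrib,
      Finset.sum_sub_distrib]
    ring
  simp only [hbalance]
  rw [integral_add .of_finite .of_finite, integral_sub .of_finite .of_finite,
    integral_sub .of_finite .of_finite, integral_total_vec_arrival]
  simp only [integral_const, probReal_univ, one_smul]
  linear_combination (-n : ℝ) * hp

theorem abs_integral_norm_starProjection_vec_step_sq_sub_le (hsched : IsMaxWeight n sched)
    (hn : 0 < n) (hp : n * (p : ℝ) = 1 - ε) (q : Fin n → Fin n → ℕ) {K : ℝ} (hK : 0 < K) {r : ℕ}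
    (hr : 2 ≤ r) {P : Mat (Fin n) (Fin n) →L[ℝ] Mat (Fin n) (Fin n)}
    (hP : P = (additive (Fin n) (Fin n)).starProjection) {U : ℝ}
    (hU : U = ∫ ω, total (vec (unused q (arrival ω) (sched q))) ∂bernoulliPi _ p) :
    |∫ ω, ‖P (vec (step sched q ω))‖ ^ 2 ∂bernoulliPi _ p - ‖P (vec q)‖ ^ 2 +
        2 * (ε / n * total (vec q)) - ((2 * n - 1) * (p * (1 - p)) + ε ^ 2) +
          3 / 2 * (U / n)| ≤
      (2 * K + 1 / (2 * n)) * U + 2 / K ^ (r - 1) *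
        ∫ ω, Metric.infDist (vec (step sched q ω)) (additiveCone (Fin n) (Fin n)) ^ r
          ∂bernoulliPi _ p := by
  have h := abs_integral_le_of_abs_le (μ := bernoulliPi _ p)
    (fun ω ↦ abs_norm_starProjection_vec_nextQ_sq_sub_le q (arrival ω) (hsched q).1 hK hr hP)
    .of_finite
  have hsq : (n * (p : ℝ) - 1) ^ 2 = ε ^ 2 := by rw [hp]; ring
  rw [integral_add .of_finite .of_finite, integral_sub .of_finite .of_finite,
    integral_sub .of_finite .of_finite, integral_sub .of_finite .of_finite,
    integral_add .of_finite .of_finite] at h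
  simp only [integral_const_mul, integral_div, integral_const, probReal_univ, one_smul] at h
  rw [← hU, hP, integral_norm_starProjection_vec_arrival_sub_sq hn (hsched q).1,
    integral_inner_starProjection_vec_arrival_sub hn (hsched q).1 hp, hsq,
    mul_neg, sub_neg_eq_add] at h
  rwa [hP]

variable {π : Measure (Fin n → Fin n → ℕ)} [IsProbabilityMeasure π]

theorem integrable_total_vec (hsched : IsMaxWeight n sched) (hn : 0 < n)
    (hp : n * (p : ℝ) = 1 - ε) (hε₀ : 0 < ε)
    (hπ : MeasurePreserving (Function.uncurry (step sched)) (π.prod (bernoulliPi _ p)) π) :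
    Integrable (fun q ↦ total (vec q)) π :=
  ((integrable_norm_vec_pow hsched hn hp hε₀ hπ 1).const_mul n).mono' .of_discrete <|
    .of_forall fun q ↦ by simpa using abs_total_le (vec q)

theorem integrable_norm_starProjection_vec_sq (hsched : IsMaxWeight n sched) (hn : 0 < n)
    (hp : n * (p : ℝ) = 1 - ε) (hε₀ : 0 < ε)
    (hπ : MeasurePreserving (Function.uncurry (step sched)) (π.prod (bernoulliPi _ p)) π) :
    Integrable (fun q ↦ ‖(additive (Fin n) (Fin n)).starProjection (vec q)‖ ^ 2) π :=
  (integrable_norm_vec_pow hsched hn hp hε₀ hπ 2).mono' .of_discrete <|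
    .of_forall fun q ↦ by
      rw [Real.norm_of_nonneg (by positivity)]
      gcongr
      exact Submodule.norm_starProjection_apply_le _ _

theorem abs_integral_total_vec_sub_le_of_pos (hsched : IsMaxWeight n sched) (hn : 0 < n)
    (hp : n * (p : ℝ) = 1 - ε) (hε₀ : 0 < ε) (hε : ε ≤ 1 / (2 * n))
    (hπ : MeasurePreserving (Function.uncurry (step sched)) (π.prod (bernoulliPi _ p)) π)
    {K : ℝ} (hK : 0 < K) {r : ℕ} (hr : 2 ≤ r) :
    |2 * (ε / n * ∫ q, total (vec q) ∂π) - ((2 * n - 1) * (p * (1 - p)) + ε ^ 2) + 3 / 2 * ε| ≤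
      2 * (K * (n * ε)) + ε / 2 + 2 / K ^ (r - 1) *
        ∫ q, Metric.infDist (vec q) (additiveCone (Fin n) (Fin n)) ^ r ∂π := by
  have hT := integrable_total_vec hsched hn hp hε₀ hπ
  have hV := integrable_norm_starProjection_vec_sq hsched hn hp hε₀ hπ
  have hW := (integral_infDist_additiveCone_pow_le hsched hn hp hε₀.le hε hπ r).1
  have hT' := integrable_integral_comp hπ hT
  have hV' := integrable_integral_comp hπ hV
  have hW' := integrable_integral_comp hπ hW
  have hU : Integrable (fun q ↦ ∫ ω, total (vec (step sched q ω)) ∂bernoulliPi _ p -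
      total (vec q) + n * ε) π := (hT'.sub hT).add (integrable_const _)
  have hUmean : ∫ q, (∫ ω, total (vec (step sched q ω)) ∂bernoulliPi _ p -
      total (vec q) + n * ε) ∂π = n * ε := by
    rw [integral_add (by fun_prop) (by fun_prop), integral_sub hT' hT,
      integral_integral_comp_eq hπ hT]
    simp
  have hn₀ : (n : ℝ) ≠ 0 := Nat.cast_ne_zero.mpr hn.ne'
  have h := abs_integral_le_of_abs_le (fun q ↦
    abs_integral_norm_starProjection_vec_step_sq_sub_le hsched hn hp q hK hr rfl
      (integral_total_vec_unused hsched hp q).symm)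
    (by fun_prop : Integrable _ π)
  rw [integral_add (by fun_prop) (by fun_prop),
    integral_sub (by fun_prop) (by fun_prop), integral_add (by fun_prop) (by fun_prop),
    integral_sub hV' hV, integral_add (by fun_prop) (by fun_prop)] at h
  simp only [integral_const_mul, integral_div, integral_const, probReal_univ, one_smul,
    integral_integral_comp_eq hπ hV, hUmean, sub_self, zero_add,
    mul_div_cancel_left₀ ε hn₀] at h
  refine h.trans_eq ?_
  rw [integral_add (hU.const_mul _) (hW'.const_mul _)]
  simp only [integral_const_mul, integral_integral_comp_eq hπ hW, hUmean]
  field_simp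

end SteadyState

section Constants

theorem factorial_le_exp_one_mul_sqrt_mul_div_exp_pow {r : ℕ} (hr : r ≠ 0) :
    (r.factorial : ℝ) ≤ Real.exp 1 * √r * (r / Real.exp 1) ^ r := by
  obtain ⟨m, rfl⟩ := Nat.exists_eq_succ_of_ne_zero hr
  have hanti : Stirling.stirlingSeq (m + 1) ≤ Real.exp 1 / √2 := by
    simpa using Stirling.stirlingSeq'_antitone m.zero_le
  rw [Stirling.stirlingSeq, div_le_iff₀ (by positivity), Real.sqrt_mul zero_le_two] at hanti
  refine hanti.trans_eq ?_
  field_simp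

theorem factorial_mul_pow_le_pow {n r : ℕ} (hn : 0 < n) (hr : 2 ≤ r) {M : ℝ}
    (hM : M = (2 * √r * Real.exp 1) ^ ((1 : ℝ) / r) * 16 * (r / Real.exp 1) * (n : ℝ) ^ 2 *
      (n + 1)) :
    r.factorial * (16 * (n : ℝ) ^ 2) ^ r * (16 / 3) ≤ M ^ r := by
  have hn₁ : (1 : ℝ) ≤ n := mod_cast hn
  have hr₀ : (r : ℝ) ≠ 0 := Nat.cast_ne_zero.mpr (by omega)
  have hroot : ((2 * √r * Real.exp 1) ^ ((1 : ℝ) / r)) ^ r = 2 * √r * Real.exp 1 := by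
    rw [← Real.rpow_mul_natCast (by positivity), one_div_mul_cancel hr₀, Real.rpow_one]
  have hfour : (4 : ℝ) ≤ (n + 1) ^ r :=
    calc (4 : ℝ) = 2 ^ 2 := by norm_num
      _ ≤ 2 ^ r := pow_le_pow_right₀ one_le_two hr
      _ ≤ (n + 1) ^ r := by gcongr; linarith
  calc r.factorial * (16 * (n : ℝ) ^ 2) ^ r * (16 / 3)
      ≤ Real.exp 1 * √r * (r / Real.exp 1) ^ r * (16 * (n : ℝ) ^ 2) ^ r *
          (2 * (n + 1) ^ r) := by
        gcongr
        · exact factorial_le_exp_one_mul_sqrt_mul_div_exp_pow (by omega)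
        · linarith
    _ = ((2 * √r * Real.exp 1) ^ ((1 : ℝ) / r)) ^ r * (16 * (n : ℝ) ^ 2) ^ r *
          (r / Real.exp 1) ^ r * (n + 1) ^ r := by rw [hroot]; ring
    _ = M ^ r := by rw [← mul_pow, ← mul_pow, ← mul_pow, hM]; ring

theorem pow_div_pow_pred_eq_mul {M x : ℝ} (hM : 0 < M) (hx : 0 < x) {r : ℕ} (hr : r ≠ 0) :
    M ^ r / (M * x ^ (-(1 : ℝ) / r)) ^ (r - 1) = M * x ^ (-(1 : ℝ) / r) * x := by
  have hroot : (x ^ (-(1 : ℝ) / r)) ^ r * x = 1 := by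
    rw [← Real.rpow_mul_natCast hx.le, div_mul_cancel₀ _ (Nat.cast_ne_zero.mpr hr),
      Real.rpow_neg_one, inv_mul_cancel₀ hx.ne']
  rw [div_eq_iff (by positivity), mul_right_comm, mul_pow_sub_one hr, mul_pow, mul_assoc, hroot,
    mul_one]

theorem div_mul_rpow_mul_mul {a b : ℝ} (ha : 0 < a) (hb : 0 < b) (M c : ℝ) :
    a / b * (M * (a * b) ^ (-(1 : ℝ) / c) * (a * b)) =
      a ^ ((2 : ℝ) - 1 / c) * b ^ (-(1 : ℝ) / c) * M := by
  rw [Real.mul_rpow ha.le hb.le, show (2 : ℝ) - 1 / c = 2 + (-1) / c by ring,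
    Real.rpow_add ha, Real.rpow_two]
  field_simp

theorem mul_variance_add_sq_eq {a ε p : ℝ} (ha : 0 < a) (hε : 0 < ε) (hp : a * p = 1 - ε) :
    a / (2 * ε) * ((2 * a - 1) * (p * (1 - p)) + ε ^ 2) =
      1 / ε * (a - 3 / 2 + 1 / (2 * a)) - (1 - ε / 2) * (a - 2 + 1 / a) + 1 / 2 := by
  obtain rfl : p = (1 - ε) / a := by field_simp; linarith
  field_simp
  ring

end Constants

section InvariantLaw

variable {n : ℕ} {sched : (Fin n → Fin n → ℕ) → Fin n → Fin n → ℕ} {p : unitInterval} {ε : ℝ}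
  {pd : (Fin n → Fin n → ℕ) → ℝ≥0∞} {π : Measure (Fin n → Fin n → ℕ)}

theorem arrival_injective : Function.Injective (arrival (n := n)) := fun ω ω' h ↦ by
  ext1 k
  have hk : (ω k).toNat = (ω' k).toNat := congr_fun₂ h k.1 k.2
  revert hk
  cases ω k <;> cases ω' k <;> decide

theorem mem_range_arrival_of_jointA_bern_ne_zero {x : ℝ} {a : Fin n → Fin n → ℕ}
    (ha : jointA n (fun _ _ ↦ bern x) a ≠ 0) : a ∈ Set.range arrival := by
  refine ⟨fun k ↦ decide (a k.1 k.2 = 1), ?_⟩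
  ext i j
  have hij : bern x (a i j) ≠ 0 := by
    rw [jointA, Finset.prod_ne_zero_iff] at ha
    exact Finset.prod_ne_zero_iff.mp (ha i (Finset.mem_univ i)) j (Finset.mem_univ j)
  by_cases h₀ : a i j = 0
  · simp [arrival, h₀]
  by_cases h₁ : a i j = 1
  · simp [arrival, h₁]
  simp [bern, h₀, h₁] at hij

theorem bernoulliPi_singleton (ω : Fin n × Fin n → Bool) :
    bernoulliPi _ p {ω} = jointA n (fun _ _ ↦ bern p) (arrival ω) := by
  have hcoe (x : unitInterval) : unitInterval.toNNReal x = (x : ℝ).toNNReal :=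
    (Real.toNNReal_of_nonneg x.2.1).symm
  have hbern (b : Bool) : bernoulliMeasure true false p {b} = bern p b.toNat := by
    cases b <;> simp [bern, ENNReal.ofReal, hcoe]
  rw [bernoulliPi, Measure.pi_singleton, Fintype.prod_prod_type]
  simp only [hbern]
  rfl

theorem kernelMW_bern (q q' : Fin n → Fin n → ℕ) :
    kernelMW n (fun _ _ ↦ bern p) sched q q' = bernoulliPi _ p (step sched q ⁻¹' {q'}) := by
  calc kernelMW n (fun _ _ ↦ bern p) sched q q'
      = ∑' ω : Fin n × Fin n → Bool, jointA n (fun _ _ ↦ bern p) (arrival ω) *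
          if step sched q ω = q' then 1 else 0 :=
        (arrival_injective.tsum_eq fun a ha ↦
          mem_range_arrival_of_jointA_bern_ne_zero (left_ne_zero_of_mul ha)).symm
    _ = ∫⁻ ω, (step sched q ⁻¹' {q'}).indicator 1 ω ∂bernoulliPi _ p := by
        rw [lintegral_countable']
        refine tsum_congr fun ω ↦ ?_
        rw [bernoulliPi_singleton, mul_comm]
        by_cases h : step sched q ω = q' <;> simp [h]
    _ = bernoulliPi _ p (step sched q ⁻¹' {q'}) := lintegral_indicator_one .of_discrete

theorem exists_measurePreserving_step_of_isInvariant
    (hpd : IsInvariant n (kernelMW n (fun _ _ ↦ bern p) sched) pd) :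
    ∃ π : Measure (Fin n → Fin n → ℕ), IsProbabilityMeasure π ∧ (∀ q, π {q} = pd q) ∧
      MeasurePreserving (Function.uncurry (step sched)) (π.prod (bernoulliPi _ p)) π := by
  let law : PMF (Fin n → Fin n → ℕ) := ⟨pd, ENNReal.summable.hasSum_iff.mpr hpd.1⟩
  have hlaw (q : Fin n → Fin n → ℕ) : law.toMeasure {q} = pd q :=
    law.toMeasure_apply_singleton q .of_discrete
  refine ⟨law.toMeasure, inferInstance, hlaw, .of_discrete, Measure.ext_of_singleton fun q' ↦ ?_⟩
  calc ((law.toMeasure.prod (bernoulliPi _ p)).map (Function.uncurry (step sched))) {q'}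
      = ∫⁻ q, bernoulliPi _ p (step sched q ⁻¹' {q'}) ∂law.toMeasure := by
        rw [Measure.map_apply .of_discrete .of_discrete, Measure.prod_apply .of_discrete]
        rfl
    _ = ∑' q, pd q * kernelMW n (fun _ _ ↦ bern p) sched q q' := by
        rw [lintegral_countable']
        simp only [hlaw, kernelMW_bern, mul_comm]
    _ = law.toMeasure {q'} := by rw [hpd.2, hlaw]

theorem Etot_eq_ofReal_integral (hπpd : ∀ q, π {q} = pd q)
    (hint : Integrable (fun q ↦ total (vec q)) π) :
    Etot n pd = ENNReal.ofReal (∫ q, total (vec q) ∂π) := by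
  have hnonneg (q : Fin n → Fin n → ℕ) : 0 ≤ total (vec q) :=
    Finset.sum_nonneg fun _ _ ↦ Nat.cast_nonneg _
  rw [ofReal_integral_eq_lintegral_ofReal hint (.of_forall hnonneg), lintegral_countable', Etot]
  refine tsum_congr fun q ↦ ?_
  have htotal : total (vec q) = ↑(∑ i, ∑ j, q i j) := by
    rw [total, Fintype.sum_prod_type]
    push_cast
    rfl
  rw [hπpd, mul_comm, htotal, ENNReal.ofReal_natCast]
  push_cast
  rfl

theorem abs_integral_total_vec_sub_le [IsProbabilityMeasure π] (hsched : IsMaxWeight n sched)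
    (hn : 0 < n) (hp : n * (p : ℝ) = 1 - ε) (hε₀ : 0 < ε) (hε : ε ≤ 1 / (2 * n))
    (hπ : MeasurePreserving (Function.uncurry (step sched)) (π.prod (bernoulliPi _ p)) π)
    {r : ℕ} (hr : 2 ≤ r) {M : ℝ}
    (hM : M = (2 * √r * Real.exp 1) ^ ((1 : ℝ) / r) * 16 * (r / Real.exp 1) * (n : ℝ) ^ 2 *
      (n + 1)) :
    |∫ q, total (vec q) ∂π - (1 / ε * (n - 3 / 2 + 1 / (2 * n)) -
        (1 - ε / 2) * (n - 2 + 1 / n) + 1 / 2 - 3 / 4 * n)| ≤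
      n / 4 + 2 * ((n : ℝ) ^ ((2 : ℝ) - 1 / r) * ε ^ (-(1 : ℝ) / r) * M) := by
  have hn₀ : (0 : ℝ) < n := mod_cast hn
  have hM₀ : 0 < M := by
    have : (0 : ℝ) < r := Nat.cast_pos.mpr (by omega)
    rw [hM]
    positivity
  let K : ℝ := M * (n * ε) ^ (-(1 : ℝ) / r)
  have hK : 0 < K := by positivity
  have hbalance := abs_integral_total_vec_sub_le_of_pos hsched hn hp hε₀ hε hπ hK hr
  have hmoment : 2 / K ^ (r - 1) *
      ∫ q, Metric.infDist (vec q) (additiveCone (Fin n) (Fin n)) ^ r ∂π ≤ 2 * (K * (n * ε)) :=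
    calc _ ≤ 2 / K ^ (r - 1) * M ^ r := by
          gcongr
          exact (integral_infDist_additiveCone_pow_le hsched hn hp hε₀.le hε hπ r).2.trans
            (factorial_mul_pow_le_pow hn hr hM)
      _ = 2 * (K * (n * ε)) := by
          rw [← pow_div_pow_pred_eq_mul hM₀ (by positivity) (by omega), div_mul_eq_mul_div,
            mul_div_assoc]
  have herror : n / ε * (K * (n * ε)) = (n : ℝ) ^ ((2 : ℝ) - 1 / r) * ε ^ (-(1 : ℝ) / r) * M :=
    div_mul_rpow_mul_mul hn₀ hε₀ M r
  set T := ∫ q, total (vec q) ∂π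
  calc _ = |n / (2 * ε) * (2 * (ε / n * T) - ((2 * n - 1) * (p * (1 - p)) + ε ^ 2) +
          3 / 2 * ε)| := by
        rw [← mul_variance_add_sq_eq hn₀ hε₀ hp]
        congr 1
        field_simp
        ring
    _ ≤ n / (2 * ε) * (2 * (K * (n * ε)) + ε / 2 + 2 * (K * (n * ε))) := by
        rw [abs_mul, abs_of_pos (by positivity : 0 < n / (2 * ε))]
        gcongr
        exact hbalance.trans (by gcongr)
    _ = _ := by
        rw [← herror]
        field_simp
        ring

end InvariantLaw

end MaxWeight

/-- Theorem 6.1, MaxWeight part: two-sided steady-state bound on the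
expected total queue length for uniform Bernoulli traffic under MaxWeight. -/
theorem maxweight_bernoulli_two_sided_bound
    (n : ℕ) (hn : 1 ≤ n) (ε : ℝ) (hε0 : 0 < ε) (hε : ε ≤ 1 / (2 * n))
    (sched : (Fin n → Fin n → ℕ) → (Fin n → Fin n → ℕ))
    (hsched : IsMaxWeight n sched)
    (pd : (Fin n → Fin n → ℕ) → ℝ≥0∞)
    (hpd : IsInvariant n (kernelMW n (fun _ _ => bern ((1 - ε) / n)) sched) pd)
    (r : ℕ) (hr : 2 ≤ r)
    (Mr B1 B2 : ℝ)
    (hMr : Mr = (2 * Real.sqrt r * Real.exp 1) ^ ((1 : ℝ) / r) * 16 * (r / Real.exp 1) *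
        (n : ℝ) ^ 2 * (n + 1))
    (hB1 : B1 = (1 - ε / 2) * (n - 2 + 1 / n) + n - 1 / 2 +
        3 * (n : ℝ) ^ ((2 : ℝ) - 1 / r) * ε ^ (-(1 : ℝ) / r) * Mr)
    (hB2 : B2 = -((1 - ε / 2) * (n - 2 + 1 / n)) + (n + 1) / 2 +
        2 * (n : ℝ) ^ ((2 : ℝ) - 1 / r) * ε ^ (-(1 : ℝ) / r) * Mr) :
    ENNReal.ofReal ((1 / ε) * (n - 3 / 2 + 1 / (2 * n)) - B1) ≤ Etot n pd ∧
    Etot n pd ≤ ENNReal.ofReal ((1 / ε) * (n - 3 / 2 + 1 / (2 * n)) + B2) := by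
  have hn₁ : (1 : ℝ) ≤ n := mod_cast hn
  have hε₁ : ε ≤ 1 := hε.trans (div_le_one_of_le₀ (by linarith) (by positivity))
  let p : unitInterval := ⟨(1 - ε) / n, div_nonneg (by linarith) (by positivity),
    div_le_one_of_le₀ (by linarith) (by positivity)⟩
  have hp : n * (p : ℝ) = 1 - ε := mul_div_cancel₀ _ (by positivity)
  obtain ⟨π, _, hπpd, hπ⟩ := MaxWeight.exists_measurePreserving_step_of_isInvariant (p := p) hpd
  have hbound := abs_le.mp <|
    MaxWeight.abs_integral_total_vec_sub_le hsched hn hp hε0 hε hπ hr hMr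
  have herror : 0 ≤ (n : ℝ) ^ ((2 : ℝ) - 1 / r) * ε ^ (-(1 : ℝ) / r) * Mr := by
    rw [hMr]; positivity
  rw [MaxWeight.Etot_eq_ofReal_integral hπpd
    (MaxWeight.integrable_total_vec hsched hn hp hε0 hπ), hB1, hB2]
  constructor <;> refine ENNReal.ofReal_le_ofReal ?_ <;> linarith
end
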